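/- arXiv:1503.06434 — 2 statements merged into one kernel-verified Lean document; each statement's English description precedes it below -/
import Mathlib

section
/- For all integers a ≥ 2, b ≥ 1, k ≥ 1, l_1, …, l_k ≥ 1 and any assignment α as in the construction, the polytope P(a, b, k, l, α) is a smooth Fano polytope of dimension n = a + 2b − 1 + Σ_{j=1}^k l_j with n + k + 3 vertices. -/
/-! ## Basic definitions: lattice polytopes, smooth Fano polytopes,
unimodular equivalence, F- and I-equivalence, primitive collections. -/

/-- A point of `ℝ^n` all of whose coordinates are integers. -/
def IsLatticePoint {n : ℕ} (x : Fin n → ℝ) : Prop := ∀ i, ∃ m : ℤ, x i = (m : ℝ)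

/-- The vertex set of a polytope: its extreme points. -/
def vertexSet {n : ℕ} (P : Set (Fin n → ℝ)) : Set (Fin n → ℝ) :=
  Set.extremePoints ℝ P

/-- A lattice `n`-polytope: the convex hull of finitely many lattice points,
of full dimension `n`. -/
def IsLatticePolytope {n : ℕ} (P : Set (Fin n → ℝ)) : Prop :=
  (∃ S : Finset (Fin n → ℝ), (∀ x ∈ S, IsLatticePoint x) ∧
    P = convexHull ℝ (S : Set (Fin n → ℝ))) ∧
  affineSpan ℝ P = ⊤

/-- A face of `P`: an exposed subset of `P`. -/
def IsFaceOf {n : ℕ} (F P : Set (Fin n → ℝ)) : Prop := IsExposed ℝ P F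

/-- A facet of `P`: a face of affine dimension `n - 1`. -/
def IsFacetOf {n : ℕ} (F P : Set (Fin n → ℝ)) : Prop :=
  IsFaceOf F P ∧ Module.finrank ℝ (vectorSpan ℝ F) + 1 = n

/-- A set `S` of points of `ℝ^n` forms a `ℤ`-basis of `ℤ^n`:
it consists of `n` lattice points whose matrix has determinant `±1`. -/
def IsUnimodularBasis {n : ℕ} (S : Set (Fin n → ℝ)) : Prop :=
  ∃ b : Fin n → (Fin n → ℝ), Function.Injective b ∧ Set.range b = S ∧
    (∀ i, IsLatticePoint (b i)) ∧ |(Matrix.of b).det| = 1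

/-- A smooth Fano `n`-polytope: a lattice `n`-polytope with the origin in its
interior such that the vertex set of every facet is a `ℤ`-basis of `ℤ^n`. -/
def IsSmoothFano {n : ℕ} (P : Set (Fin n → ℝ)) : Prop :=
  IsLatticePolytope P ∧ (0 : Fin n → ℝ) ∈ interior P ∧
    ∀ F : Set (Fin n → ℝ), IsFacetOf F P → IsUnimodularBasis (vertexSet P ∩ F)

/-- Two subsets of `ℝ^n` are unimodularly equivalent if an affine map of `ℝ^n`
mapping `ℤ^n` onto `ℤ^n` maps one onto the other. -/
def UnimodularEquiv {n : ℕ} (Q Q' : Set (Fin n → ℝ)) : Prop :=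
  ∃ φ : (Fin n → ℝ) →ᵃ[ℝ] (Fin n → ℝ),
    φ '' {x | IsLatticePoint x} = {x | IsLatticePoint x} ∧ φ '' Q = Q'

/-- One step of an I-sequence: the vertex set of one polytope is obtained from
the vertex set of the other by adding one new lattice point. -/
def IStep {n : ℕ} (P Q : Set (Fin n → ℝ)) : Prop :=
  (∃ w : Fin n → ℝ, IsLatticePoint w ∧ w ∉ vertexSet P ∧
    vertexSet Q = vertexSet P ∪ {w}) ∨
  (∃ w : Fin n → ℝ, IsLatticePoint w ∧ w ∉ vertexSet Q ∧
    vertexSet P = vertexSet Q ∪ {w})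

/-- I-equivalence of smooth Fano `n`-polytopes. -/
def IEquiv {n : ℕ} (P Q : Set (Fin n → ℝ)) : Prop :=
  ∃ (k : ℕ) (c : Fin (k + 1) → Set (Fin n → ℝ)),
    (∀ i, IsSmoothFano (c i)) ∧
    UnimodularEquiv P (c 0) ∧ UnimodularEquiv Q (c (Fin.last k)) ∧
    ∀ i : Fin k, IStep (c i.castSucc) (c i.succ)

/-- `Q` is the stellar subdivision of `P` at the new vertex `w`: `w` is the sum
of the vertices of a proper face `F` of `P`, and the facets of `Q` containing
`w` are exactly the sets `conv({w} ∪ (V(F') \ {v}))` for `F'` a facet of `P`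
containing `F` and `v` a vertex of `F`. -/
def IsStellarSubdivisionAt {n : ℕ} (P Q : Set (Fin n → ℝ)) (w : Fin n → ℝ) : Prop :=
  ∃ F : Set (Fin n → ℝ), IsFaceOf F P ∧ F.Nonempty ∧ F ≠ P ∧
    w = ∑ᶠ v ∈ vertexSet P ∩ F, v ∧
    {G : Set (Fin n → ℝ) | IsFacetOf G Q ∧ w ∈ G} =
      {G : Set (Fin n → ℝ) | ∃ F' v, IsFacetOf F' P ∧ F ⊆ F' ∧
        v ∈ vertexSet P ∩ F ∧
        G = convexHull ℝ (insert w ((vertexSet P ∩ F') \ {v}))}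

/-- One step of an F-sequence: an I-step which moreover is a stellar
subdivision (or its inverse). -/
def FStep {n : ℕ} (P Q : Set (Fin n → ℝ)) : Prop :=
  (∃ w : Fin n → ℝ, IsLatticePoint w ∧ w ∉ vertexSet P ∧
    vertexSet Q = vertexSet P ∪ {w} ∧ IsStellarSubdivisionAt P Q w) ∨
  (∃ w : Fin n → ℝ, IsLatticePoint w ∧ w ∉ vertexSet Q ∧
    vertexSet P = vertexSet Q ∪ {w} ∧ IsStellarSubdivisionAt Q P w)

/-- F-equivalence of smooth Fano `n`-polytopes. -/
def FEquiv {n : ℕ} (P Q : Set (Fin n → ℝ)) : Prop :=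
  ∃ (k : ℕ) (c : Fin (k + 1) → Set (Fin n → ℝ)),
    (∀ i, IsSmoothFano (c i)) ∧
    UnimodularEquiv P (c 0) ∧ UnimodularEquiv Q (c (Fin.last k)) ∧
    ∀ i : Fin k, FStep (c i.castSucc) (c i.succ)

/-- A smooth Fano polytope is F-isolated if every smooth Fano polytope
F-equivalent to it is unimodularly equivalent to it. -/
def FIsolated {n : ℕ} (P : Set (Fin n → ℝ)) : Prop :=
  ∀ Q : Set (Fin n → ℝ), IsSmoothFano Q → FEquiv Q P → UnimodularEquiv Q P

/-- A smooth Fano polytope is I-isolated if every smooth Fano polytope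
I-equivalent to it is unimodularly equivalent to it. -/
def IIsolated {n : ℕ} (P : Set (Fin n → ℝ)) : Prop :=
  ∀ Q : Set (Fin n → ℝ), IsSmoothFano Q → IEquiv Q P → UnimodularEquiv Q P

/-- A primitive collection of a smooth Fano polytope `P`: a nonempty set `A` of
vertices such that `conv(A)` is not a face of `P` but `conv(A \ {x})` is a face
of `P` for every `x ∈ A`. -/
def IsPrimitiveCollection {n : ℕ} (P A : Set (Fin n → ℝ)) : Prop :=
  A.Nonempty ∧ A ⊆ vertexSet P ∧ ¬ IsFaceOf (convexHull ℝ A) P ∧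
    ∀ x ∈ A, IsFaceOf (convexHull ℝ (A \ {x})) P

/-- The standard basis vector `e_i` of `ℝ^n`. -/
def stdBasis {n : ℕ} (i : Fin n) : Fin n → ℝ := fun q => if q = i then 1 else 0

/-- The polytope `T^n = conv{e_1, …, e_n, -(e_1 + ⋯ + e_n)}`,
corresponding to projective `n`-space. -/
def Tpoly (n : ℕ) : Set (Fin n → ℝ) :=
  convexHull ℝ (Set.range (stdBasis (n := n)) ∪ {fun _ => (-1 : ℝ)})

namespace PG

/-! The concrete polytope `P(a, b, k, l, α)` of dimension
`n = a + 2b - 1 + l_1 + ⋯ + l_k`, from the proof of Theorem `general`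
(coordinates are `0`-based: the paper's `e_q` is the standard basis vector at
index `q - 1`). An assignment `α j i : Fin b ⊕ Fin b` names the vertex
`α_{i,j}`, namely `y_{q+1}` for `Sum.inl q` and `u_{q+1}` for `Sum.inr q`. -/

/-- The dimension `n = a + 2b - 1 + ∑ l_j`. -/
def dim (a b k : ℕ) (l : Fin k → ℕ) : ℕ := a + 2 * b - 1 + ∑ j, l j

/-- `v_i = e_i` for `1 ≤ i ≤ a-1`, and
`v_a = -e_1 - ⋯ - e_{a+2b-2} + (a+b-1) e_{a+2b-1}`. -/
def v (a b k : ℕ) (l : Fin k → ℕ) (i : Fin a) : Fin (dim a b k l) → ℝ :=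
  if i.val < a - 1 then fun q => if q.val = i.val then 1 else 0
  else fun q => if q.val = a + 2 * b - 2 then ((a + b - 1 : ℕ) : ℝ)
    else if q.val < a + 2 * b - 2 then -1 else 0

/-- `y_j = e_{a-1+j}` for `1 ≤ j ≤ b-1`, and `y_b = e_{a+b-1} + ⋯ + e_{a+2b-2}`. -/
def y (a b k : ℕ) (l : Fin k → ℕ) (j : Fin b) : Fin (dim a b k l) → ℝ :=
  if j.val < b - 1 then fun q => if q.val = a - 1 + j.val then 1 else 0
  else fun q => if a + b - 2 ≤ q.val ∧ q.val ≤ a + 2 * b - 3 then 1 else 0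

/-- `z = -e_{a+2b-1}`. -/
def z (a b k : ℕ) (l : Fin k → ℕ) : Fin (dim a b k l) → ℝ :=
  fun q => if q.val = a + 2 * b - 2 then -1 else 0

/-- `t = e_{a+2b-1}`. -/
def t (a b k : ℕ) (l : Fin k → ℕ) : Fin (dim a b k l) → ℝ :=
  fun q => if q.val = a + 2 * b - 2 then 1 else 0

/-- `u_j = e_{a+b-1+j}` for `1 ≤ j ≤ b-1`, and
`u_b = e_a + ⋯ + e_{a+b-1} - e_{a+2b-1}`. -/
def u (a b k : ℕ) (l : Fin k → ℕ) (j : Fin b) : Fin (dim a b k l) → ℝ :=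
  if j.val < b - 1 then fun q => if q.val = a + b - 1 + j.val then 1 else 0
  else fun q => if a - 1 ≤ q.val ∧ q.val ≤ a + b - 2 then 1
    else if q.val = a + 2 * b - 2 then -1 else 0

/-- `l_1 + ⋯ + l_{j-1}`. -/
def Lprev (k : ℕ) (l : Fin k → ℕ) (j : Fin k) : ℕ :=
  ∑ j' ∈ Finset.univ.filter (fun j' => j' < j), l j'

/-- The vertex `α_{i,j} ∈ {y_1, …, y_b, u_1, …, u_b}` named by `α j i`. -/
def A (a b k : ℕ) (l : Fin k → ℕ) (α : (j : Fin k) → Fin (l j) → (Fin b ⊕ Fin b))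
    (j : Fin k) (i : Fin (l j)) : Fin (dim a b k l) → ℝ :=
  Sum.elim (y a b k l) (u a b k l) (α j i)

/-- `w_{i,j} = e_{a+2b-1+l_1+⋯+l_{j-1}+i}` for `1 ≤ i ≤ l_j`, and
`w_{l_j+1,j} = -(e_{a+2b-1+l_1+⋯+l_{j-1}+1} + ⋯ + e_{a+2b-1+l_1+⋯+l_j})
+ α_{1,j} + ⋯ + α_{l_j,j}`. -/
def w (a b k : ℕ) (l : Fin k → ℕ) (α : (j : Fin k) → Fin (l j) → (Fin b ⊕ Fin b))
    (j : Fin k) (i : Fin (l j + 1)) : Fin (dim a b k l) → ℝ :=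
  if i.val < l j then
    fun q => if q.val = a + 2 * b - 1 + Lprev k l j + i.val then 1 else 0
  else
    fun q => (∑ i' : Fin (l j), A a b k l α j i' q) -
      (if a + 2 * b - 1 + Lprev k l j ≤ q.val ∧
          q.val < a + 2 * b - 1 + Lprev k l j + l j then 1 else 0)

/-- The polytope `P(a, b, k, l, α)`. -/
def P (a b k : ℕ) (l : Fin k → ℕ)
    (α : (j : Fin k) → Fin (l j) → (Fin b ⊕ Fin b)) :
    Set (Fin (dim a b k l) → ℝ) :=
  convexHull ℝ
    (Set.range (v a b k l) ∪ Set.range (y a b k l) ∪ {z a b k l, t a b k l} ∪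
      Set.range (u a b k l) ∪ ⋃ j, Set.range (w a b k l α j))

end PG

/-!
The vertices fall into the base blocks `v`, `y`, `z`, `t`, `u`, cyclically ordered, and, for each
`j`, the block of the `w_{i,j}`. Let `s_X` be the sum of the vertices in the base block `X`. Then
`s_v + s_y = (a + b - 1) t`, `s_y + z = s_u`, `z + t = 0`, `t + s_u = s_y`,
`s_u + s_v = (a + b - 2) t`, and the `w_{i,j}` add up to `α_{1,j} + ⋯ + α_{l_j,j}`. Each of these
relations has fewer terms on the right than on the left, so a functional that is at most `1` on
all vertices cannot be `1` on the whole left-hand side. Hence the vertices of a facet miss some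
`w_{i,j}` for each `j` and some element of any two cyclically consecutive base blocks, thus of at
least three of the five base blocks. Conversely, omit one vertex from each `w`-block and from each
of three base blocks such that the other two are not consecutive: `n` vertices are left, and the
relations express the omitted vertices as integral combinations of them. Since the vertices
generate `ℤ^n`, the `n` vertices form a `ℤ`-basis, and the functionals are exactly the weights on
the vertices that satisfy the relations. Such weights are easy to write down, which exhibits every
vertex as the unique maximizer of some functional.
-/

theorem eq_coe_of_span_image_eq_top {K V ι : Type*} [DivisionRing K] [AddCommGroup V] [Module K V]
    {G : ι → V} {s : Set ι} {D : Finset ι} (hD : D.card = Module.finrank K V) (hsub : s ⊆ D)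
    (hspan : Submodule.span K (G '' s) = ⊤) : s = D := by
  have hs : s.Finite := D.finite_toSet.subset hsub
  have := (hs.image G).fintype
  have hcard : D.card ≤ s.ncard :=
    calc D.card = Module.finrank K (Submodule.span K (G '' s)) := by rw [hspan, finrank_top, hD]
      _ ≤ (G '' s).ncard := by
          rw [Set.ncard_eq_toFinset_card']
          exact finrank_span_le_card _
      _ ≤ s.ncard := Set.ncard_image_le hs
  exact Set.eq_of_subset_of_ncard_le hsub (by simpa using hcard) D.finite_toSet

section Polytope

variable {E ι : Type*} [NormedAddCommGroup E] [NormedSpace ℝ E]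

theorem affineSpan_range_eq_top_of_forall_nonpos [Nonempty ι] (G : ι → E)
    (hG : ∀ f : E →ₗ[ℝ] ℝ, (∀ i, f (G i) ≤ 0) → f = 0) : affineSpan ℝ (Set.range G) = ⊤ := by
  rw [AffineSubspace.affineSpan_eq_top_iff_vectorSpan_eq_top_of_nonempty ℝ E E
    (Set.range_nonempty G)]
  by_contra hspan
  obtain ⟨f, hf, hle⟩ := Submodule.exists_le_ker_of_lt_top _ (lt_top_iff_ne_top.2 hspan)
  obtain ⟨i₀⟩ := ‹Nonempty ι›
  have hconst : ∀ i, f (G i) = f (G i₀) := fun i =>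
    sub_eq_zero.1 <| (map_sub f _ _).symm.trans <|
      hle (vsub_mem_vectorSpan ℝ (Set.mem_range_self i) (Set.mem_range_self i₀))
  rcases le_total (f (G i₀)) 0 with h | h
  · exact hf (hG f fun i => (hconst i).trans_le h)
  · exact hf (neg_eq_zero.1 (hG (-f) fun i => by simpa [hconst i] using h))

theorem zero_mem_interior_convexHull_range [FiniteDimensional ℝ E] [Nonempty ι] (G : ι → E)
    (hG : ∀ f : E →ₗ[ℝ] ℝ, (∀ i, f (G i) ≤ 0) → f = 0) :
    (0 : E) ∈ interior (convexHull ℝ (Set.range G)) := by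
  have hne := interior_convexHull_nonempty_iff_affineSpan_eq_top.2
    (affineSpan_range_eq_top_of_forall_nonpos G hG)
  by_contra h0
  obtain ⟨f, hf, hle⟩ := geometric_hahn_banach_of_nonempty_interior_point
    (convex_convexHull ℝ (Set.range G)) h0 hne
  refine hf (ContinuousLinearMap.coe_injective (hG f fun i => ?_))
  simpa using hle _ (subset_convexHull ℝ _ (Set.mem_range_self i))

theorem extremePoints_convexHull_range_of_strictMax [FiniteDimensional ℝ E] [Finite ι] (G : ι → E)
    (hG : ∀ i, ∃ f : E →ₗ[ℝ] ℝ, ∀ j, j ≠ i → f (G j) < f (G i)) :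
    Set.extremePoints ℝ (convexHull ℝ (Set.range G)) = Set.range G := by
  refine extremePoints_convexHull_subset.antisymm ?_
  rintro _ ⟨i, rfl⟩
  obtain ⟨f, hf⟩ := hG i
  have hcpt : IsCompact (convexHull ℝ (Set.range G)) := (Set.finite_range G).isCompact_convexHull ℝ
  have hGi := subset_convexHull ℝ _ (Set.mem_range_self (f := G) i)
  let l : StrongDual ℝ E := f.toContinuousLinearMap
  have hexp : IsExposed ℝ _ (l.toExposed (convexHull ℝ (Set.range G))) :=
    ContinuousLinearMap.toExposed.isExposed
  obtain ⟨p, hpP, hpmax⟩ := hcpt.exists_isMaxOn ⟨_, hGi⟩ l.continuous.continuousOn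
  obtain ⟨x, hx⟩ := (hexp.isCompact hcpt).extremePoints_nonempty ⟨p, hpP, hpmax⟩
  have hxext := hexp.isExtreme.extremePoints_subset_extremePoints hx
  obtain ⟨j, rfl⟩ := extremePoints_convexHull_subset hxext
  suffices j = i from this ▸ hxext
  by_contra hne
  exact (hf j hne).not_ge (hx.1.2 _ hGi)

theorem injective_of_strictMax (G : ι → E)
    (hG : ∀ i, ∃ f : E →ₗ[ℝ] ℝ, ∀ j, j ≠ i → f (G j) < f (G i)) : Function.Injective G := by
  intro i j hij
  obtain ⟨f, hf⟩ := hG i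
  by_contra hne
  exact (hf j (Ne.symm hne)).ne (congrArg f hij.symm)

end Polytope

namespace IsFacetOf

variable {n : ℕ} {F P : Set (Fin n → ℝ)}

/- For `n = 1` the empty set is exposed and satisfies the dimension condition. -/
theorem nonempty (hn : 1 < n) (hF : IsFacetOf F P) : F.Nonempty := by
  rw [Set.nonempty_iff_ne_empty]
  rintro rfl
  have := hF.2
  rw [vectorSpan_empty, finrank_bot] at this
  omega

theorem ne_of_mem_interior {x : Fin n → ℝ} (hF : IsFacetOf F P) (hx : x ∈ interior P) :
    F ≠ P := by
  rintro rfl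
  have htop : affineSpan ℝ F = ⊤ := top_le_iff.1 <|
    (isOpen_interior.affineSpan_eq_top ⟨x, hx⟩).ge.trans (affineSpan_mono ℝ interior_subset)
  have := hF.2
  rw [← direction_affineSpan, htop, AffineSubspace.direction_top, finrank_top,
    Module.finrank_fin_fun] at this
  omega

theorem exists_linearMap_eq_one (hn : 1 < n) (hF : IsFacetOf F P) (h0 : 0 ∈ interior P) :
    ∃ f : (Fin n → ℝ) →ₗ[ℝ] ℝ, (∀ x ∈ P, f x ≤ 1) ∧ F = {x ∈ P | f x = 1} := by
  obtain ⟨x₀, hx₀⟩ := hF.nonempty hn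
  obtain ⟨f, hf⟩ := hF.1 ⟨x₀, hx₀⟩
  have hx₀P : x₀ ∈ P ∧ ∀ y ∈ P, f y ≤ f x₀ := by rwa [hf] at hx₀
  have hmem : F = {x ∈ P | f x = f x₀} := by
    rw [hf]
    ext x
    exact and_congr_right fun hx => ⟨fun h => (hx₀P.2 x hx).antisymm (h x₀ hx₀P.1),
      fun h => h ▸ hx₀P.2⟩
  have hpos : 0 < f x₀ := by
    refine lt_of_le_of_ne (by simpa using hx₀P.2 0 (interior_subset h0)) fun hzero => ?_
    have hmax : IsLocalMax f 0 := by
      filter_upwards [mem_interior_iff_mem_nhds.1 h0] with p hp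
      simpa [← hzero] using hx₀P.2 p hp
    have hf0 : f = 0 := hmax.hasFDerivAt_eq_zero f.hasFDerivAt
    exact hF.ne_of_mem_interior h0 (by simp [hmem, hf0])
  refine ⟨(f x₀)⁻¹ • f.toLinearMap, fun x hx => ?_, ?_⟩
  · simpa [inv_mul_eq_div] using (div_le_one hpos).2 (hx₀P.2 x hx)
  · simp [hmem, inv_mul_eq_div, div_eq_one_iff_eq hpos.ne']

theorem span_eq_top (hn : 1 < n) (hF : IsFacetOf F P) (h0 : 0 ∈ interior P) :
    Submodule.span ℝ F = ⊤ := by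
  obtain ⟨f, -, hf⟩ := hF.exists_linearMap_eq_one hn h0
  have hone : ∀ x ∈ F, f x = 1 := fun x hx => by rw [hf] at hx; exact hx.2
  obtain ⟨x₀, hx₀⟩ := hF.nonempty hn
  have hker : vectorSpan ℝ F ≤ LinearMap.ker f := by
    rw [vectorSpan_def, Submodule.span_le]
    rintro _ ⟨p, hp, q, hq, rfl⟩
    simp [hone p hp, hone q hq]
  have hlt : vectorSpan ℝ F < Submodule.span ℝ F := by
    refine lt_of_le_of_ne ?_ fun heq => ?_
    · rw [vectorSpan_def, Submodule.span_le]
      rintro _ ⟨p, hp, q, hq, rfl⟩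
      exact sub_mem (Submodule.subset_span hp) (Submodule.subset_span hq)
    · have : f x₀ = 0 := hker (heq ▸ Submodule.subset_span hx₀)
      exact one_ne_zero ((hone x₀ hx₀).symm.trans this)
  have hfin := Submodule.finrank_lt_finrank_of_lt hlt
  have := hF.2
  refine Submodule.eq_top_of_finrank_eq (le_antisymm (Submodule.finrank_le _) ?_)
  rw [Module.finrank_fin_fun]
  omega

theorem span_vertexSet_inter_eq_top (hn : 1 < n) (hF : IsFacetOf F P) (h0 : 0 ∈ interior P)
    (hcpt : IsCompact P) (hconv : Convex ℝ P) :
    Submodule.span ℝ (vertexSet P ∩ F) = ⊤ := by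
  have hexp : IsExposed ℝ P F := hF.1
  have hext : Set.extremePoints ℝ F ⊆ vertexSet P ∩ F := fun x hx =>
    ⟨hexp.isExtreme.extremePoints_subset_extremePoints hx, hx.1⟩
  rw [← top_le_iff, ← hF.span_eq_top hn h0, Submodule.span_le]
  calc F = closure (convexHull ℝ (Set.extremePoints ℝ F)) :=
        (closure_convexHull_extremePoints (hexp.isCompact hcpt) (hexp.convex hconv)).symm
    _ ⊆ Submodule.span ℝ (vertexSet P ∩ F) :=
        closure_minimal (convexHull_min (hext.trans Submodule.subset_span) (Submodule.convex _))
          (Submodule.closed_of_finiteDimensional _)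

end IsFacetOf

theorem isLatticePoint_iff {n : ℕ} {x : Fin n → ℝ} :
    IsLatticePoint x ↔ ∀ i, x i ∈ (Int.castRingHom ℝ).range := by
  simp [IsLatticePoint, eq_comm]

theorem abs_det_eq_one_of_single_mem_span {n : ℕ} (B : Fin n → Fin n → ℝ)
    (hB : ∀ i, IsLatticePoint (B i))
    (hspan : ∀ q, (Pi.single q 1 : Fin n → ℝ) ∈ Submodule.span ℤ (Set.range B)) :
    |(Matrix.of B).det| = 1 := by
  simp only [Submodule.mem_span_range_iff_exists_fun] at hspan
  choose C hC using hspan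
  choose B₀ hB₀ using hB
  have hdetB : (Matrix.of B).det = (Matrix.of B₀).det := by
    rw [← eq_intCast (Int.castRingHom ℝ), RingHom.map_det]
    congr 1
    ext i j
    simp [hB₀]
  have hdetC : (Matrix.of C).det * (Matrix.of B).det = 1 := by
    rw [← eq_intCast (Int.castRingHom ℝ) (Matrix.of C).det, RingHom.map_det, ← Matrix.det_mul,
      ← Matrix.det_one (n := Fin n)]
    congr 1
    ext q j
    simpa [Matrix.mul_apply, Matrix.one_apply, Pi.single_apply, eq_comm] using congrFun (hC q) j
  rw [hdetB] at hdetC ⊢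
  exact_mod_cast Int.isUnit_iff_abs_eq.1 (IsUnit.of_mul_eq_one_right _ (by exact_mod_cast hdetC))

theorem isUnimodularBasis_image {n : ℕ} {ι : Type*} {G : ι → Fin n → ℝ}
    (hinj : Function.Injective G) (hlat : ∀ i, IsLatticePoint (G i)) {D : Finset ι}
    (hD : D.card = n)
    (hspan : ∀ q, (Pi.single q 1 : Fin n → ℝ) ∈ Submodule.span ℤ (G '' D)) :
    IsUnimodularBasis (G '' D) := by
  let B : Fin n → Fin n → ℝ := fun i => G ((D.equivFinOfCardEq hD).symm i)
  have hrange : Set.range B = G '' D := by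
    rw [Set.range_comp' G fun i => ((D.equivFinOfCardEq hD).symm i : ι)]
    congr 1
    ext x
    simp [(D.equivFinOfCardEq hD).symm.exists_congr_left]
  exact ⟨B, hinj.comp (Subtype.val_injective.comp (Equiv.injective _)), hrange, fun i => hlat _,
    abs_det_eq_one_of_single_mem_span B (fun i => hlat _) (hrange ▸ hspan)⟩

theorem vertexSet_inter_eq_image_of_strictMax {n : ℕ} {ι : Type*} [Finite ι] {G : ι → Fin n → ℝ}
    (hmax : ∀ i, ∃ f : (Fin n → ℝ) →ₗ[ℝ] ℝ, ∀ j, j ≠ i → f (G j) < f (G i))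
    (p : (Fin n → ℝ) → Prop) :
    vertexSet (convexHull ℝ (Set.range G)) ∩ {x ∈ convexHull ℝ (Set.range G) | p x} =
      G '' {i | p (G i)} := by
  rw [vertexSet, extremePoints_convexHull_range_of_strictMax G hmax]
  ext x
  constructor
  · rintro ⟨⟨i, rfl⟩, -, hi⟩
    exact ⟨i, hi, rfl⟩
  · rintro ⟨i, hi, rfl⟩
    exact ⟨⟨i, rfl⟩, subset_convexHull ℝ _ (Set.mem_range_self i), hi⟩

theorem isSmoothFano_convexHull_range {n : ℕ} (hn : 1 < n) {ι : Type*} [Finite ι]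
    (G : ι → Fin n → ℝ) (hlat : ∀ i, IsLatticePoint (G i))
    (h0 : 0 ∈ interior (convexHull ℝ (Set.range G)))
    (hmax : ∀ i, ∃ f : (Fin n → ℝ) →ₗ[ℝ] ℝ, ∀ j, j ≠ i → f (G j) < f (G i))
    (htight : ∀ f : (Fin n → ℝ) →ₗ[ℝ] ℝ, (∀ i, f (G i) ≤ 1) →
      ∃ D : Finset ι, D.card = n ∧ {i | f (G i) = 1} ⊆ D ∧
        ∀ q, (Pi.single q 1 : Fin n → ℝ) ∈ Submodule.span ℤ (G '' D)) :
    IsSmoothFano (convexHull ℝ (Set.range G)) := by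
  refine ⟨⟨⟨(Set.finite_range G).toFinset, by simpa using hlat, by simp⟩, ?_⟩, h0, fun F hF => ?_⟩
  · rw [affineSpan_convexHull, ← interior_convexHull_nonempty_iff_affineSpan_eq_top]
    exact ⟨0, h0⟩
  have hspan := hF.span_vertexSet_inter_eq_top hn h0 ((Set.finite_range G).isCompact_convexHull ℝ)
    (convex_convexHull ℝ _)
  obtain ⟨f, hle, rfl⟩ := hF.exists_linearMap_eq_one hn h0
  obtain ⟨D, hD, hsub, hDspan⟩ := htight f fun i =>
    hle _ (subset_convexHull ℝ _ (Set.mem_range_self i))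
  rw [vertexSet_inter_eq_image_of_strictMax hmax] at hspan ⊢
  rw [eq_coe_of_span_image_eq_top (hD.trans (Module.finrank_fin_fun ℝ).symm) hsub hspan]
  exact isUnimodularBasis_image (injective_of_strictMax G hmax) hlat hD hDspan

namespace PG

/-- The blocks of base vertices `v_i`, `y_j`, `z`, `t`, `u_j`, in the cyclic order for which the
unions of two consecutive blocks are the primitive collections of base vertices. -/
inductive BaseBlock
  | v | y | z | t | u
  deriving DecidableEq

namespace BaseBlock

instance : Fintype BaseBlock where
  elems := {v, y, z, t, u}
  complete X := by cases X <;> decide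

/-- The cyclic successor of a base block. -/
def next : BaseBlock → BaseBlock
  | v => y
  | y => z
  | z => t
  | t => u
  | u => v

/-- The number of vertices in a base block. -/
abbrev size (a b : ℕ) : BaseBlock → ℕ
  | v => a
  | y => b
  | z => 1
  | t => 1
  | u => b

theorem exists_subset_pair_of_next_notMem :
    ∀ S : Finset BaseBlock, (∀ X ∈ S, X.next ∉ S) → ∃ X : BaseBlock, S ⊆ {X, X.next.next} := by
  decide

theorem card_compl_pair : ∀ X : BaseBlock, ({X, X.next.next}ᶜ : Finset BaseBlock).card = 3 := by
  decide

theorem size_pos {a b : ℕ} (ha : 1 ≤ a) (hb : 1 ≤ b) (X : BaseBlock) : 0 < X.size a b := by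
  cases X <;> simp only [size] <;> omega

end BaseBlock

/-- The linear relations satisfied by the sums of the vertices over the base blocks. -/
structure BaseRel (a b : ℕ) {M : Type*} [AddCommGroup M] (s : BaseBlock → M) : Prop where
  v_add_y : s .v + s .y = (a + b - 1) • s .t
  z_add_t : s .z + s .t = 0
  u_add_t : s .u + s .t = s .y

namespace BaseRel

variable {a b : ℕ}

theorem forall_mem {M S : Type*} [AddCommGroup M] [SetLike S M] [AddSubgroupClass S M] (N : S)
    {s : BaseBlock → M} (hs : BaseRel a b s) (X : BaseBlock) (hX : s X ∈ N)
    (hX' : s X.next.next ∈ N) (Y : BaseBlock) : s Y ∈ N := by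
  have hz : s .z = -s .t := eq_neg_of_add_eq_zero_left hs.z_add_t
  have hv : s .v = (a + b - 1) • s .t - s .y := eq_sub_of_add_eq hs.v_add_y
  have hu : s .u = s .y - s .t := eq_sub_of_add_eq hs.u_add_t
  suffices h : s .t ∈ N ∧ s .y ∈ N by
    cases Y <;> simp only [hz, hv, hu, neg_mem_iff, h.1, h.2, sub_mem, nsmul_mem]
  have hy_of_v (ht : s .t ∈ N) (hv' : s .v ∈ N) : s .y ∈ N :=
    eq_sub_of_add_eq' hs.v_add_y ▸ sub_mem (nsmul_mem ht _) hv'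
  cases X <;> simp only [BaseBlock.next, hz, neg_mem_iff] at hX hX'
  · exact ⟨hX', hy_of_v hX' hX⟩
  · exact ⟨hX', hX⟩
  · exact ⟨hX, hs.u_add_t ▸ add_mem hX' hX⟩
  · exact ⟨hX, hy_of_v hX hX'⟩
  · exact ⟨eq_sub_of_add_eq' hs.u_add_t ▸ sub_mem hX' hX, hX'⟩

theorem add_next_lt (ha : 1 ≤ a) (hb : 1 ≤ b) {s : BaseBlock → ℝ} (hs : BaseRel a b s)
    (hle : ∀ Y, s Y ≤ Y.size a b) (X : BaseBlock) :
    s X + s X.next < X.size a b + X.next.size a b := by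
  have ha' : (1 : ℝ) ≤ a := by exact_mod_cast ha
  have hb' : (1 : ℝ) ≤ b := by exact_mod_cast hb
  have hvy := hs.v_add_y
  have hzt := hs.z_add_t
  have hut := hs.u_add_t
  rw [nsmul_eq_mul, Nat.cast_sub (by omega)] at hvy
  have hy := hle .y
  have hz := hle .z
  have ht := hle .t
  have hu := hle .u
  cases X <;> push_cast [BaseBlock.next, BaseBlock.size] at *
  · nlinarith
  · linarith
  · linarith
  · linarith
  · nlinarith

theorem eq_zero_of_nonpos {s : BaseBlock → ℝ} (hs : BaseRel a b s) (hle : ∀ Y, s Y ≤ 0)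
    (X : BaseBlock) : s X = 0 := by
  have hvy := hs.v_add_y
  have hzt := hs.z_add_t
  have hut := hs.u_add_t
  have ht : s .t = 0 := by linarith [hle .z, hle .t]
  rw [ht, smul_zero] at hvy
  cases X <;> linarith [hle .v, hle .y]

theorem exists_eq_one_and_lt_size (ha : 1 ≤ a) (hb : 1 ≤ b) (X : BaseBlock) :
    ∃ s : BaseBlock → ℝ, BaseRel a b s ∧ s X = 1 ∧ ∀ Y, Y ≠ X → s Y < Y.size a b := by
  have ha' : (1 : ℝ) ≤ a := by exact_mod_cast ha
  have hb' : (1 : ℝ) ≤ b := by exact_mod_cast hb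
  let s (p q : ℝ) : BaseBlock → ℝ
    | .v => (a + b - 1) * q - p
    | .y => p
    | .z => -q
    | .t => q
    | .u => p - q
  have hs (p q : ℝ) : BaseRel a b (s p q) :=
    ⟨by simp [s, Nat.cast_sub (show 1 ≤ a + b by omega)], by simp [s], by simp [s]⟩
  let p : BaseBlock → ℝ
    | .v => -1
    | .y => 1
    | .z => -1
    | .t => b - 1 / 2
    | .u => 1 / 2
  let q : BaseBlock → ℝ
    | .v => 0
    | .y => 1 / (a + b)
    | .z => -1
    | .t => 1
    | .u => -1 / 2
  have hab : (0 : ℝ) < a + b := by linarith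
  have hpos : (0 : ℝ) < 1 / (a + b) := one_div_pos.2 hab
  have hlt : (1 / (a + b) : ℝ) < 1 := (div_lt_one hab).2 (by linarith)
  have hmul : (a + b : ℝ) * (1 / (a + b)) = 1 := mul_one_div_cancel hab.ne'
  refine ⟨s (p X) (q X), hs _ _, by cases X <;> norm_num [s, p, q], fun Y hY => ?_⟩
  cases X <;> cases Y <;> first | exact absurd rfl hY | (push_cast [s, p, q]; linarith)

end BaseRel

variable {a b k : ℕ} {l : Fin k → ℕ}

/-- The number of vertices in a block: besides the base blocks there is, for each `j`, the block
of the `l_j + 1` vertices `w_{i,j}`. -/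
def blockSize (a b : ℕ) (l : Fin k → ℕ) : BaseBlock ⊕ Fin k → ℕ
  | .inl X => X.size a b
  | .inr j => l j + 1

/-- The indices of the vertices of `P(a, b, k, l, α)`: a block and a position in it. -/
abbrev Index (a b : ℕ) (l : Fin k → ℕ) : Type :=
  Σ B : BaseBlock ⊕ Fin k, Fin (blockSize a b l B)

/-- The index of the vertex named by a value of `α`. -/
def ofSum (l : Fin k → ℕ) : Fin b ⊕ Fin b → Index a b l
  | .inl i => ⟨.inl .y, i⟩
  | .inr i => ⟨.inl .u, i⟩

/-- The sum of the values of `g` over a block. -/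
def blockSum {M : Type*} [AddCommMonoid M] (g : Index a b l → M) (B : BaseBlock ⊕ Fin k) : M :=
  ∑ i, g ⟨B, i⟩

theorem blockSize_pos (ha : 1 ≤ a) (hb : 1 ≤ b) : ∀ B, 0 < blockSize a b l B
  | .inl X => X.size_pos ha hb
  | .inr j => Nat.succ_pos (l j)

theorem card_index (ha : 1 ≤ a) : Fintype.card (Index a b l) = dim a b k l + k + 3 := by
  have huniv : (Finset.univ : Finset BaseBlock) = {.v, .y, .z, .t, .u} := rfl
  simp only [Fintype.card_sigma, Fintype.card_fin, Fintype.sum_sum_type, huniv]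
  simp only [Finset.mem_insert, Finset.mem_singleton, reduceCtorEq, or_self, not_false_eq_true,
    Finset.sum_insert, Finset.sum_singleton, Finset.sum_add_distrib, Finset.sum_const,
    Finset.card_univ, Fintype.card_fin, smul_eq_mul, mul_one, blockSize, BaseBlock.size, dim]
  omega

/-- The linear relations among the vertices of `P(a, b, k, l, α)`. -/
structure Rel (α : (j : Fin k) → Fin (l j) → Fin b ⊕ Fin b) {M : Type*} [AddCommGroup M]
    (g : Index a b l → M) : Prop where
  base : BaseRel a b fun X => blockSum g (.inl X)
  sum_w : ∀ j, blockSum g (.inr j) = ∑ i, g (ofSum l (α j i))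

/-- All indices except, for each base block other than `X` and `X.next.next` and for each block of
`w`-vertices, the one at the position given by `m`. The pairs `X`, `X.next.next` are the pairs of
distinct non-consecutive base blocks. -/
def basisIndices (X : BaseBlock) (m : ∀ B, Fin (blockSize a b l B)) : Finset (Index a b l) :=
  ((({X, X.next.next}ᶜ : Finset BaseBlock).disjSum Finset.univ).sigma fun B => {m B})ᶜ

theorem mem_basisIndices {X : BaseBlock} {m : ∀ B, Fin (blockSize a b l B)} {B : BaseBlock ⊕ Fin k}
    {i : Fin (blockSize a b l B)} : ⟨B, i⟩ ∈ basisIndices X m ↔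
      (B ∈ ({X, X.next.next}ᶜ : Finset BaseBlock).disjSum Finset.univ → i ≠ m B) := by
  rw [basisIndices, Finset.mem_compl, Finset.mem_sigma, Finset.mem_singleton, not_and]

theorem card_basisIndices (ha : 1 ≤ a) (X : BaseBlock) (m : ∀ B, Fin (blockSize a b l B)) :
    (basisIndices X m).card = dim a b k l := by
  rw [basisIndices, Finset.card_compl, card_index ha, Finset.card_sigma]
  simp only [Finset.card_singleton, Finset.sum_const, smul_eq_mul, mul_one, Finset.card_disjSum,
    BaseBlock.card_compl_pair, Finset.card_univ, Fintype.card_fin]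
  omega

theorem exists_subset_basisIndices (ha : 1 ≤ a) (hb : 1 ≤ b) (T : Set (Index a b l))
    (hbase : ∀ X : BaseBlock, (∀ i, (⟨.inl X, i⟩ : Index a b l) ∈ T) →
      ∃ i, (⟨.inl X.next, i⟩ : Index a b l) ∉ T)
    (hw : ∀ j, ∃ i, (⟨.inr j, i⟩ : Index a b l) ∉ T) :
    ∃ (X : BaseBlock) (m : ∀ B, Fin (blockSize a b l B)), T ⊆ basisIndices X m := by
  classical
  obtain ⟨X, hX⟩ := BaseBlock.exists_subset_pair_of_next_notMem
    (Finset.univ.filter fun Y => ∀ i, (⟨.inl Y, i⟩ : Index a b l) ∈ T) fun Y hY hY' =>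
      (hbase Y (Finset.mem_filter.1 hY).2).elim fun i hi => hi ((Finset.mem_filter.1 hY').2 i)
  have hmissing : ∀ B, ∃ m, B ∈ ({X, X.next.next}ᶜ : Finset BaseBlock).disjSum Finset.univ →
      (⟨B, m⟩ : Index a b l) ∉ T := by
    rintro (Y | j)
    · by_cases hY : ∀ i, (⟨.inl Y, i⟩ : Index a b l) ∈ T
      · exact ⟨⟨0, Y.size_pos ha hb⟩, fun h =>
          absurd (hX (Finset.mem_filter.2 ⟨Finset.mem_univ _, hY⟩))
            (Finset.mem_compl.1 (Finset.inl_mem_disjSum.1 h))⟩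
      · exact (not_forall.1 hY).imp fun _ h _ => h
    · exact (hw j).imp fun _ h _ => h
  choose m hm using hmissing
  exact ⟨X, m, fun ⟨B, i⟩ hi => mem_basisIndices.2 fun hB hne => hm B hB (hne ▸ hi)⟩

namespace Rel

variable {α : (j : Fin k) → Fin (l j) → Fin b ⊕ Fin b}

theorem map {M N : Type*} [AddCommGroup M] [AddCommGroup N] {g : Index a b l → M}
    (hg : Rel α g) (φ : M →+ N) : Rel α fun i => φ (g i) where
  base := by
    constructor
    · simpa [blockSum] using congrArg φ hg.base.v_add_y
    · simpa [blockSum] using congrArg φ hg.base.z_add_t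
    · simpa [blockSum] using congrArg φ hg.base.u_add_t
  sum_w j := by simpa [blockSum] using congrArg φ (hg.sum_w j)

theorem sub {M : Type*} [AddCommGroup M] {g h : Index a b l → M} (hg : Rel α g) (hh : Rel α h) :
    Rel α fun i => g i - h i where
  base := by
    constructor
    · simpa [blockSum, smul_sub, sub_add_sub_comm] using
        congrArg₂ (· - ·) hg.base.v_add_y hh.base.v_add_y
    · simpa [blockSum, sub_add_sub_comm] using
        congrArg₂ (· - ·) hg.base.z_add_t hh.base.z_add_t
    · simpa [blockSum, sub_add_sub_comm] using
        congrArg₂ (· - ·) hg.base.u_add_t hh.base.u_add_t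
  sum_w j := by simpa [blockSum] using congrArg₂ (· - ·) (hg.sum_w j) (hh.sum_w j)

theorem forall_mem_of_basisIndices {M S : Type*} [AddCommGroup M] [SetLike S M]
    [AddSubgroupClass S M] (N : S) {g : Index a b l → M} (hg : Rel α g) (X : BaseBlock)
    (m : ∀ B, Fin (blockSize a b l B)) (hN : ∀ i ∈ basisIndices X m, g i ∈ N) :
    ∀ i, g i ∈ N := by
  have hne (B) (i) (hi : i ≠ m B) : g ⟨B, i⟩ ∈ N := hN _ (by simp [basisIndices, hi])
  have hblock (B) (hB : blockSum g B ∈ N) (i) : g ⟨B, i⟩ ∈ N := by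
    by_cases hi : i = m B
    · rw [blockSum, ← Finset.add_sum_erase _ _ (Finset.mem_univ i)] at hB
      exact (add_mem_cancel_right (sum_mem fun i' hi' =>
        hne B i' (hi ▸ (Finset.mem_erase.1 hi').1))).1 hB
    · exact hne B i hi
  have hbase (Y) : blockSum g (.inl Y) ∈ N :=
    hg.base.forall_mem N X (sum_mem fun i _ => hN _ (by simp [basisIndices]))
      (sum_mem fun i _ => hN _ (by simp [basisIndices])) Y
  have hsum (s : Fin b ⊕ Fin b) : g (ofSum l s) ∈ N := by
    cases s <;> exact hblock _ (hbase _) _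
  rintro ⟨Y | j, i⟩
  · exact hblock _ (hbase Y) i
  · exact hblock _ (hg.sum_w j ▸ sum_mem fun i _ => hsum _) i

theorem exists_subset_basisIndices {c : Index a b l → ℝ} (hc : Rel α c) (hle : ∀ i, c i ≤ 1)
    (ha : 1 ≤ a) (hb : 1 ≤ b) :
    ∃ (X : BaseBlock) (m : ∀ B, Fin (blockSize a b l B)), {i | c i = 1} ⊆ basisIndices X m := by
  have hsize (B) : blockSum c B ≤ blockSize a b l B := by
    simpa [blockSum] using
      Finset.sum_le_card_nsmul Finset.univ (fun i => c ⟨B, i⟩) 1 fun i _ => hle _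
  have hfull (B) (hB : ∀ i, c ⟨B, i⟩ = 1) : blockSum c B = blockSize a b l B := by
    simp [blockSum, hB]
  refine PG.exists_subset_basisIndices ha hb _ (fun X hX => ?_) fun j => ?_ <;> by_contra! hcon
  · have := hc.base.add_next_lt ha hb (fun Y => hsize (.inl Y)) X
    exact this.ne (congrArg₂ _ (hfull _ hX) (hfull _ hcon))
  · have hl : ∑ i, c (ofSum l (α j i)) ≤ l j := by
      simpa using Finset.sum_le_card_nsmul Finset.univ (fun i => c (ofSum l (α j i))) 1
        fun i _ => hle _
    rw [← hc.sum_w, hfull _ hcon] at hl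
    exact (Nat.lt_succ_self (l j)).not_ge (by exact_mod_cast hl)

theorem eq_zero_of_nonpos {c : Index a b l → ℝ} (hc : Rel α c) (hle : ∀ i, c i ≤ 0)
    (i : Index a b l) : c i = 0 := by
  have hblock (B) (hB : blockSum c B = 0) (i) : c ⟨B, i⟩ = 0 :=
    (Finset.sum_eq_zero_iff_of_nonpos fun i _ => hle ⟨B, i⟩).1 hB i (Finset.mem_univ i)
  have hbase (Y i) : c ⟨.inl Y, i⟩ = 0 :=
    hblock _ (hc.base.eq_zero_of_nonpos (fun Y => Finset.sum_nonpos fun i _ => hle _) Y) i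
  have hsum (s : Fin b ⊕ Fin b) : c (ofSum l s) = 0 := by cases s <;> exact hbase _ _
  rcases i with ⟨Y | j, i⟩
  · exact hbase Y i
  · exact hblock _ ((hc.sum_w j).trans (Finset.sum_eq_zero fun i _ => hsum _)) i

end Rel

theorem exists_rel_extending (α : (j : Fin k) → Fin (l j) → Fin b ⊕ Fin b)
    (c₀ : (Y : BaseBlock) → Fin (blockSize a b l (.inl Y)) → ℝ)
    (hc₀ : BaseRel a b fun Y => ∑ i, c₀ Y i) (hle : ∀ Y i, c₀ Y i ≤ 1) :
    ∃ c : Index a b l → ℝ, Rel α c ∧ (∀ Y i, c ⟨.inl Y, i⟩ = c₀ Y i) ∧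
      ∀ j i, c ⟨.inr j, i⟩ < 1 := by
  let c₁ (j : Fin k) : ℝ := (∑ i, Sum.elim (c₀ .y) (c₀ .u) (α j i)) / (l j + 1)
  let c : Index a b l → ℝ
    | ⟨.inl Y, i⟩ => c₀ Y i
    | ⟨.inr j, _⟩ => c₁ j
  refine ⟨c, ⟨hc₀, fun j => ?_⟩, fun _ _ => rfl, fun j _ => ?_⟩
  · calc blockSum c (.inr j) = blockSize a b l (.inr j) * c₁ j := by simp [blockSum, c]
      _ = (l j + 1) * c₁ j := by simp [blockSize]
      _ = ∑ i, Sum.elim (c₀ .y) (c₀ .u) (α j i) := mul_div_cancel₀ _ (by positivity)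
      _ = ∑ i, c (ofSum l (α j i)) := Finset.sum_congr rfl fun i _ => by cases α j i <;> rfl
  · have : ∑ i, Sum.elim (c₀ .y) (c₀ .u) (α j i) ≤ l j := by
      simpa using Finset.sum_le_card_nsmul Finset.univ
        (fun i => Sum.elim (c₀ .y) (c₀ .u) (α j i)) 1 fun i _ => by
          cases α j i <;> exact hle _ _
    exact (div_lt_one (by positivity)).2 (by linarith)

theorem exists_rel_strictMax_base (ha : 1 ≤ a) (hb : 1 ≤ b)
    (α : (j : Fin k) → Fin (l j) → Fin b ⊕ Fin b) (X : BaseBlock)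
    (i₀ : Fin (blockSize a b l (.inl X))) :
    ∃ c : Index a b l → ℝ, Rel α c ∧ ∀ i, i ≠ ⟨.inl X, i₀⟩ → c i < c ⟨.inl X, i₀⟩ := by
  obtain ⟨s, hs, hsX, hlt⟩ := BaseRel.exists_eq_one_and_lt_size ha hb X
  have hsize (Y : BaseBlock) : (0 : ℝ) < Y.size a b := Nat.cast_pos.2 (Y.size_pos ha hb)
  let c₀ : (Y : BaseBlock) → Fin (blockSize a b l (.inl Y)) → ℝ :=
    Function.update (fun Y _ => s Y / Y.size a b) X (Pi.single i₀ 1)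
  have hsum (Y : BaseBlock) : ∑ i, c₀ Y i = s Y := by
    rcases eq_or_ne Y X with rfl | hY
    · simp [c₀, hsX]
    · calc ∑ i, c₀ Y i = blockSize a b l (.inl Y) * (s Y / Y.size a b) := by simp [c₀, hY]
        _ = s Y := mul_div_cancel₀ _ (hsize Y).ne'
  have hmax : c₀ X i₀ = 1 := by simp [c₀]
  have hlt₀ (Y i) (hi : (⟨.inl Y, i⟩ : Index a b l) ≠ ⟨.inl X, i₀⟩) : c₀ Y i < 1 := by
    rcases eq_or_ne Y X with rfl | hY
    · have : i ≠ i₀ := by rintro rfl; exact hi rfl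
      simp [c₀, this]
    · simpa [c₀, hY] using (div_lt_one (hsize Y)).2 (hlt Y hY)
  obtain ⟨c, hc, hcbase, hcw⟩ := exists_rel_extending α c₀ (by simpa only [hsum] using hs)
    fun Y i => by
      by_cases hi : (⟨.inl Y, i⟩ : Index a b l) = ⟨.inl X, i₀⟩
      · cases hi
        exact hmax.le
      · exact (hlt₀ Y i hi).le
  refine ⟨c, hc, ?_⟩
  rw [hcbase, hmax]
  rintro ⟨Y | j, i⟩ hi
  · exact (hcbase Y i).trans_lt (hlt₀ Y i hi)
  · exact hcw j i

theorem exists_rel_strictMax_w (α : (j : Fin k) → Fin (l j) → Fin b ⊕ Fin b) (j₀ : Fin k)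
    (hl : 1 ≤ l j₀) (i₀ : Fin (blockSize a b l (.inr j₀))) :
    ∃ c : Index a b l → ℝ, Rel α c ∧ ∀ i, i ≠ ⟨.inr j₀, i₀⟩ → c i < c ⟨.inr j₀, i₀⟩ := by
  let d : (j : Fin k) → Fin (blockSize a b l (.inr j)) → ℝ :=
    Function.update (fun _ _ => 0) j₀ (Pi.single i₀ (blockSize a b l (.inr j₀) : ℝ) - 1)
  let c : Index a b l → ℝ
    | ⟨.inl _, _⟩ => 0
    | ⟨.inr j, i⟩ => d j i
  have hl' : (0 : ℝ) < l j₀ := Nat.cast_pos.2 hl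
  have hmax : c ⟨.inr j₀, i₀⟩ = l j₀ := by
    calc c ⟨.inr j₀, i₀⟩ = blockSize a b l (.inr j₀) - 1 := by simp [c, d]
      _ = l j₀ := by simp [blockSize]
  have hsum (B) : blockSum c B = 0 := by
    rcases B with Y | j
    · simp [blockSum, c]
    · rcases eq_or_ne j j₀ with rfl | hj
      · simp [blockSum, c, d]
      · simp [blockSum, c, d, hj]
  refine ⟨c, ⟨⟨by simp [hsum], by simp [hsum], by simp [hsum]⟩, fun j => ?_⟩, ?_⟩
  · rw [hsum]
    exact (Finset.sum_eq_zero fun i _ => by cases α j i <;> rfl).symm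
  · rw [hmax]
    rintro ⟨Y | j, i⟩ hi
    · exact hl'
    · rcases eq_or_ne j j₀ with rfl | hj
      · have : i ≠ i₀ := by rintro rfl; exact hi rfl
        simp only [c, d, Function.update_self, Pi.sub_apply, Pi.single_eq_of_ne this, Pi.one_apply]
        linarith
      · simpa [c, d, hj] using hl'

/-- The vertices of `P(a, b, k, l, α)`. -/
def vert (α : (j : Fin k) → Fin (l j) → Fin b ⊕ Fin b) : Index a b l → Fin (dim a b k l) → ℝ
  | ⟨.inl .v, i⟩ => v a b k l i
  | ⟨.inl .y, i⟩ => y a b k l i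
  | ⟨.inl .z, _⟩ => z a b k l
  | ⟨.inl .t, _⟩ => t a b k l
  | ⟨.inl .u, i⟩ => u a b k l i
  | ⟨.inr j, i⟩ => w a b k l α j i

theorem P_eq_convexHull_range_vert (a b k : ℕ) (l : Fin k → ℕ)
    (α : (j : Fin k) → Fin (l j) → Fin b ⊕ Fin b) :
    P a b k l α = convexHull ℝ (Set.range (vert α)) := by
  rw [P]
  congr 1
  ext x
  simp only [Set.mem_union, Set.mem_insert_iff, Set.mem_singleton_iff, Set.mem_iUnion]
  constructor
  · rintro ((((⟨i, rfl⟩ | ⟨i, rfl⟩) | (rfl | rfl)) | ⟨i, rfl⟩) | ⟨j, i, rfl⟩)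
    exacts [⟨⟨.inl .v, i⟩, rfl⟩, ⟨⟨.inl .y, i⟩, rfl⟩, ⟨⟨.inl .z, (0 : Fin 1)⟩, rfl⟩,
      ⟨⟨.inl .t, (0 : Fin 1)⟩, rfl⟩, ⟨⟨.inl .u, i⟩, rfl⟩, ⟨⟨.inr j, i⟩, rfl⟩]
  · rintro ⟨⟨(_ | _ | _ | _ | _) | j, i⟩, rfl⟩
    exacts [.inl (.inl (.inl (.inl ⟨i, rfl⟩))), .inl (.inl (.inl (.inr ⟨i, rfl⟩))),
      .inl (.inl (.inr (.inl rfl))), .inl (.inl (.inr (.inr rfl))), .inl (.inr ⟨i, rfl⟩),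
      .inr ⟨j, i, rfl⟩]

section Coordinates

variable {α : (j : Fin k) → Fin (l j) → Fin b ⊕ Fin b}

theorem vert_ofSum (j : Fin k) (i : Fin (l j)) :
    vert (a := a) α (ofSum l (α j i)) = A a b k l α j i := by
  unfold A
  rcases α j i with s | s <;> rfl

theorem isLatticePoint_vert (i : Index a b l) : IsLatticePoint (vert α i) := by
  have hbase (X : BaseBlock) (i) (q) :
      vert (a := a) α ⟨.inl X, i⟩ q ∈ (Int.castRingHom ℝ).range := by
    cases X <;> simp only [vert, v, y, z, t, u, ite_apply] <;> split_ifs <;>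
      simp only [one_mem, zero_mem, neg_mem_iff, natCast_mem]
  refine isLatticePoint_iff.2 fun q => ?_
  rcases i with ⟨X | j, i⟩
  · exact hbase X i q
  · have hA (i') : A a b k l α j i' q ∈ (Int.castRingHom ℝ).range := by
      rw [← vert_ofSum]
      rcases α j i' with s | s <;> exact hbase _ _ q
    simp only [vert, w, ite_apply]
    split_ifs <;> simp only [one_mem, zero_mem, sub_mem, sum_mem, hA, implies_true]

theorem sum_ite_eq_add {m : ℕ} (s q : ℕ) :
    (∑ i : Fin m, if q = s + i.val then (1 : ℝ) else 0) =
      if s ≤ q ∧ q < s + m then 1 else 0 := by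
  split_ifs with h
  · rw [Finset.sum_eq_single ⟨q - s, by omega⟩ (fun i _ hi => if_neg fun hq => hi (Fin.ext ?_))
      (by simp), if_pos (by simp only; omega)]
    simp only
    omega
  · exact Finset.sum_eq_zero fun i _ => if_neg (by omega)

theorem sum_v_apply (ha : 1 ≤ a) (q : Fin (dim a b k l)) :
    ∑ i, v a b k l i q = (if q.val < a - 1 then 1 else 0) +
      if q.val = a + 2 * b - 2 then ((a + b - 1 : ℕ) : ℝ)
        else if q.val < a + 2 * b - 2 then -1 else 0 := by
  obtain ⟨a, rfl⟩ := Nat.exists_eq_add_of_le' ha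
  have := sum_ite_eq_add (m := a) 0 q.val
  simp only [zero_add, zero_le, true_and] at this
  simp [Fin.sum_univ_castSucc, v, this]

theorem sum_y_apply (hb : 1 ≤ b) (q : Fin (dim a b k l)) :
    ∑ j, y a b k l j q = (if a - 1 ≤ q.val ∧ q.val < a - 1 + (b - 1) then 1 else 0) +
      if a + b - 2 ≤ q.val ∧ q.val ≤ a + 2 * b - 3 then 1 else 0 := by
  obtain ⟨b, rfl⟩ := Nat.exists_eq_add_of_le' hb
  have := sum_ite_eq_add (m := b) (a - 1) q.val
  simp [Fin.sum_univ_castSucc, y, this]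

theorem sum_u_apply (hb : 1 ≤ b) (q : Fin (dim a b k l)) :
    ∑ j, u a b k l j q = (if a + b - 1 ≤ q.val ∧ q.val < a + b - 1 + (b - 1) then 1 else 0) +
      if a - 1 ≤ q.val ∧ q.val ≤ a + b - 2 then 1
        else if q.val = a + 2 * b - 2 then -1 else 0 := by
  obtain ⟨b, rfl⟩ := Nat.exists_eq_add_of_le' hb
  have := sum_ite_eq_add (m := b) (a + b) q.val
  simp [Fin.sum_univ_castSucc, u, this, ← add_assoc]

theorem baseRel_vert (ha : 1 ≤ a) (hb : 1 ≤ b) :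
    BaseRel a b fun X => blockSum (vert (a := a) α) (.inl X) := by
  have hv : blockSum (vert α) (.inl .v) = ∑ i, v a b k l i := rfl
  have hy : blockSum (vert α) (.inl .y) = ∑ j, y a b k l j := rfl
  have hz : blockSum (vert α) (.inl .z) = z a b k l := Fin.sum_univ_one _
  have ht : blockSum (vert α) (.inl .t) = t a b k l := Fin.sum_univ_one _
  have hu : blockSum (vert α) (.inl .u) = ∑ j, u a b k l j := rfl
  constructor <;> ext q <;>
    simp only [hv, hy, hz, ht, hu, Pi.add_apply, Pi.smul_apply, Finset.sum_apply, Pi.zero_apply,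
      nsmul_eq_mul, sum_v_apply ha, sum_y_apply hb, sum_u_apply hb, z, t] <;>
    split_ifs <;> first | omega | norm_num

theorem rel_vert (ha : 1 ≤ a) (hb : 1 ≤ b) : Rel α (vert (a := a) α) where
  base := baseRel_vert ha hb
  sum_w j := by
    have hw : blockSum (vert α) (.inr j) = ∑ i, w a b k l α j i := rfl
    ext q
    have h := sum_ite_eq_add (m := l j) (a + 2 * b - 1 + Lprev k l j) q.val
    simp only [hw, vert_ofSum, Finset.sum_apply]
    simp [Fin.sum_univ_castSucc, w, h]

theorem sum_castLE_eq_Lprev {k : ℕ} (l : Fin k → ℕ) (j : Fin k) :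
    ∑ i : Fin j.val, l (Fin.castLE j.isLt.le i) = Lprev k l j :=
  Finset.sum_bij (fun i _ => Fin.castLE j.isLt.le i)
    (fun i _ => Finset.mem_filter.2 ⟨Finset.mem_univ _, i.isLt⟩)
    (fun _ _ _ _ h => Fin.castLE_injective _ h)
    (fun i hi => ⟨⟨i.val, (Finset.mem_filter.1 hi).2⟩, Finset.mem_univ _, rfl⟩)
    fun _ _ => rfl

/-- The standard basis vector of `ℝ^n` at position `r`, which is `0` if `n ≤ r`. -/
def basisVec (n r : ℕ) : Fin n → ℝ := fun q => if q.val = r then 1 else 0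

theorem single_eq_basisVec {n : ℕ} (q : Fin n) : (Pi.single q 1 : Fin n → ℝ) = basisVec n q := by
  ext r
  simp [basisVec, Pi.single_apply, Fin.ext_iff]

section Generation

variable {S : Type*} [SetLike S (Fin (dim a b k l) → ℝ)] {N : S}

theorem basisVec_add_mem_of_vert_mem (hN : ∀ i, vert α i ∈ N) {i : ℕ} (hi : i < b - 1) :
    basisVec (dim a b k l) (a + b - 1 + i) ∈ N := by
  convert hN ⟨.inl .u, (⟨i, by omega⟩ : Fin b)⟩ using 1
  ext q
  simp [vert, u, hi, basisVec]

theorem basisVec_mem_of_vert_mem_of_lt [AddSubgroupClass S (Fin (dim a b k l) → ℝ)] (ha : 1 ≤ a)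
    (hN : ∀ i, vert α i ∈ N) {r : ℕ} (hr : r < a + 2 * b - 1) : basisVec (dim a b k l) r ∈ N := by
  rcases lt_or_ge r (a - 1) with hv | hv
  · convert hN ⟨.inl .v, (⟨r, by omega⟩ : Fin a)⟩ using 1
    ext q
    simp [vert, v, hv, basisVec]
  rcases lt_or_ge r (a + b - 2) with hy | hy
  · convert hN ⟨.inl .y, (⟨r - (a - 1), by omega⟩ : Fin b)⟩ using 1
    ext q
    simp [vert, y, show r - (a - 1) < b - 1 by omega, Nat.add_sub_cancel' hv, basisVec]
  rcases lt_or_ge r (a + b - 1) with hyb | hyb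
  · have hmem : y a b k l ⟨b - 1, by omega⟩ -
        ∑ j : Fin (b - 1), basisVec (dim a b k l) (a + b - 1 + j) ∈ N :=
      sub_mem (hN ⟨.inl .y, _⟩) (sum_mem fun j _ => basisVec_add_mem_of_vert_mem hN j.isLt)
    convert hmem using 1
    ext q
    simp only [basisVec, y, lt_irrefl, if_false, Pi.sub_apply, Finset.sum_apply, sum_ite_eq_add]
    split_ifs <;> first | omega | norm_num
  rcases lt_or_ge r (a + 2 * b - 2) with hu | hu
  · obtain ⟨i, rfl⟩ := Nat.exists_eq_add_of_le hyb
    exact basisVec_add_mem_of_vert_mem hN (by omega)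
  · obtain rfl : r = a + 2 * b - 2 := by omega
    exact hN ⟨.inl .t, (0 : Fin 1)⟩

theorem basisVec_mem_of_vert_mem_of_le (hN : ∀ i, vert α i ∈ N) {r : ℕ} (hr : a + 2 * b - 1 ≤ r)
    (hr' : r < dim a b k l) : basisVec (dim a b k l) r ∈ N := by
  obtain ⟨⟨j, i⟩, hji⟩ := finSigmaFinEquiv.surjective
    (⟨r - (a + 2 * b - 1), by unfold dim at hr'; omega⟩ : Fin (∑ j, l j))
  have hval : Lprev k l j + i = r - (a + 2 * b - 1) := by
    rw [← sum_castLE_eq_Lprev]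
    exact (finSigmaFinEquiv_apply ⟨j, i⟩).symm.trans (congrArg Fin.val hji)
  convert hN ⟨.inr j, i.castSucc⟩ using 1
  ext q
  simp [vert, w, basisVec, show a + 2 * b - 1 + Lprev k l j + i = r by omega]

theorem single_mem_of_vert_mem [AddSubgroupClass S (Fin (dim a b k l) → ℝ)] (ha : 1 ≤ a)
    (hN : ∀ i, vert α i ∈ N) (q : Fin (dim a b k l)) :
    (Pi.single q 1 : Fin (dim a b k l) → ℝ) ∈ N := by
  rw [single_eq_basisVec]
  exact (lt_or_ge q.val (a + 2 * b - 1)).elim (basisVec_mem_of_vert_mem_of_lt ha hN)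
    fun hq => basisVec_mem_of_vert_mem_of_le hN hq q.isLt

end Generation

end Coordinates

variable (α : (j : Fin k) → Fin (l j) → Fin b ⊕ Fin b)

theorem single_mem_span_int_image_basisIndices (ha : 1 ≤ a) (hb : 1 ≤ b) (X : BaseBlock)
    (m : ∀ B, Fin (blockSize a b l B)) (q : Fin (dim a b k l)) :
    (Pi.single q 1 : Fin (dim a b k l) → ℝ) ∈
      Submodule.span ℤ (vert α '' (basisIndices X m : Set (Index a b l))) :=
  single_mem_of_vert_mem ha ((rel_vert ha hb).forall_mem_of_basisIndices _ X m fun _ hi =>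
    Submodule.subset_span (Set.mem_image_of_mem _ hi)) q

theorem span_real_image_basisIndices_eq_top (ha : 1 ≤ a) (hb : 1 ≤ b) (X : BaseBlock)
    (m : ∀ B, Fin (blockSize a b l B)) :
    Submodule.span ℝ (vert α '' (basisIndices X m : Set (Index a b l))) = ⊤ := by
  rw [← top_le_iff, ← (Pi.basisFun ℝ _).span_eq, Submodule.span_le]
  rintro _ ⟨q, rfl⟩
  rw [Pi.basisFun_apply]
  exact Submodule.span_le_restrictScalars ℤ ℝ _
    (single_mem_span_int_image_basisIndices α ha hb X m q)

variable {α}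

theorem Rel.exists_linearMap (ha : 1 ≤ a) (hb : 1 ≤ b) {c : Index a b l → ℝ} (hc : Rel α c) :
    ∃ f : (Fin (dim a b k l) → ℝ) →ₗ[ℝ] ℝ, ∀ i, f (vert α i) = c i := by
  let m (B) : Fin (blockSize a b l B) := ⟨0, blockSize_pos ha hb B⟩
  have hspan : ⊤ ≤ Submodule.span ℝ (Set.range fun i : basisIndices .v m => vert α i.1) := by
    rw [← span_real_image_basisIndices_eq_top α ha hb .v m, Set.image_eq_range]
    rfl
  have hcard : Fintype.card (basisIndices .v m) = Module.finrank ℝ (Fin (dim a b k l) → ℝ) := by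
    rw [Fintype.card_coe, card_basisIndices ha, Module.finrank_fin_fun]
  let e := basisOfTopLeSpanOfCardEqFinrank _ hspan hcard
  have he (i : basisIndices .v m) : e i = vert α i.1 :=
    congrFun (coe_basisOfTopLeSpanOfCardEqFinrank _ hspan hcard) i
  let f : (Fin (dim a b k l) → ℝ) →ₗ[ℝ] ℝ := e.constr ℝ fun i => c i.1
  have hrel : Rel α fun i => f (vert α i) - c i :=
    ((rel_vert ha hb).map f.toAddMonoidHom).sub hc
  refine ⟨f, fun i => sub_eq_zero.1 (hrel.forall_mem_of_basisIndices (⊥ : AddSubgroup ℝ) .v m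
    (fun i hi => ?_) i)⟩
  rw [AddSubgroup.mem_bot, sub_eq_zero, ← he ⟨i, hi⟩]
  exact e.constr_basis ℝ _ _

theorem exists_linearMap_strictMax (ha : 1 ≤ a) (hb : 1 ≤ b) (hl : ∀ j, 1 ≤ l j)
    (i : Index a b l) :
    ∃ f : (Fin (dim a b k l) → ℝ) →ₗ[ℝ] ℝ, ∀ i', i' ≠ i → f (vert α i') < f (vert α i) := by
  obtain ⟨c, hc, hmax⟩ : ∃ c : Index a b l → ℝ, Rel α c ∧ ∀ i', i' ≠ i → c i' < c i := by
    rcases i with ⟨X | j, i⟩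
    · exact exists_rel_strictMax_base ha hb α X i
    · exact exists_rel_strictMax_w α j (hl j) i
  obtain ⟨f, hf⟩ := hc.exists_linearMap ha hb
  exact ⟨f, by simpa only [hf] using hmax⟩

theorem eq_zero_of_forall_vert_nonpos (ha : 1 ≤ a) (hb : 1 ≤ b)
    (f : (Fin (dim a b k l) → ℝ) →ₗ[ℝ] ℝ) (hf : ∀ i, f (vert α i) ≤ 0) : f = 0 := by
  have hker : ∀ i, vert α i ∈ LinearMap.ker f :=
    ((rel_vert ha hb).map f.toAddMonoidHom).eq_zero_of_nonpos hf
  refine LinearMap.pi_ext' fun q => LinearMap.ext_ring ?_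
  exact single_mem_of_vert_mem ha hker q

theorem exists_basisIndices_of_forall_vert_le_one (ha : 1 ≤ a) (hb : 1 ≤ b)
    (f : (Fin (dim a b k l) → ℝ) →ₗ[ℝ] ℝ) (hf : ∀ i, f (vert α i) ≤ 1) :
    ∃ D : Finset (Index a b l), D.card = dim a b k l ∧ {i | f (vert α i) = 1} ⊆ D ∧
      ∀ q, (Pi.single q 1 : Fin (dim a b k l) → ℝ) ∈
        Submodule.span ℤ (vert α '' (D : Set (Index a b l))) := by
  obtain ⟨X, m, hsub⟩ :=
    ((rel_vert ha hb).map f.toAddMonoidHom).exists_subset_basisIndices hf ha hb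
  exact ⟨basisIndices X m, card_basisIndices ha X m, hsub,
    single_mem_span_int_image_basisIndices α ha hb X m⟩

end PG

theorem PG_isSmoothFano_general (a b k : ℕ) (l : Fin k → ℕ) (ha : 1 ≤ a) (hb : 1 ≤ b)
    (hl : ∀ j, 1 ≤ l j) (α : (j : Fin k) → Fin (l j) → (Fin b ⊕ Fin b)) :
    IsSmoothFano (PG.P a b k l α) ∧
    (vertexSet (PG.P a b k l α)).ncard = PG.dim a b k l + k + 3 := by
  have hmax := PG.exists_linearMap_strictMax (α := α) ha hb hl
  have hdim : 1 < PG.dim a b k l := by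
    unfold PG.dim
    omega
  have : Nonempty (PG.Index a b l) := ⟨⟨.inl .t, (0 : Fin 1)⟩⟩
  rw [PG.P_eq_convexHull_range_vert]
  constructor
  · exact isSmoothFano_convexHull_range hdim (PG.vert α) PG.isLatticePoint_vert
      (zero_mem_interior_convexHull_range _ (PG.eq_zero_of_forall_vert_nonpos ha hb)) hmax
      (PG.exists_basisIndices_of_forall_vert_le_one ha hb)
  · calc (vertexSet (convexHull ℝ (Set.range (PG.vert α)))).ncard
        = (Set.range (PG.vert α)).ncard := by
          rw [vertexSet, extremePoints_convexHull_range_of_strictMax _ hmax]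
      _ = Nat.card (PG.Index a b l) := Set.ncard_range_of_injective (injective_of_strictMax _ hmax)
      _ = PG.dim a b k l + k + 3 := by rw [Nat.card_eq_fintype_card, PG.card_index ha]

/-- For `a ≥ 2`, `b ≥ 1`, `k ≥ 1`, `l_1, …, l_k ≥ 1` and any
assignment `α` as in the construction, the polytope `P(a, b, k, l, α)` is a
smooth Fano polytope of dimension `n = a + 2b - 1 + ∑ l_j` with `n + k + 3`
vertices. -/
theorem PG_isSmoothFano (a b k : ℕ) (l : Fin k → ℕ)
    (ha : 2 ≤ a) (hb : 1 ≤ b) (hk : 1 ≤ k) (hl : ∀ j, 1 ≤ l j)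
    (α : (j : Fin k) → Fin (l j) → (Fin b ⊕ Fin b))
    (hα : ∀ s : Fin b ⊕ Fin b, ∃ j i, α j i = s) :
    IsSmoothFano (PG.P a b k l α) ∧
    (vertexSet (PG.P a b k l α)).ncard = PG.dim a b k l + k + 3 :=
  PG_isSmoothFano_general a b k l (by omega) hb hl α
end

section
/- For all integers n and ρ with n ≥ 5 and 3 ≤ ρ ≤ n, there exists an I-isolated smooth Fano n-polytope with n + ρ vertices. -/
/-!
The vertices `t, z, v_0, …, v_q, y_0, …, y_p, u_0, …, u_p, b_{j,0}, …, b_{j,α_j + β_j}` of the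
polytopes generate the lattice with the relations `∑ v + ∑ y = (p + q + 1) t`, `∑ y = ∑ u + t`,
`t + z = 0` and `∑ b_j = α_j y_0 + β_j u_0`. A facet misses three of the vertices `t, z, v, y, u`,
in one of the combinations `tzv`, `zvu`, `zyu`, `tyv`, `tyu`, and one vertex of every block `b_j`.

Suppose that a new vertex `w` is added. As no facet of the new polytope contains `n + 1` vertices,
the equation `u_F = 1` of every old facet `F` satisfies `u_F(w) ≤ 0` or `u_F(w) ≥ 2`. If `F'` is
adjacent to `F` and `u_{F'}` vanishes at the vertex of `F` opposite to the common ridge, then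
`u_F(w) ≥ 2` implies `u_{F'}(w) ≥ 2`: otherwise `w` and the ridge would span a facet of the new
polytope that is not unimodular. Propagating this along chains of facets, either `u_F(w) ≥ 2` for
all `F` that are not of type `tyu`, or `u_F(w) ≤ 0` for all of them.

In the second case `w` lies in the cone over a facet of type `tyu`, with a coefficient of `z` that
is at least `2`; but unimodularity of the facet spanned by `w` and the ridge opposite to `z` forces
this coefficient to be `1`. In the first case `-w` lies in such a cone, and solving for `t = -z`
expresses `t` through `w` and the other vertices with coefficients of sum at most one, so that `t`
is no longer a vertex.

A vertex cannot be deleted either: the origin would leave the interior, or the remaining points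
would lie on a facet that is not unimodular.
-/

section Convexity

section Field

variable {K V : Type*} [Field K] [AddCommGroup V] [Module K V]

lemma finrank_vectorSpan_add_one [FiniteDimensional K V] {F : Set V} (hne : F.Nonempty)
    {g : Module.Dual K V} (hg : ∀ x ∈ F, g x = 1) :
    Module.finrank K (vectorSpan K F) + 1 = Module.finrank K (Submodule.span K F) := by
  obtain ⟨x₀, hx₀⟩ := hne
  have hx₀0 : x₀ ≠ 0 := by
    rintro rfl
    simpa using hg 0 hx₀
  have hspan : vectorSpan K F ≤ Submodule.span K F := by
    rw [vectorSpan_eq_span_vsub_set_right K hx₀, Submodule.span_le]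
    rintro _ ⟨y, hy, rfl⟩
    exact Submodule.sub_mem _ (Submodule.subset_span hy) (Submodule.subset_span hx₀)
  have hker : vectorSpan K F ≤ LinearMap.ker g := by
    rw [vectorSpan_eq_span_vsub_set_right K hx₀, Submodule.span_le]
    rintro _ ⟨y, hy, rfl⟩
    simp [hg y hy, hg x₀ hx₀]
  have hsup : vectorSpan K F ⊔ Submodule.span K {x₀} = Submodule.span K F := by
    refine le_antisymm (sup_le hspan (Submodule.span_mono (by simpa using hx₀)))
      (Submodule.span_le.2 fun y hy => ?_)
    rw [← sub_add_cancel y x₀]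
    exact Submodule.add_mem_sup (vsub_mem_vectorSpan K hy hx₀)
      (Submodule.mem_span_singleton_self x₀)
  have hinf : vectorSpan K F ⊓ Submodule.span K {x₀} = ⊥ := by
    rw [← disjoint_iff, Submodule.disjoint_span_singleton' hx₀0]
    intro hmem
    simpa [hg x₀ hx₀] using hker hmem
  have hfr := Submodule.finrank_sup_add_finrank_inf_eq (vectorSpan K F) (Submodule.span K {x₀})
  rw [hsup, hinf, finrank_bot, add_zero, finrank_span_singleton hx₀0] at hfr
  exact hfr.symm

lemma span_eq_top_of_forall_dual {S : Set V}
    (hS : ∀ f : Module.Dual K V, (∀ x ∈ S, f x = 0) → f = 0) : Submodule.span K S = ⊤ := by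
  by_contra h
  obtain ⟨f, hf, hker⟩ := Submodule.exists_le_ker_of_lt_top _ (lt_top_iff_ne_top.2 h)
  exact hf (hS f fun x hx => hker (Submodule.subset_span hx))

variable [LinearOrder K] [IsStrictOrderedRing K]

lemma apply_le_of_mem_convexHull {S : Set V} {g : Module.Dual K V} {c : K}
    (hg : ∀ x ∈ S, g x ≤ c) {x : V} (hx : x ∈ convexHull K S) : g x ≤ c :=
  convexHull_min (t := {x | g x ≤ c}) hg (convex_halfSpace_le g.isLinear c) hx

lemma mem_convexHull_of_apply_eq {S : Set V} {g : Module.Dual K V} {c : K}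
    (hg : ∀ x ∈ S, g x ≤ c) {x : V} (hx : x ∈ convexHull K S) (hgx : g x = c) :
    x ∈ convexHull K {s ∈ S | g s = c} := by
  obtain ⟨ι, _, a, p, ha₀, ha₁, hp, rfl⟩ := mem_convexHull_iff_exists_fintype.1 hx
  have hsum : ∑ i, a i * (c - g (p i)) = 0 := by
    simp only [map_sum, map_smul, smul_eq_mul] at hgx
    simp only [mul_sub, Finset.sum_sub_distrib, ← Finset.sum_mul, ha₁, hgx, one_mul, sub_self]
  rw [Finset.sum_eq_zero_iff_of_nonneg fun i _ =>
    mul_nonneg (ha₀ i) (sub_nonneg.2 (hg _ (hp i)))] at hsum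
  classical
  rw [← Finset.centerMass_eq_of_sum_1 _ p ha₁, ← Finset.centerMass_filter_ne_zero]
  refine Finset.centerMass_mem_convexHull _ (fun i _ => ha₀ i) ?_ fun i hi => ⟨hp i, ?_⟩
  · rw [Finset.sum_filter_ne_zero, ha₁]
    exact one_pos
  · have := (mul_eq_zero.1 (hsum i (Finset.mem_univ i))).resolve_left (Finset.mem_filter.1 hi).2
    exact (sub_eq_zero.1 this).symm

lemma sum_smul_mem_of_zero_mem {s : Set V} (hs : Convex K s) (h0 : (0 : V) ∈ s) {ι : Type*}
    {T : Finset ι} {c : ι → K} {p : ι → V} (hc : ∀ i ∈ T, 0 ≤ c i) (hc₁ : ∑ i ∈ T, c i ≤ 1)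
    (hp : ∀ i ∈ T, p i ∈ s) : ∑ i ∈ T, c i • p i ∈ s := by
  rcases (Finset.sum_nonneg hc).eq_or_lt with h | h
  · rw [Finset.sum_congr rfl fun i hi => by
      rw [(Finset.sum_eq_zero_iff_of_nonneg hc).1 h.symm i hi, zero_smul], Finset.sum_const_zero]
    exact h0
  · rw [← smul_inv_smul₀ h.ne' (∑ i ∈ T, c i • p i)]
    exact hs.smul_mem_of_zero_mem h0 (hs.centerMass_mem hc h hp) ⟨h.le, hc₁⟩

lemma sum_smul_ne_of_mem_extremePoints {s : Set V} (hs : Convex K s) (h0 : (0 : V) ∈ s)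
    {a : V} (ha : a ∈ s.extremePoints K) (ha0 : a ≠ 0) {ι : Type*} {T : Finset ι} {c : ι → K}
    {p : ι → V} (hc : ∀ i ∈ T, 0 ≤ c i) (hc₁ : ∑ i ∈ T, c i ≤ 1) (hp : ∀ i ∈ T, p i ∈ s)
    (hpa : ∀ i ∈ T, p i ≠ a) : ∑ i ∈ T, c i • p i ≠ a :=
  (sum_smul_mem_of_zero_mem ((hs.mem_extremePoints_iff_convex_sdiff).1 ha).2 ⟨h0, ha0.symm⟩ hc hc₁
    fun i hi => ⟨hp i hi, hpa i hi⟩).2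

end Field

variable {E : Type*} [NormedAddCommGroup E] [NormedSpace ℝ E]

lemma apply_lt_of_mem_interior [FiniteDimensional ℝ E] {s : Set E} {f : Module.Dual ℝ E}
    (hf : f ≠ 0) {c : ℝ} (hs : ∀ x ∈ s, f x ≤ c) {a : E} (ha : a ∈ interior s) : f a < c := by
  have hopen : IsOpen (f '' interior s) :=
    f.isOpenMap_of_finiteDimensional (LinearMap.surjective hf) _ isOpen_interior
  have hsub : f '' interior s ⊆ Set.Iic c :=
    Set.image_subset_iff.2 fun x hx => hs x (interior_subset hx)
  have := hopen.subset_interior_iff.2 hsub ⟨a, ha, rfl⟩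
  rwa [interior_Iic] at this

lemma exists_dual_le_of_notMem_interior {s : Set E} (hs : Convex ℝ s) (hne : (interior s).Nonempty)
    {a : E} (ha : a ∉ interior s) : ∃ f : Module.Dual ℝ E, f ≠ 0 ∧ ∀ x ∈ s, f x ≤ f a := by
  obtain ⟨f, hf, hle⟩ := geometric_hahn_banach_of_nonempty_interior_point hs ha hne
  exact ⟨f, fun h => hf (ContinuousLinearMap.coe_injective h), hle⟩

lemma zero_mem_interior_convexHull [FiniteDimensional ℝ E] [Nontrivial E] {S : Set E}
    (hS : ∀ f : Module.Dual ℝ E, (∀ x ∈ S, f x ≤ 0) → f = 0) :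
    (0 : E) ∈ interior (convexHull ℝ S) := by
  have hne : S.Nonempty := by
    by_contra h
    obtain ⟨f, hf⟩ := exists_ne (0 : Module.Dual ℝ E)
    exact hf (hS f fun x hx => (h ⟨x, hx⟩).elim)
  have hspan : affineSpan ℝ S = ⊤ := by
    rw [AffineSubspace.affineSpan_eq_top_iff_vectorSpan_eq_top_of_nonempty ℝ _ _ hne]
    by_contra h
    obtain ⟨f, hf, hker⟩ := Submodule.exists_le_ker_of_lt_top _ (lt_top_iff_ne_top.2 h)
    obtain ⟨x₀, hx₀⟩ := hne
    have hconst : ∀ x ∈ S, f x = f x₀ := fun x hx => by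
      simpa [sub_eq_zero] using hker (vsub_mem_vectorSpan ℝ hx hx₀)
    rcases le_total (f x₀) 0 with h0 | h0
    · exact hf (hS f fun x hx => (hconst x hx).trans_le h0)
    · exact hf (neg_eq_zero.1 (hS (-f) fun x hx => by simpa [hconst x hx] using h0))
  have h_int := interior_convexHull_nonempty_iff_affineSpan_eq_top.2 hspan
  by_contra h0
  obtain ⟨f, hf, hle⟩ := exists_dual_le_of_notMem_interior (convex_convexHull ℝ S) h_int h0
  exact hf (hS f fun x hx => by simpa using hle x (subset_convexHull ℝ S hx))

lemma exists_pos_smul_mem_frontier {s : Set E}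
    (hs : Convex ℝ s) (hb : Bornology.IsBounded s) (h0 : s ∈ nhds 0) {w : E} (hw : w ≠ 0) :
    ∃ r : ℝ, 0 < r ∧ r • w ∈ frontier s := by
  have hpos : 0 < gauge s w :=
    (gauge_pos (absorbent_nhds_zero h0) (NormedSpace.isVonNBounded_iff ℝ |>.2 hb)).2 hw
  refine ⟨(gauge s w)⁻¹, inv_pos.2 hpos, (gauge_eq_one_iff_mem_frontier hs h0).1 ?_⟩
  rw [gauge_smul_of_nonneg (inv_pos.2 hpos).le, smul_eq_mul, inv_mul_cancel₀ hpos.ne']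

end Convexity

namespace IsLatticePoint

variable {n : ℕ} {x : Fin n → ℝ}

lemma zero : IsLatticePoint (0 : Fin n → ℝ) := fun _ => ⟨0, by simp⟩

lemma neg (hx : IsLatticePoint x) : IsLatticePoint (-x) := fun i => by
  obtain ⟨a, ha⟩ := hx i
  exact ⟨-a, by simp [ha]⟩

lemma single (i : Fin n) : IsLatticePoint (Pi.single i 1 : Fin n → ℝ) := fun j => by
  rcases eq_or_ne j i with rfl | h
  · exact ⟨1, by simp⟩
  · exact ⟨0, by simp [h]⟩

end IsLatticePoint

namespace IsLatticePolytope

variable {n : ℕ} {Q : Set (Fin n → ℝ)}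

lemma vertexSet_finite (hQ : IsLatticePolytope Q) : (vertexSet Q).Finite := by
  obtain ⟨⟨S, -, rfl⟩, -⟩ := hQ
  exact S.finite_toSet.subset extremePoints_convexHull_subset

lemma convexHull_vertexSet (hQ : IsLatticePolytope Q) : convexHull ℝ (vertexSet Q) = Q := by
  have hfin := hQ.vertexSet_finite
  obtain ⟨⟨S, -, rfl⟩, -⟩ := hQ
  have h := closure_convexHull_extremePoints (S.finite_toSet.isCompact_convexHull (𝕜 := ℝ))
    (convex_convexHull ℝ _)
  rwa [← vertexSet, (hfin.isCompact_convexHull (𝕜 := ℝ)).isClosed.closure_eq] at h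

lemma convex (hQ : IsLatticePolytope Q) : Convex ℝ Q :=
  hQ.convexHull_vertexSet ▸ convex_convexHull ℝ _

end IsLatticePolytope

section Lattice

variable {n : ℕ}

lemma exists_int_det {B : Matrix (Fin n) (Fin n) ℝ} (hB : ∀ i j, ∃ m : ℤ, B i j = m) :
    ∃ m : ℤ, B.det = m := by
  choose M hM using hB
  have hBM : B = (Int.castRingHom ℝ).mapMatrix (Matrix.of M) := by
    ext i j
    exact hM i j
  exact ⟨(Matrix.of M).det, by rw [hBM, ← RingHom.map_det]; rfl⟩

lemma abs_det_eq_one {b : Fin n → Fin n → ℝ} (hb : ∀ i, IsLatticePoint (b i))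
    (hspan : ∀ w, IsLatticePoint w → w ∈ Submodule.span ℤ (Set.range b)) :
    |(Matrix.of b).det| = 1 := by
  choose c hc using fun i =>
    Submodule.mem_span_range_iff_exists_fun ℤ |>.1 (hspan _ (IsLatticePoint.single i))
  have hmul : Matrix.of (fun i j => (c i j : ℝ)) * Matrix.of b = 1 := by
    ext i j
    have := congrFun (hc i) j
    simp only [Finset.sum_apply, zsmul_eq_mul] at this
    rw [Matrix.mul_apply, Matrix.one_apply, ← Pi.single_apply, ← Pi.single_comm]
    exact this
  obtain ⟨m, hm⟩ := exists_int_det (B := Matrix.of b) hb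
  obtain ⟨m', hm'⟩ := exists_int_det (B := Matrix.of fun i j => (c i j : ℝ)) fun i j => ⟨c i j, rfl⟩
  have hdet : m' * m = 1 := by
    have := congrArg Matrix.det hmul
    rw [Matrix.det_mul, Matrix.det_one, hm, hm'] at this
    exact_mod_cast this
  rw [hm, ← Int.cast_abs, Int.isUnit_iff_abs_eq.1 (IsUnit.of_mul_eq_one_right _ hdet), Int.cast_one]

lemma span_real_eq_top {S : Set (Fin n → ℝ)}
    (hspan : ∀ w, IsLatticePoint w → w ∈ Submodule.span ℤ S) : Submodule.span ℝ S = ⊤ := by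
  rw [eq_top_iff, ← (Pi.basisFun ℝ (Fin n)).span_eq, Submodule.span_le]
  rintro _ ⟨i, rfl⟩
  rw [Pi.basisFun_apply]
  exact Submodule.span_subset_span ℤ ℝ S (hspan _ (IsLatticePoint.single i))

lemma le_ncard_of_span_eq_top {S : Set (Fin n → ℝ)} (hfin : S.Finite)
    (hspan : Submodule.span ℝ S = ⊤) : n ≤ S.ncard := by
  have := hfin.fintype
  have := finrank_span_le_card (R := ℝ) S
  rwa [hspan, finrank_top, Module.finrank_fin_fun, ← Set.ncard_eq_toFinset_card'] at this

lemma isUnimodularBasis_of_span_int {S : Set (Fin n → ℝ)} (hfin : S.Finite) (hcard : S.ncard ≤ n)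
    (hS : ∀ x ∈ S, IsLatticePoint x)
    (hspan : ∀ w, IsLatticePoint w → w ∈ Submodule.span ℤ S) : IsUnimodularBasis S := by
  have hn : S.ncard = n := hcard.antisymm (le_ncard_of_span_eq_top hfin (span_real_eq_top hspan))
  obtain ⟨b, hb, rfl⟩ : ∃ b : Fin n → Fin n → ℝ, Function.Injective b ∧ Set.range b = S := by
    have := hfin.to_subtype
    let e := Finite.equivFinOfCardEq hn
    exact ⟨_, Subtype.val_injective.comp e.symm.injective, by
      rw [e.symm.surjective.range_comp, Subtype.range_coe]⟩
  exact ⟨b, hb, rfl, fun i => hS _ ⟨i, rfl⟩, abs_det_eq_one (fun i => hS _ ⟨i, rfl⟩) hspan⟩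

lemma IsUnimodularBasis.exists_dual {S : Set (Fin n → ℝ)} (hS : IsUnimodularBasis S)
    {x₀ : Fin n → ℝ} (hx₀ : x₀ ∈ S) :
    ∃ h : Module.Dual ℝ (Fin n → ℝ), h x₀ = 1 ∧ (∀ x ∈ S, x ≠ x₀ → h x = 0) ∧
      ∀ w, IsLatticePoint w → ∃ m : ℤ, h w = m := by
  obtain ⟨b, -, rfl, hlat, hdet⟩ := hS
  obtain ⟨i, rfl⟩ := hx₀
  have hd : (Matrix.of b).det ≠ 0 := fun h => by simp [h] at hdet
  have hcr : ∀ j, (Matrix.of b).transpose.cramer (b j) = Pi.single j (Matrix.of b).det :=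
    fun j => Matrix.cramer_transpose_row_self (Matrix.of b) j
  refine ⟨(Matrix.of b).det⁻¹ • (LinearMap.proj i ∘ₗ (Matrix.of b).transpose.cramer), ?_, ?_, ?_⟩
  · simp [hcr, hd]
  · rintro _ ⟨j, rfl⟩ hji
    have : i ≠ j := fun h => hji (h ▸ rfl)
    simp [hcr, this]
  · intro w hw
    obtain ⟨m, hm⟩ : ∃ m : ℤ, (Matrix.of b).transpose.cramer w i = m := by
      rw [Matrix.cramer_apply]
      refine exists_int_det fun k l => ?_
      rw [Matrix.updateCol_apply]
      split_ifs
      · exact hw k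
      · exact hlat l k
    rcases eq_or_eq_neg_of_abs_eq hdet with h | h
    · exact ⟨m, by simp [h, hm]⟩
    · exact ⟨-m, by simp [h, hm]⟩

lemma isFacetOf_of_span_eq_top {Q : Set (Fin n → ℝ)} {g : Module.Dual ℝ (Fin n → ℝ)}
    (hg : ∀ x ∈ Q, g x ≤ 1) (hne : {x ∈ Q | g x = 1}.Nonempty)
    (hspan : Submodule.span ℝ {x ∈ Q | g x = 1} = ⊤) : IsFacetOf {x ∈ Q | g x = 1} Q := by
  constructor
  · intro _
    refine ⟨LinearMap.toContinuousLinearMap g, Set.ext fun x => and_congr_right fun hx => ?_⟩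
    obtain ⟨x₀, hx₀, hgx₀⟩ := hne
    exact ⟨fun h y hy => (hg y hy).trans_eq h.symm,
      fun h => (hg x hx).antisymm (hgx₀ ▸ h x₀ hx₀)⟩
  · rw [finrank_vectorSpan_add_one hne fun x hx => hx.2, hspan, finrank_top,
      Module.finrank_fin_fun]

/-- For `n = 1` the empty set is a facet of every polytope. -/
lemma IsFacetOf.exists_dual (hn : n ≠ 1) {Q F : Set (Fin n → ℝ)}
    (h0 : (0 : Fin n → ℝ) ∈ interior Q) (hF : IsFacetOf F Q) :
    ∃ g : Module.Dual ℝ (Fin n → ℝ), (∀ x ∈ Q, g x ≤ 1) ∧ F = {x ∈ Q | g x = 1} ∧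
      Submodule.span ℝ F = ⊤ := by
  obtain ⟨hexp, hfr⟩ := hF
  have hne : F.Nonempty := by
    rw [Set.nonempty_iff_ne_empty]
    rintro rfl
    rw [vectorSpan_empty, finrank_bot] at hfr
    omega
  obtain ⟨l, rfl⟩ := hexp hne
  obtain ⟨x₀, hx₀Q, hmax⟩ := id hne
  have hl : (l : Module.Dual ℝ (Fin n → ℝ)) ≠ 0 := by
    intro hl
    have hlx : ∀ x, l x = 0 := LinearMap.congr_fun hl
    have hQ : {x ∈ Q | ∀ y ∈ Q, l y ≤ l x} = Q :=
      Set.sep_eq_self_iff_mem_true.2 fun x _ y _ => by rw [hlx, hlx]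
    have htop : affineSpan ℝ Q = ⊤ := top_unique <|
      (isOpen_interior.affineSpan_eq_top ⟨0, h0⟩).ge.trans (affineSpan_mono ℝ interior_subset)
    rw [hQ, ← direction_affineSpan, htop, AffineSubspace.direction_top, finrank_top,
      Module.finrank_fin_fun] at hfr
    omega
  have hpos : 0 < l x₀ := by simpa using apply_lt_of_mem_interior hl hmax h0
  have hF : {x ∈ Q | ∀ y ∈ Q, l y ≤ l x} = {x ∈ Q | ((l x₀)⁻¹ • l.toLinearMap) x = 1} := by
    refine Set.ext fun x => and_congr_right fun hx => ?_
    simp only [LinearMap.smul_apply, smul_eq_mul, inv_mul_eq_one₀ hpos.ne']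
    exact ⟨fun h => (h x₀ hx₀Q).antisymm (hmax x hx), fun h y hy => h ▸ hmax y hy⟩
  refine ⟨(l x₀)⁻¹ • l.toLinearMap, fun x hx => ?_, hF, ?_⟩
  · simpa [inv_mul_le_iff₀ hpos] using hmax x hx
  · refine Submodule.eq_top_of_finrank_eq ?_
    rw [Module.finrank_fin_fun]
    exact (finrank_vectorSpan_add_one hne (g := (l x₀)⁻¹ • l.toLinearMap)
      fun x hx => (hF ▸ hx :).2).symm.trans hfr

end Lattice

namespace IsSmoothFano

variable {n : ℕ} {Q : Set (Fin n → ℝ)}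

lemma apply_le_of_forall_vertexSet (hQ : IsSmoothFano Q) {g : Module.Dual ℝ (Fin n → ℝ)} {c : ℝ}
    (hg : ∀ x ∈ vertexSet Q, g x ≤ c) {x : Fin n → ℝ} (hx : x ∈ Q) : g x ≤ c :=
  apply_le_of_mem_convexHull hg (hQ.1.convexHull_vertexSet.symm ▸ hx)

lemma eq_zero_of_apply_nonpos (hQ : IsSmoothFano Q) {f : Module.Dual ℝ (Fin n → ℝ)}
    (hf : ∀ x ∈ vertexSet Q, f x ≤ 0) : f = 0 := by
  by_contra h
  simpa using apply_lt_of_mem_interior h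
    (fun x hx => hQ.apply_le_of_forall_vertexSet hf hx) hQ.2.1

lemma zero_notMem_vertexSet (hn : n ≠ 0) (hQ : IsSmoothFano Q) :
    (0 : Fin n → ℝ) ∉ vertexSet Q := by
  have : NeZero n := ⟨hn⟩
  exact Set.disjoint_left.1 (disjoint_interior_extremePoints Q) hQ.2.1

lemma exists_dual (hQ : IsSmoothFano Q) {g : Module.Dual ℝ (Fin n → ℝ)}
    (hg : ∀ x ∈ vertexSet Q, g x ≤ 1) (hspan : Submodule.span ℝ {x ∈ vertexSet Q | g x = 1} = ⊤)
    {x₀ : Fin n → ℝ} (hx₀ : x₀ ∈ vertexSet Q) (hgx₀ : g x₀ = 1) :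
    ∃ h : Module.Dual ℝ (Fin n → ℝ), h x₀ = 1 ∧
      (∀ x ∈ vertexSet Q, g x = 1 → x ≠ x₀ → h x = 0) ∧
      ∀ w, IsLatticePoint w → ∃ m : ℤ, h w = m := by
  have hsub : vertexSet Q ⊆ Q := extremePoints_subset
  have hF : IsFacetOf {x ∈ Q | g x = 1} Q :=
    isFacetOf_of_span_eq_top (fun x hx => hQ.apply_le_of_forall_vertexSet hg hx)
      ⟨x₀, hsub hx₀, hgx₀⟩
      (top_unique (hspan.ge.trans (Submodule.span_mono fun x hx => ⟨hsub hx.1, hx.2⟩)))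
  obtain ⟨h, h₁, h₀, h_int⟩ := (hQ.2.2 _ hF).exists_dual ⟨hx₀, hsub hx₀, hgx₀⟩
  exact ⟨h, h₁, fun x hx hgx hne => h₀ x ⟨hx, hsub hx, hgx⟩ hne, h_int⟩

end IsSmoothFano

/-- The combinatorial data of a smooth polytope: the points `x` are going to be the vertices and
the equations `u φ = 1` the facets of the convex hull of `x`. The conditions allow one to recognize
a smooth Fano polytope from a list of its vertices and facets. -/
structure IsFacetSystem {n : ℕ} {ι Φ : Type*} (x : ι → Fin n → ℝ)
    (u : Φ → Module.Dual ℝ (Fin n → ℝ)) : Prop where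
  two_le : 2 ≤ n
  isLatticePoint : ∀ k, IsLatticePoint (x k)
  apply_le_one : ∀ φ k, u φ (x k) ≤ 1
  ncard_le : ∀ φ, {k | u φ (x k) = 1}.ncard ≤ n
  mem_span : ∀ φ w, IsLatticePoint w → w ∈ Submodule.span ℤ (x '' {k | u φ (x k) = 1})
  exists_apply_eq_one : ∀ k, ∃ φ, u φ (x k) = 1
  exists_facet : ∀ g : Module.Dual ℝ (Fin n → ℝ), (∀ k, g (x k) ≤ 1) →
    ∃ φ, ∀ k, g (x k) = 1 → u φ (x k) = 1
  eq_zero_of_nonpos : ∀ f : Module.Dual ℝ (Fin n → ℝ), (∀ k, f (x k) ≤ 0) → f = 0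

namespace IsFacetSystem

variable {n : ℕ} {ι Φ : Type*} {x : ι → Fin n → ℝ} {u : Φ → Module.Dual ℝ (Fin n → ℝ)}

lemma span_eq_top (h : IsFacetSystem x u) (φ : Φ) :
    Submodule.span ℝ (x '' {k | u φ (x k) = 1}) = ⊤ :=
  span_real_eq_top (h.mem_span φ)

lemma eq_zero_of_facet (h : IsFacetSystem x u) {φ : Φ} {f : Module.Dual ℝ (Fin n → ℝ)}
    (hf : ∀ k, u φ (x k) = 1 → f (x k) = 0) : f = 0 :=
  LinearMap.ext_on (h.span_eq_top φ) (by rintro _ ⟨k, hk, rfl⟩; exact hf k hk)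

lemma exists_int_apply (h : IsFacetSystem x u) {φ : Φ} {f : Module.Dual ℝ (Fin n → ℝ)}
    (hf : ∀ k, u φ (x k) = 1 → ∃ m : ℤ, f (x k) = m) {w : Fin n → ℝ} (hw : IsLatticePoint w) :
    ∃ m : ℤ, f w = m := by
  have hle : Submodule.span ℤ (x '' {k | u φ (x k) = 1}) ≤
      (Submodule.span ℤ {(1 : ℝ)}).comap (f.restrictScalars ℤ) := by
    rw [Submodule.span_le]
    rintro _ ⟨k, hk, rfl⟩
    obtain ⟨m, hm⟩ := hf k hk
    exact Submodule.mem_span_singleton.2 ⟨m, by simp [hm]⟩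
  obtain ⟨m, hm⟩ := Submodule.mem_span_singleton.1 (hle (h.mem_span φ w hw))
  exact ⟨m, by simpa using hm.symm⟩

lemma exists_int_eq (h : IsFacetSystem x u) (φ : Φ) {w : Fin n → ℝ} (hw : IsLatticePoint w) :
    ∃ m : ℤ, u φ w = m :=
  h.exists_int_apply (φ := φ) (fun _ hk => ⟨1, by rw [hk, Int.cast_one]⟩) hw

lemma zero_mem_interior (h : IsFacetSystem x u) :
    (0 : Fin n → ℝ) ∈ interior (convexHull ℝ (Set.range x)) := by
  have : NeZero n := ⟨by have := h.two_le; omega⟩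
  exact zero_mem_interior_convexHull fun f hf => h.eq_zero_of_nonpos f fun k => hf _ ⟨k, rfl⟩

variable [Finite ι]

lemma isUnimodularBasis (h : IsFacetSystem x u) (φ : Φ) :
    IsUnimodularBasis (x '' {k | u φ (x k) = 1}) :=
  isUnimodularBasis_of_span_int (Set.toFinite _) ((Set.ncard_image_le).trans (h.ncard_le φ))
    (by rintro _ ⟨k, -, rfl⟩; exact h.isLatticePoint k) (h.mem_span φ)

lemma injOn (h : IsFacetSystem x u) (φ : Φ) : Set.InjOn x {k | u φ (x k) = 1} :=
  Set.injOn_of_ncard_image_eq <| (Set.ncard_image_le).antisymm <|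
    (h.ncard_le φ).trans (le_ncard_of_span_eq_top (Set.toFinite _) (h.span_eq_top φ))

lemma injective (h : IsFacetSystem x u) : Function.Injective x := fun k κ hx => by
  obtain ⟨φ, hφ⟩ := h.exists_apply_eq_one k
  exact h.injOn φ hφ (show u φ (x κ) = 1 from hx ▸ hφ) hx

lemma exists_dual (h : IsFacetSystem x u) {φ : Φ} {k : ι} (hk : u φ (x k) = 1) :
    ∃ f : Module.Dual ℝ (Fin n → ℝ), f (x k) = 1 ∧ ∀ κ ≠ k, u φ (x κ) = 1 → f (x κ) = 0 := by
  obtain ⟨f, h₁, h₀, -⟩ := (h.isUnimodularBasis φ).exists_dual ⟨k, hk, rfl⟩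
  exact ⟨f, h₁, fun κ hne hκ => h₀ _ ⟨κ, hκ, rfl⟩ (h.injective.ne hne)⟩

lemma isLatticePolytope (h : IsFacetSystem x u) :
    IsLatticePolytope (convexHull ℝ (Set.range x)) := by
  refine ⟨⟨(Set.finite_range x).toFinset, ?_, by simp⟩, ?_⟩
  · simpa using h.isLatticePoint
  · rw [affineSpan_convexHull]
    exact interior_convexHull_nonempty_iff_affineSpan_eq_top.1 ⟨0, h.zero_mem_interior⟩

lemma notMem_convexHull (h : IsFacetSystem x u) (k : ι) :
    x k ∉ convexHull ℝ (Set.range x \ {x k}) := by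
  intro hmem
  obtain ⟨φ, hφ⟩ := h.exists_apply_eq_one k
  obtain ⟨f, hfk, hf⟩ := h.exists_dual hφ
  have hface := mem_convexHull_of_apply_eq (g := u φ) (c := 1)
    (by rintro _ ⟨⟨κ, rfl⟩, -⟩; exact h.apply_le_one φ κ) hmem hφ
  have hle : f (x k) ≤ 0 := apply_le_of_mem_convexHull (fun y hy => by
    obtain ⟨⟨⟨κ, rfl⟩, hne⟩, hκ⟩ := hy
    exact (hf κ (fun h => hne (h ▸ rfl)) hκ).le) hface
  linarith

lemma vertexSet_eq (h : IsFacetSystem x u) :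
    vertexSet (convexHull ℝ (Set.range x)) = Set.range x := by
  have hsub : vertexSet (convexHull ℝ (Set.range x)) ⊆ Set.range x :=
    extremePoints_convexHull_subset
  refine hsub.antisymm ?_
  rintro _ ⟨k, rfl⟩
  by_contra hk
  have hmem : x k ∈ convexHull ℝ (vertexSet (convexHull ℝ (Set.range x))) := by
    rw [h.isLatticePolytope.convexHull_vertexSet]
    exact subset_convexHull ℝ _ ⟨k, rfl⟩
  exact h.notMem_convexHull k (convexHull_mono (Set.subset_sdiff_singleton hsub hk) hmem)

lemma ncard_vertexSet (h : IsFacetSystem x u) :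
    (vertexSet (convexHull ℝ (Set.range x))).ncard = Nat.card ι := by
  rw [h.vertexSet_eq, ← Nat.card_range_of_injective h.injective, Nat.card_coe_set_eq]

lemma isSmoothFano (h : IsFacetSystem x u) : IsSmoothFano (convexHull ℝ (Set.range x)) := by
  refine ⟨h.isLatticePolytope, h.zero_mem_interior, fun F hF => ?_⟩
  obtain ⟨g, hg, rfl, hspan⟩ := hF.exists_dual (by have := h.two_le; omega) h.zero_mem_interior
  have hgx : ∀ k, g (x k) ≤ 1 := fun k => hg _ (subset_convexHull ℝ _ ⟨k, rfl⟩)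
  obtain ⟨φ, hφ⟩ := h.exists_facet g hgx
  have hvert : Submodule.span ℝ {y ∈ Set.range x | g y = 1} = ⊤ := by
    refine top_unique (hspan.ge.trans (Submodule.span_le.2 fun y hy => ?_))
    exact convexHull_min Submodule.subset_span (Submodule.convex _)
      (mem_convexHull_of_apply_eq (Set.forall_mem_range.2 hgx) hy.1 hy.2)
  have hgu : g = u φ := LinearMap.ext_on hvert fun y hy => by
    obtain ⟨⟨k, rfl⟩, hk⟩ := hy
    rw [hk, hφ k hk]
  convert h.isUnimodularBasis φ using 1
  rw [h.vertexSet_eq, hgu]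
  ext y
  constructor
  · rintro ⟨⟨k, rfl⟩, -, hk⟩
    exact ⟨k, hk, rfl⟩
  · rintro ⟨k, hk, rfl⟩
    exact ⟨⟨k, rfl⟩, subset_convexHull ℝ _ ⟨k, rfl⟩, hk⟩

end IsFacetSystem

namespace IsFacetSystem

variable {n : ℕ} {ι Φ : Type*} {x : ι → Fin n → ℝ}
  {u : Φ → Module.Dual ℝ (Fin n → ℝ)}

lemma exists_pos_smul_mem_facet [Finite ι] (h : IsFacetSystem x u) {w : Fin n → ℝ} (hw : w ≠ 0) :
    ∃ φ, ∃ r : ℝ, 0 < r ∧ r • w ∈ convexHull ℝ (x '' {k | u φ (x k) = 1}) := by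
  have hcompact : IsCompact (convexHull ℝ (Set.range x)) :=
    (Set.finite_range x).isCompact_convexHull (𝕜 := ℝ)
  obtain ⟨r, hr, hmem⟩ := exists_pos_smul_mem_frontier (convex_convexHull ℝ _) hcompact.isBounded
    (mem_interior_iff_mem_nhds.1 h.zero_mem_interior) hw
  obtain ⟨f, hf0, hf⟩ := exists_dual_le_of_notMem_interior (convex_convexHull ℝ (Set.range x))
    ⟨0, h.zero_mem_interior⟩ hmem.2
  have hpos : 0 < f (r • w) := map_zero f ▸ apply_lt_of_mem_interior hf0 hf h.zero_mem_interior
  obtain ⟨φ, hφ⟩ := h.exists_facet ((f (r • w))⁻¹ • f) fun k => by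
    simpa only [LinearMap.smul_apply, smul_eq_mul, inv_mul_le_iff₀ hpos, mul_one] using
      hf (x k) (subset_convexHull ℝ _ ⟨k, rfl⟩)
  refine ⟨φ, r, hr, convexHull_mono ?_ (mem_convexHull_of_apply_eq (c := f (r • w))
    (fun y hy => hf y (subset_convexHull ℝ _ hy)) (hcompact.isClosed.frontier_subset hmem) rfl)⟩
  rintro _ ⟨⟨k, rfl⟩, hk⟩
  exact ⟨k, hφ k (by simp only [LinearMap.smul_apply, smul_eq_mul, hk, inv_mul_cancel₀ hpos.ne']),
    rfl⟩

variable [Fintype ι]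

lemma exists_intCoeff (h : IsFacetSystem x u) (φ : Φ) {w : Fin n → ℝ} (hw : IsLatticePoint w) :
    ∃ c : ι → ℤ, (∀ k, c k ≠ 0 → u φ (x k) = 1) ∧ ∑ k, c k • x k = w := by
  classical
  obtain ⟨c, hc, hcw⟩ := (Finsupp.mem_span_image_iff_linearCombination ℤ).1 (h.mem_span φ w hw)
  refine ⟨c, fun k hk => (Finsupp.mem_supported ℤ c).1 hc (Finsupp.mem_support_iff.2 hk), ?_⟩
  rw [← hcw, Finsupp.linearCombination_apply, Finsupp.sum_fintype _ _ (by simp)]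

/-- Coefficients of `w` in the cone over one facet of a facet system. -/
structure IsConeCoeff (x : ι → Fin n → ℝ) (u : Φ → Module.Dual ℝ (Fin n → ℝ)) (w : Fin n → ℝ)
    (φ : Φ) (c : ι → ℕ) : Prop where
  apply_eq_one : ∀ k, c k ≠ 0 → u φ (x k) = 1
  sum_smul : ∑ k, c k • x k = w

lemma exists_isConeCoeff (h : IsFacetSystem x u) {w : Fin n → ℝ} (hw : IsLatticePoint w) :
    ∃ φ c, IsConeCoeff x u w φ c := by
  rcases eq_or_ne w 0 with rfl | hw0
  · obtain ⟨φ, -⟩ := h.exists_facet 0 (by simp)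
    exact ⟨φ, 0, by simp, by simp⟩
  obtain ⟨φ, r, hr, hmem⟩ := h.exists_pos_smul_mem_facet hw0
  obtain ⟨c, hc, hcw⟩ := h.exists_intCoeff φ hw
  have hnonneg : ∀ k, 0 ≤ c k := fun k => by
    by_contra! hk
    obtain ⟨f, hfk, hf⟩ := h.exists_dual (hc k hk.ne)
    have hfw : f w = c k := by
      simp only [← hcw, map_sum, map_zsmul]
      rw [Fintype.sum_eq_single k fun κ hκ => ?_, hfk, zsmul_eq_mul, mul_one]
      by_cases h0 : c κ = 0
      · simp [h0]
      · simp [hf κ hκ (hc κ h0)]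
    have : (-f) (r • w) ≤ 0 := apply_le_of_mem_convexHull (by
      rintro _ ⟨κ, hκ, rfl⟩
      rcases eq_or_ne κ k with rfl | hne
      · simp [hfk]
      · simp [hf κ hne hκ]) hmem
    rw [LinearMap.neg_apply, map_smul, hfw, smul_eq_mul, neg_nonpos] at this
    exact hk.not_ge (by exact_mod_cast nonneg_of_mul_nonneg_right this hr)
  refine ⟨φ, fun k => (c k).toNat, fun k hk => hc k fun h0 => hk (by simp [h0]), ?_⟩
  rw [← hcw]
  exact Finset.sum_congr rfl fun k _ => by
    rw [← natCast_zsmul, Int.toNat_of_nonneg (hnonneg k)]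

lemma IsConeCoeff.apply_eq_sum {w : Fin n → ℝ} {φ : Φ} {c : ι → ℕ} (hc : IsConeCoeff x u w φ c) :
    u φ w = ∑ k, (c k : ℝ) := by
  rw [← hc.sum_smul, map_sum]
  refine Finset.sum_congr rfl fun k _ => ?_
  by_cases hk : c k = 0
  · simp [hk]
  · rw [map_nsmul, hc.apply_eq_one k hk, nsmul_one]

lemma IsConeCoeff.apply_pos {w : Fin n → ℝ} {φ : Φ} {c : ι → ℕ} (hc : IsConeCoeff x u w φ c)
    (hw : w ≠ 0) : 0 < u φ w := by
  obtain ⟨k, -, hk⟩ := Finset.exists_ne_zero_of_sum_ne_zero (hc.sum_smul.trans_ne hw)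
  rw [hc.apply_eq_sum]
  exact Finset.sum_pos' (fun κ _ => Nat.cast_nonneg (c κ))
    ⟨k, Finset.mem_univ k, Nat.cast_pos.2 (Nat.pos_of_ne_zero (left_ne_zero_of_smul hk))⟩

end IsFacetSystem

lemma IsFacetSystem.eq_zero_of_mem_interior {n : ℕ} {ι Φ : Type*} [Finite ι] {x : ι → Fin n → ℝ}
    {u : Φ → Module.Dual ℝ (Fin n → ℝ)} (h : IsFacetSystem x u) {w : Fin n → ℝ}
    (hw : IsLatticePoint w) (hmem : w ∈ interior (convexHull ℝ (Set.range x))) : w = 0 := by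
  have := Fintype.ofFinite ι
  by_contra hw0
  obtain ⟨φ, c, hc⟩ := h.exists_isConeCoeff hw
  have hpos := hc.apply_pos hw0
  have hφ : u φ ≠ 0 := fun h0 => hpos.ne' (by rw [h0, LinearMap.zero_apply])
  have hlt : u φ w < 1 := apply_lt_of_mem_interior hφ
    (fun y => apply_le_of_mem_convexHull (Set.forall_mem_range.2 (h.apply_le_one φ))) hmem
  obtain ⟨m, hm⟩ := h.exists_int_eq φ hw
  rw [hm] at hpos hlt
  norm_cast at hpos hlt
  omega

/-- The facet `g = 1` contains every point of the facet `f = 1` other than `x k`, so that the two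
facets share the ridge opposite to `x k`. -/
def IsAdjacentAt {n : ℕ} {ι : Type*} (x : ι → Fin n → ℝ) (f g : Module.Dual ℝ (Fin n → ℝ))
    (k : ι) : Prop :=
  ∀ κ ≠ k, f (x κ) = 1 → g (x κ) = 1

/-- The smooth Fano polytope `R` is obtained by adding the vertex `w` to the points `x`. -/
structure IsInsertion {n : ℕ} {ι : Type*} (x : ι → Fin n → ℝ) (w : Fin n → ℝ)
    (R : Set (Fin n → ℝ)) : Prop where
  isSmoothFano : IsSmoothFano R
  isLatticePoint : IsLatticePoint w
  notMem : w ∉ Set.range x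
  vertexSet_eq : vertexSet R = Set.range x ∪ {w}

namespace IsInsertion

variable {n : ℕ} {ι : Type*} {x : ι → Fin n → ℝ} {w : Fin n → ℝ} {R : Set (Fin n → ℝ)}

lemma mem_vertexSet (h : IsInsertion x w R) (k : ι) : x k ∈ vertexSet R :=
  h.vertexSet_eq ▸ .inl ⟨k, rfl⟩

lemma self_mem_vertexSet (h : IsInsertion x w R) : w ∈ vertexSet R :=
  h.vertexSet_eq ▸ .inr rfl

lemma forall_vertexSet (h : IsInsertion x w R) {p : (Fin n → ℝ) → Prop} :
    (∀ y ∈ vertexSet R, p y) ↔ (∀ k, p (x k)) ∧ p w := by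
  simp only [h.vertexSet_eq, Set.mem_union, Set.mem_singleton_iff, or_imp, forall_and,
    Set.forall_mem_range, forall_eq]

end IsInsertion

namespace IsFacetSystem

variable {n : ℕ} {ι Φ : Type*} {x : ι → Fin n → ℝ} {u : Φ → Module.Dual ℝ (Fin n → ℝ)}
  {φ ψ : Φ} {k : ι}

lemma smul_eq_smul_sub_of_ridge (h : IsFacetSystem x u) (hadj : IsAdjacentAt x (u φ) (u ψ) k)
    {f : Module.Dual ℝ (Fin n → ℝ)} (hf : ∀ κ ≠ k, u φ (x κ) = 1 → f (x κ) = 0) :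
    (1 - u ψ (x k)) • f = f (x k) • (u φ - u ψ) := by
  rw [← sub_eq_zero]
  refine h.eq_zero_of_facet (φ := φ) fun κ hκ => ?_
  rcases eq_or_ne κ k with rfl | hne
  · simp [hκ, mul_comm]
  · simp [hκ, hf κ hne hκ, hadj κ hne hκ]

variable {w : Fin n → ℝ} {R : Set (Fin n → ℝ)}

lemma le_zero_or_two_le (h : IsFacetSystem x u) (hR : IsInsertion x w R) (φ : Φ) :
    u φ w ≤ 0 ∨ 2 ≤ u φ w := by
  obtain ⟨m, hm⟩ := h.exists_int_eq φ hR.isLatticePoint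
  suffices m ≠ 1 by
    rw [hm]
    rcases Int.lt_or_gt_of_ne this with hlt | hgt
    · exact .inl (by exact_mod_cast Int.lt_add_one_iff.1 hlt)
    · exact .inr (by exact_mod_cast hgt)
  rintro rfl
  have hw : u φ w = 1 := by simpa using hm
  have hspan : Submodule.span ℝ {y ∈ vertexSet R | u φ y = 1} = ⊤ := by
    refine top_unique ((h.span_eq_top φ).ge.trans (Submodule.span_mono ?_))
    rintro _ ⟨k, hk, rfl⟩
    exact ⟨hR.mem_vertexSet k, hk⟩
  obtain ⟨f, hf₁, hf₀, -⟩ := hR.isSmoothFano.exists_dual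
    (hR.forall_vertexSet.2 ⟨h.apply_le_one φ, hw.le⟩) hspan hR.self_mem_vertexSet hw
  have : f = 0 := h.eq_zero_of_facet (φ := φ) fun k hk =>
    hf₀ _ (hR.mem_vertexSet k) hk fun hkw => hR.notMem ⟨k, hkw⟩
  simp [this] at hf₁

lemma ne_zero_of_isInsertion (h : IsFacetSystem x u) (hR : IsInsertion x w R) : w ≠ 0 := by
  rintro rfl
  have := h.two_le
  exact hR.isSmoothFano.zero_notMem_vertexSet (by omega) hR.self_mem_vertexSet

lemma nsmul_ne_add_sum [Finite ι] (h : IsFacetSystem x u) (hR : IsInsertion x w R)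
    {T : Finset ι} (hT : k ∉ T) {a : ℕ} {c : ι → ℕ} (hac : 1 + ∑ κ ∈ T, c κ ≤ a) :
    a • x k ≠ w + ∑ κ ∈ T, c κ • x κ := by
  intro heq
  have ha : (0 : ℝ) < a := Nat.cast_pos.2 (by omega)
  have hmem : ∀ κ, x κ ∈ R := fun κ => extremePoints_subset (hR.mem_vertexSet κ)
  have hn : n ≠ 0 := (zero_lt_two.trans_le h.two_le).ne'
  refine sum_smul_ne_of_mem_extremePoints hR.isSmoothFano.1.convex
    (interior_subset hR.isSmoothFano.2.1) (hR.mem_vertexSet k)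
    (ne_of_mem_of_not_mem (hR.mem_vertexSet k) (hR.isSmoothFano.zero_notMem_vertexSet hn))
    (T := T.insertNone) (c := fun o => (a : ℝ)⁻¹ * o.elim 1 fun κ => c κ) (p := fun o => o.elim w x)
    (fun o _ => mul_nonneg (inv_nonneg.2 ha.le) ?_) ?_ ?_ ?_ ?_
  · cases o <;> simp
  · rw [← Finset.mul_sum, Finset.sum_insertNone, inv_mul_le_iff₀ ha, mul_one]
    exact_mod_cast hac
  · rintro (_ | κ) -
    exacts [extremePoints_subset hR.self_mem_vertexSet, hmem κ]
  · rintro (_ | κ) hκ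
    · exact fun hwk => hR.notMem ⟨k, hwk.symm⟩
    · exact h.injective.ne (ne_of_mem_of_not_mem (Finset.some_mem_insertNone.1 hκ) hT)
  · simp only [mul_smul, ← Finset.smul_sum, Finset.sum_insertNone, Option.elim, one_smul,
      Nat.cast_smul_eq_nsmul, ← heq]
    rw [← Nat.cast_smul_eq_nsmul ℝ, inv_smul_smul₀ ha.ne']

lemma exists_dual_of_ridge (h : IsFacetSystem x u) (hadj : IsAdjacentAt x (u φ) (u ψ) k)
    (hφ : 1 < u φ w) (hψ : u ψ w < 1) :
    ∃ g : Module.Dual ℝ (Fin n → ℝ), (∀ κ, g (x κ) ≤ 1) ∧ g w = 1 ∧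
      ∀ κ ≠ k, u φ (x κ) = 1 → g (x κ) = 1 := by
  have hpos : 0 < u φ w - u ψ w := by linarith
  set a : ℝ := (1 - u ψ w) / (u φ w - u ψ w) with ha
  have ha0 : 0 ≤ a := div_nonneg (by linarith) hpos.le
  have ha1 : a ≤ 1 := (div_le_one hpos).2 (by linarith)
  refine ⟨a • u φ + (1 - a) • u ψ, fun κ => ?_, ?_, fun κ hne hκ => ?_⟩
  · simp only [LinearMap.add_apply, LinearMap.smul_apply, smul_eq_mul]
    nlinarith [h.apply_le_one φ κ, h.apply_le_one ψ κ]
  · simp only [ha, LinearMap.add_apply, LinearMap.smul_apply, smul_eq_mul]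
    field_simp
    ring
  · simp [hκ, hadj κ hne hκ]

/-- `N` is the value at `x k` of the coordinate of `w` on the facet of `R` spanned by `w` and the
common ridge. -/
lemma exists_int_mul_sub_eq (h : IsFacetSystem x u) (hR : IsInsertion x w R)
    (hadj : IsAdjacentAt x (u φ) (u ψ) k) (hk : u ψ (x k) ≠ 1) (hφ : 1 < u φ w) (hψ : u ψ w < 1) :
    ∃ N : ℤ, N * (u φ w - u ψ w) = 1 - u ψ (x k) := by
  obtain ⟨g, hgx, hgw, hridge⟩ := h.exists_dual_of_ridge hadj hφ hψ
  have hspan : Submodule.span ℝ {y ∈ vertexSet R | g y = 1} = ⊤ := by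
    refine span_eq_top_of_forall_dual fun f hf => ?_
    have hfg := h.smul_eq_smul_sub_of_ridge hadj fun κ hne hκ =>
      hf _ ⟨hR.mem_vertexSet κ, hridge κ hne hκ⟩
    have hfw := LinearMap.congr_fun hfg w
    rw [LinearMap.smul_apply, hf w ⟨hR.self_mem_vertexSet, hgw⟩, smul_zero, eq_comm] at hfw
    have hfk : f (x k) = 0 := (mul_eq_zero.1 hfw).resolve_right (sub_ne_zero.2 (hψ.trans hφ).ne')
    rw [hfk, zero_smul] at hfg
    exact (smul_eq_zero.1 hfg).resolve_left (sub_ne_zero.2 hk.symm)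
  obtain ⟨f, hf₁, hf₀, hf_int⟩ := hR.isSmoothFano.exists_dual
    (hR.forall_vertexSet.2 ⟨hgx, hgw.le⟩) hspan hR.self_mem_vertexSet hgw
  obtain ⟨N, hN⟩ := hf_int _ (h.isLatticePoint k)
  have hfg := h.smul_eq_smul_sub_of_ridge hadj fun κ hne hκ =>
    hf₀ _ (hR.mem_vertexSet κ) (hridge κ hne hκ) fun hκw => hR.notMem ⟨κ, hκw⟩
  have hfw := LinearMap.congr_fun hfg w
  simp only [LinearMap.smul_apply, hf₁, hN, smul_eq_mul, mul_one, LinearMap.sub_apply] at hfw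
  exact ⟨N, hfw.symm⟩

lemma two_le_of_isAdjacentAt (h : IsFacetSystem x u) (hR : IsInsertion x w R)
    (hadj : IsAdjacentAt x (u φ) (u ψ) k) (hk : u ψ (x k) = 0) (hφ : 2 ≤ u φ w) : 2 ≤ u ψ w := by
  refine (h.le_zero_or_two_le hR ψ).resolve_left fun hψ => ?_
  obtain ⟨N, hN⟩ := h.exists_int_mul_sub_eq hR hadj (by rw [hk]; exact zero_ne_one)
    (by linarith) (by linarith)
  obtain ⟨a, ha⟩ := h.exists_int_eq φ hR.isLatticePoint
  obtain ⟨b, hb⟩ := h.exists_int_eq ψ hR.isLatticePoint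
  rw [hk, sub_zero, ha, hb] at hN
  have hmul : N * (a - b) = 1 := by exact_mod_cast hN
  have ha2 : 2 ≤ a := by exact_mod_cast ha ▸ hφ
  have hb0 : b ≤ 0 := by exact_mod_cast hb ▸ hψ
  rcases Int.eq_one_or_neg_one_of_mul_eq_one (mul_comm N _ ▸ hmul) with h1 | h1 <;> omega

lemma IsConeCoeff.apply_eq_sub [Fintype ι] {c : ι → ℕ} (hc : IsConeCoeff x u w φ c)
    (hadj : IsAdjacentAt x (u φ) (u ψ) k) : u ψ w = u φ w - c k * (1 - u ψ (x k)) := by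
  have hsub : u φ w - u ψ w = ∑ κ, c κ * (u φ (x κ) - u ψ (x κ)) := by
    simp only [← hc.sum_smul, map_sum, map_nsmul]
    simp only [nsmul_eq_mul, mul_sub, Finset.sum_sub_distrib]
  have hzero : ∀ κ ≠ k, (c κ : ℝ) * (u φ (x κ) - u ψ (x κ)) = 0 := fun κ hne => by
    by_cases hκ : c κ = 0
    · simp [hκ]
    · simp [hc.apply_eq_one κ hκ, hadj κ hne (hc.apply_eq_one κ hκ)]
  rw [Fintype.sum_eq_single k hzero] at hsub
  by_cases hk : c k = 0
  · rw [hk, Nat.cast_zero, zero_mul] at hsub ⊢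
    linarith
  · rw [hc.apply_eq_one k hk] at hsub
    linarith

end IsFacetSystem

/-- The data of the linear relations between the vertices of the polytopes to be constructed. -/
structure RelationData where
  (p q k : ℕ)
  (α β : Fin k → ℕ)
  one_le_q : 1 ≤ q
  one_le_add : ∀ j, 1 ≤ α j + β j

/-- Labels of the vertices. -/
inductive RelationData.Vertex (D : RelationData) : Type
  | t : D.Vertex
  | z : D.Vertex
  | v (i : Fin (D.q + 1)) : D.Vertex
  | y (i : Fin (D.p + 1)) : D.Vertex
  | u (i : Fin (D.p + 1)) : D.Vertex
  | b (j : Fin D.k) (i : Fin (D.α j + D.β j + 1)) : D.Vertex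
  deriving DecidableEq

/-- The labels of the vertices, sorted by their kinds `t`, `z`, `v`, `y`, `u` and `b`. -/
def RelationData.vertexEquivSum (D : RelationData) :
    D.Vertex ≃ Unit ⊕ Unit ⊕ Fin (D.q + 1) ⊕ Fin (D.p + 1) ⊕ Fin (D.p + 1) ⊕
      Σ j, Fin (D.α j + D.β j + 1) where
  toFun
    | .t => .inl ()
    | .z => .inr (.inl ())
    | .v i => .inr (.inr (.inl i))
    | .y i => .inr (.inr (.inr (.inl i)))
    | .u i => .inr (.inr (.inr (.inr (.inl i))))
    | .b j i => .inr (.inr (.inr (.inr (.inr ⟨j, i⟩))))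
  invFun
    | .inl _ => .t
    | .inr (.inl _) => .z
    | .inr (.inr (.inl i)) => .v i
    | .inr (.inr (.inr (.inl i))) => .y i
    | .inr (.inr (.inr (.inr (.inl i)))) => .u i
    | .inr (.inr (.inr (.inr (.inr ⟨j, i⟩)))) => .b j i
  left_inv := by rintro (_ | _ | _ | _ | _ | _) <;> rfl
  right_inv := by rintro (_ | _ | _ | _ | _ | _) <;> rfl

instance (D : RelationData) : Fintype D.Vertex :=
  .ofEquiv _ D.vertexEquivSum.symm

/-- The relations `∑ v + ∑ y = (p + q + 1) t`, `∑ y = ∑ u + t`, `t + z = 0` and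
`∑ b j = α j • y 0 + β j • u 0` between the vertices. -/
structure RelationData.IsRelated (D : RelationData) {M : Type*} [AddCommGroup M]
    (x : D.Vertex → M) : Prop where
  sum_v_add_sum_y : ∑ i, x (.v i) + ∑ i, x (.y i) = (D.p + D.q + 1) • x .t
  sum_y : ∑ i, x (.y i) = ∑ i, x (.u i) + x .t
  t_add_z : x .t + x .z = 0
  sum_b : ∀ j, ∑ i, x (.b j i) = D.α j • x (.y 0) + D.β j • x (.u 0)

/-- The relations satisfied by the defects `d = 1 - r` of related scalars `r`, written without
subtraction. -/
structure RelationData.IsDefect (D : RelationData) {R : Type*} [CommSemiring R]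
    (d : D.Vertex → R) : Prop where
  sum_v_add_sum_y : ∑ i, d (.v i) + ∑ i, d (.y i) = 1 + (D.p + D.q + 1) * d .t
  sum_u_add_t : ∑ i, d (.u i) + d .t = ∑ i, d (.y i) + 1
  t_add_z : d .t + d .z = 2
  sum_b : ∀ j, ∑ i, d (.b j i) = 1 + D.α j * d (.y 0) + D.β j * d (.u 0)

namespace RelationData

variable {D : RelationData}

/-- The dimension of the polytopes to be constructed. -/
def dim (D : RelationData) : ℕ := D.q + 2 * (D.p + 1) + ∑ j, (D.α j + D.β j)

lemma card_vertex (D : RelationData) : Fintype.card D.Vertex = D.dim + (3 + D.k) := by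
  rw [Fintype.card_congr D.vertexEquivSum]
  simp only [Fintype.card_sum, Fintype.card_unit, Fintype.card_fin, Fintype.card_sigma,
    Finset.sum_add_distrib, Finset.sum_const, Finset.card_univ, smul_eq_mul, mul_one, dim]
  ring

lemma mem_of_sum_mem {M ι : Type*} [AddCommGroup M] [Fintype ι] {A : AddSubgroup M} {x : ι → M}
    {l : ι} (hx : ∀ i ≠ l, x i ∈ A) (hsum : ∑ i, x i ∈ A) (i : ι) : x i ∈ A := by
  classical
  rcases eq_or_ne i l with rfl | h
  · rw [← Finset.add_sum_erase _ _ (Finset.mem_univ i)] at hsum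
    exact (A.add_mem_cancel_right (A.sum_mem fun j hj => hx j (Finset.ne_of_mem_erase hj))).1 hsum
  · exact hx i h

lemma sum_one_sub {R : Type*} [CommRing R] {m : ℕ} (f : Fin m → R) :
    ∑ i, (1 - f i) = m - ∑ i, f i := by
  simp

namespace IsRelated

variable {M : Type*} [AddCommGroup M] {x : D.Vertex → M}

lemma map {N F : Type*} [AddCommGroup N] [FunLike F M N] [AddMonoidHomClass F M N]
    (hx : D.IsRelated x) (f : F) : D.IsRelated (f ∘ x) where
  sum_v_add_sum_y := by
    simpa only [Function.comp_apply, map_add, map_sum, map_nsmul] using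
      congrArg f hx.sum_v_add_sum_y
  sum_y := by simpa only [Function.comp_apply, map_add, map_sum] using congrArg f hx.sum_y
  t_add_z := by simpa only [Function.comp_apply, map_add, map_zero] using congrArg f hx.t_add_z
  sum_b j := by
    simpa only [Function.comp_apply, map_add, map_sum, map_nsmul] using congrArg f (hx.sum_b j)

lemma isDefect_one_sub {R : Type*} [CommRing R] {r : D.Vertex → R} (hr : D.IsRelated r) :
    D.IsDefect fun k => 1 - r k where
  sum_v_add_sum_y := by
    have := hr.sum_v_add_sum_y
    simp only [sum_one_sub, nsmul_eq_mul] at this ⊢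
    push_cast at this ⊢
    linear_combination -this
  sum_u_add_t := by
    simp only [sum_one_sub]
    linear_combination hr.sum_y
  t_add_z := by linear_combination -hr.t_add_z
  sum_b j := by
    have := hr.sum_b j
    simp only [sum_one_sub, nsmul_eq_mul] at this ⊢
    push_cast
    linear_combination -this

/-- As `t` belongs to `A`, so do the sums of the `v`, `y` and `u` as soon as one of them does. -/
lemma forall_mem (hx : D.IsRelated x) {A : AddSubgroup M} (ht : x .t ∈ A)
    (hsum : ∑ i, x (.y i) ∈ A) (hv : ∃ l, ∀ i ≠ l, x (.v i) ∈ A) (hy : ∃ l, ∀ i ≠ l, x (.y i) ∈ A)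
    (hu : ∃ l, ∀ i ≠ l, x (.u i) ∈ A) (hb : ∀ j, ∃ l, ∀ i ≠ l, x (.b j i) ∈ A) (k : D.Vertex) :
    x k ∈ A := by
  have hsumv : ∑ i, x (.v i) ∈ A :=
    (A.add_mem_cancel_right hsum).1 (hx.sum_v_add_sum_y ▸ A.nsmul_mem ht _)
  have hsumu : ∑ i, x (.u i) ∈ A := (A.add_mem_cancel_right ht).1 (hx.sum_y ▸ hsum)
  have hy' := mem_of_sum_mem hy.choose_spec hsum
  have hu' := mem_of_sum_mem hu.choose_spec hsumu
  cases k with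
  | t => exact ht
  | z => exact (A.add_mem_cancel_left ht).1 (hx.t_add_z ▸ A.zero_mem)
  | v i => exact mem_of_sum_mem hv.choose_spec hsumv i
  | y i => exact hy' i
  | u i => exact hu' i
  | b j i =>
    have hsumb : ∑ i, x (.b j i) ∈ A :=
      hx.sum_b j ▸ A.add_mem (A.nsmul_mem (hy' 0) _) (A.nsmul_mem (hu' 0) _)
    exact mem_of_sum_mem (x := fun i => x (.b j i)) (hb j).choose_spec hsumb i

lemma eq_zero_of_nonpos {r : D.Vertex → ℝ} (hr : D.IsRelated r) (h0 : ∀ k, r k ≤ 0) : r = 0 := by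
  have hsum : ∀ {m : ℕ} {f : Fin m → ℝ}, (∀ i, f i ≤ 0) → 0 ≤ ∑ i, f i → ∀ i, f i = 0 :=
    fun hf hs i => (Finset.sum_eq_zero_iff_of_nonpos fun i _ => hf i).1
      ((Finset.sum_nonpos fun i _ => hf i).antisymm hs) i (Finset.mem_univ i)
  have hvs : ∑ i, r (.v i) ≤ 0 := Finset.sum_nonpos fun i _ => h0 _
  have hys : ∑ i, r (.y i) ≤ 0 := Finset.sum_nonpos fun i _ => h0 _
  have ht : r .t = 0 := by linarith [hr.t_add_z, h0 .t, h0 .z]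
  have h₁ := hr.sum_v_add_sum_y
  have h₂ := hr.sum_y
  rw [ht, smul_zero] at h₁
  rw [ht, add_zero] at h₂
  have hy := hsum (fun i => h0 (.y i)) (by linarith)
  have hu := hsum (fun i => h0 (.u i)) (by linarith)
  funext k
  cases k with
  | t => exact ht
  | z => linarith [hr.t_add_z, show (0 : D.Vertex → ℝ) .z = 0 from rfl]
  | v i => exact hsum (fun i => h0 (.v i)) (by linarith) i
  | y i => exact hy i
  | u i => exact hu i
  | b j i =>
    refine hsum (fun i => h0 (.b j i)) ?_ i
    rw [hr.sum_b, hy, hu, smul_zero, smul_zero, add_zero]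

end IsRelated

namespace IsDefect

lemma natCast {R : Type*} [CommSemiring R] {d : D.Vertex → ℕ} (hd : D.IsDefect d) :
    D.IsDefect fun k => (d k : R) where
  sum_v_add_sum_y := mod_cast congrArg (Nat.cast (R := R)) hd.sum_v_add_sum_y
  sum_u_add_t := mod_cast congrArg (Nat.cast (R := R)) hd.sum_u_add_t
  t_add_z := mod_cast congrArg (Nat.cast (R := R)) hd.t_add_z
  sum_b j := mod_cast congrArg (Nat.cast (R := R)) (hd.sum_b j)

lemma isRelated_one_sub {R : Type*} [CommRing R] {d : D.Vertex → R} (hd : D.IsDefect d) :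
    D.IsRelated fun k => 1 - d k where
  sum_v_add_sum_y := by
    simp only [sum_one_sub, nsmul_eq_mul]
    push_cast
    linear_combination -hd.sum_v_add_sum_y
  sum_y := by
    simp only [sum_one_sub]
    linear_combination hd.sum_u_add_t
  t_add_z := by linear_combination -hd.t_add_z
  sum_b j := by
    simp only [sum_one_sub, nsmul_eq_mul]
    push_cast
    linear_combination -hd.sum_b j

end IsDefect

/-- The types of facets, named after the three labels `v`, `y`, `u`, `t`, `z` that are not among
their vertices. -/
inductive Core (D : RelationData) : Type
  | tzv (l : Fin (D.q + 1)) : D.Core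
  | zvu (l : Fin (D.q + 1)) (i : Fin (D.p + 1)) : D.Core
  | zyu (j i : Fin (D.p + 1)) : D.Core
  | tyv (j : Fin (D.p + 1)) (l : Fin (D.q + 1)) : D.Core
  | tyu (j i : Fin (D.p + 1)) : D.Core

/-- A facet: every block `b j` has a single label, `choice j`, that is not among its vertices. -/
structure Facet (D : RelationData) where
  core : D.Core
  choice : ∀ j, Fin (D.α j + D.β j + 1)

/-- The three labels `v`, `y`, `u`, `t`, `z` that are not among the vertices of the facet. -/
def Core.missing : D.Core → Fin 3 → D.Vertex
  | tzv l => ![.t, .z, .v l]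
  | zvu l i => ![.z, .v l, .u i]
  | zyu j i => ![.z, .y j, .u i]
  | tyv j l => ![.t, .y j, .v l]
  | tyu j i => ![.t, .y j, .u i]

namespace Core

/-- The value of `Facet.defect` at `t`. -/
def defectT : D.Core → ℕ
  | tzv _ => 1
  | zvu _ _ => 0
  | zyu _ _ => 0
  | tyv _ _ => 2
  | tyu _ _ => 2

/-- The value of `Facet.defect` at `z`. -/
def defectZ : D.Core → ℕ
  | tzv _ => 1
  | zvu _ _ => 2
  | zyu _ _ => 2
  | tyv _ _ => 0
  | tyu _ _ => 0

/-- The values of `Facet.defect` at the `v i`. -/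
def defectV : D.Core → Fin (D.q + 1) → ℕ
  | tzv l => Pi.single l (D.p + D.q + 2)
  | zvu l _ => Pi.single l 1
  | zyu _ _ => 0
  | tyv _ l => Pi.single l (2 * (D.p + D.q + 1))
  | tyu _ _ => 0

/-- The values of `Facet.defect` at the `y i`. -/
def defectY : D.Core → Fin (D.p + 1) → ℕ
  | tzv _ => 0
  | zvu _ _ => 0
  | zyu j _ => Pi.single j 1
  | tyv j _ => Pi.single j 1
  | tyu j _ => Pi.single j (2 * (D.p + D.q + 1) + 1)

/-- The values of `Facet.defect` at the `u i`. -/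
def defectU : D.Core → Fin (D.p + 1) → ℕ
  | tzv _ => 0
  | zvu _ i => Pi.single i 1
  | zyu _ i => Pi.single i 2
  | tyv _ _ => 0
  | tyu _ i => Pi.single i (2 * (D.p + D.q + 1))

end Core

namespace Facet

/-- The defect `1 - u F` of the vertices for a facet `F` with equation `u F = 1`. -/
def defect (F : D.Facet) : D.Vertex → ℕ
  | .t => F.core.defectT
  | .z => F.core.defectZ
  | .v i => F.core.defectV i
  | .y i => F.core.defectY i
  | .u i => F.core.defectU i
  | .b j i => if i = F.choice j then 1 + D.α j * F.core.defectY 0 + D.β j * F.core.defectU 0 else 0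

/-- The labels that are not vertices of a facet. -/
def missing (F : D.Facet) : Fin 3 ⊕ Fin D.k → D.Vertex :=
  Sum.elim F.core.missing fun j => .b j (F.choice j)

lemma isDefect_defect (F : D.Facet) : D.IsDefect F.defect where
  sum_v_add_sum_y := by
    rcases F with ⟨_ | _ | _ | _ | _, σ⟩ <;>
      simp only [defect, Core.defectT, Core.defectV, Core.defectY, Finset.sum_pi_single',
        Finset.mem_univ, if_true, Pi.zero_apply, Finset.sum_const_zero, Nat.cast_id] <;> ring
  sum_u_add_t := by
    rcases F with ⟨_ | _ | _ | _ | _, σ⟩ <;>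
      simp only [defect, Core.defectT, Core.defectU, Core.defectY, Finset.sum_pi_single',
        Finset.mem_univ, if_true, Pi.zero_apply, Finset.sum_const_zero] <;> ring
  t_add_z := by
    rcases F with ⟨_ | _ | _ | _ | _, σ⟩ <;> rfl
  sum_b j := by
    simp only [defect, Finset.sum_ite_eq', Finset.mem_univ, if_true, Nat.cast_id]

lemma defect_eq_zero_iff {F : D.Facet} {k : D.Vertex} :
    F.defect k = 0 ↔ k ∉ Set.range F.missing := by
  cases k with
  | b j i =>
    have hcore : ∀ a, F.core.missing a ≠ .b j i := by
      rcases F with ⟨_ | _ | _ | _ | _, σ⟩ <;> simp [Core.missing, Fin.forall_fin_succ]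
    simp only [defect, missing, Set.mem_range, Sum.exists, Sum.elim_inl, Sum.elim_inr, hcore,
      exists_false, false_or, Vertex.b.injEq]
    constructor
    · rintro h ⟨j', rfl, h'⟩
      simp [← eq_of_heq h'] at h
    · intro h
      rw [if_neg]
      rintro rfl
      exact h ⟨j, rfl, HEq.rfl⟩
  | _ =>
    rcases F with ⟨_ | _ | _ | _ | _, σ⟩ <;>
      simp [defect, missing, Core.missing, Core.defectT, Core.defectZ, Core.defectV, Core.defectY,
        Core.defectU, Pi.single_apply, eq_comm]

lemma missing_injective (F : D.Facet) : Function.Injective F.missing := by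
  refine Function.Injective.sumElim ?_ (fun j j' h => (Vertex.b.inj h).1) ?_ <;>
    rcases F with ⟨_ | _ | _ | _ | _, σ⟩ <;>
    simp [Core.missing, Function.Injective, Fin.forall_fin_succ]

lemma ncard_defect_eq_zero_le (F : D.Facet) : {k | F.defect k = 0}.ncard ≤ D.dim := by
  have hcompl : {k | F.defect k = 0} = (Set.range F.missing)ᶜ :=
    Set.ext fun _ => defect_eq_zero_iff
  have hcard := Set.ncard_add_ncard_compl (Set.range F.missing)
  rw [← hcompl, ← Nat.card_coe_set_eq (Set.range F.missing),
    Nat.card_range_of_injective F.missing_injective, Nat.card_eq_fintype_card, Fintype.card_sum,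
    Fintype.card_fin, Fintype.card_fin, Nat.card_eq_fintype_card, card_vertex] at hcard
  omega

lemma exists_defect_eq_zero (k : D.Vertex) : ∃ F : D.Facet, F.defect k = 0 := by
  cases k with
  | t => exact ⟨⟨.zvu 0 0, 0⟩, rfl⟩
  | z => exact ⟨⟨.tyv 0 0, 0⟩, rfl⟩
  | v i =>
    have : Nontrivial (Fin (D.q + 1)) :=
      Fin.nontrivial_iff_two_le.2 (Nat.add_le_add_right D.one_le_q 1)
    obtain ⟨l, hl⟩ := exists_ne i
    exact ⟨⟨.tzv l, 0⟩, Pi.single_eq_of_ne hl.symm _⟩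
  | y i => exact ⟨⟨.tzv 0, 0⟩, rfl⟩
  | u i => exact ⟨⟨.tzv 0, 0⟩, rfl⟩
  | b j i =>
    have : Nontrivial (Fin (D.α j + D.β j + 1)) :=
      Fin.nontrivial_iff_two_le.2 (Nat.add_le_add_right (D.one_le_add j) 1)
    obtain ⟨l, hl⟩ := exists_ne i
    exact ⟨⟨.tzv 0, Function.update 0 j l⟩, if_neg (by simpa using hl.symm)⟩

end Facet

lemma IsRelated.forall_mem_of_facet {M : Type*} [AddCommGroup M] {x : D.Vertex → M}
    (hx : D.IsRelated x) {A : AddSubgroup M} (F : D.Facet) (hF : ∀ k, F.defect k = 0 → x k ∈ A) :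
    ∀ k, x k ∈ A := by
  have hsum : ∀ {m : ℕ} {f : Fin m → M}, (∀ i, f i ∈ A) → ∑ i, f i ∈ A :=
    fun h => A.sum_mem fun i _ => h i
  have hv : ∃ l, ∀ i ≠ l, F.core.defectV i = 0 := by
    cases F.core <;> simp [Core.defectV, Pi.single_apply, ← imp_not_comm]
  have hy : ∃ l, ∀ i ≠ l, F.core.defectY i = 0 := by
    cases F.core <;> simp [Core.defectY, Pi.single_apply, ← imp_not_comm]
  have hu : ∃ l, ∀ i ≠ l, F.core.defectU i = 0 := by
    cases F.core <;> simp [Core.defectU, Pi.single_apply, ← imp_not_comm]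
  have ht : x .t ∈ A := by
    have hz : x .z ∈ A → x .t ∈ A := fun h =>
      (A.add_mem_cancel_right h).1 (hx.t_add_z ▸ A.zero_mem)
    rcases F with ⟨l | ⟨l, i⟩ | ⟨j, i⟩ | ⟨j, l⟩ | ⟨j, i⟩, σ⟩
    · exact (A.add_mem_cancel_left (hsum fun i => hF (.u i) rfl)).1
        (hx.sum_y ▸ hsum fun i => hF _ rfl)
    · exact hF _ rfl
    · exact hF _ rfl
    · exact hz (hF _ rfl)
    · exact hz (hF _ rfl)
  have hsumy : ∑ i, x (.y i) ∈ A := by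
    rcases F with ⟨l | ⟨l, i⟩ | ⟨j, i⟩ | ⟨j, l⟩ | ⟨j, i⟩, σ⟩
    · exact hsum fun i => hF _ rfl
    · exact hsum fun i => hF _ rfl
    · exact (A.add_mem_cancel_left (hsum fun i => hF (.v i) rfl)).1
        (hx.sum_v_add_sum_y ▸ A.nsmul_mem ht _)
    · exact hx.sum_y ▸ A.add_mem (hsum fun i => hF _ rfl) ht
    · exact (A.add_mem_cancel_left (hsum fun i => hF (.v i) rfl)).1
        (hx.sum_v_add_sum_y ▸ A.nsmul_mem ht _)
  exact hx.forall_mem ht hsumy (hv.imp fun _ h i hi => hF _ (h i hi))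
    (hy.imp fun _ h i hi => hF _ (h i hi)) (hu.imp fun _ h i hi => hF _ (h i hi))
    fun j => ⟨F.choice j, fun i hi => hF _ (if_neg hi)⟩

namespace IsDefect

variable {d : D.Vertex → ℝ}

lemma exists_core (hd : D.IsDefect d) (h0 : ∀ k, 0 ≤ d k) :
    ∃ F : D.Core, ∀ a, d (F.missing a) ≠ 0 := by
  have hpos : ∀ {m : ℕ} {f : Fin m → ℝ}, 0 < ∑ i, f i → ∃ i, f i ≠ 0 := fun hf => by
    obtain ⟨i, -, hi⟩ := Finset.exists_ne_zero_of_sum_ne_zero hf.ne'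
    exact ⟨i, hi⟩
  have hmul : 0 ≤ (D.p + D.q : ℝ) * d .t := mul_nonneg (by positivity) (h0 _)
  have hsumv := hd.sum_v_add_sum_y
  have hsumu := hd.sum_u_add_t
  have htz := hd.t_add_z
  by_cases hv : ∃ l, d (.v l) ≠ 0
  · obtain ⟨l, hl⟩ := hv
    rcases eq_or_ne (d .t) 0 with ht | ht
    · have hz : d .z ≠ 0 := by linarith
      obtain ⟨i, hi⟩ : ∃ i, d (.u i) ≠ 0 :=
        hpos (by linarith [Finset.sum_nonneg fun i (_ : i ∈ Finset.univ) => h0 (.y i)])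
      exact ⟨.zvu l i, by simp [Core.missing, Fin.forall_fin_succ, *]⟩
    rcases eq_or_ne (d .z) 0 with hz | hz
    · obtain ⟨j, hj⟩ : ∃ j, d (.y j) ≠ 0 :=
        hpos (by linarith [Finset.sum_nonneg fun i (_ : i ∈ Finset.univ) => h0 (.u i)])
      exact ⟨.tyv j l, by simp [Core.missing, Fin.forall_fin_succ, *]⟩
    · exact ⟨.tzv l, by simp [Core.missing, Fin.forall_fin_succ, *]⟩
  · push Not at hv
    rw [Finset.sum_eq_zero fun i _ => hv i] at hsumv
    obtain ⟨j, hj⟩ : ∃ j, d (.y j) ≠ 0 := hpos (by linarith [h0 .t])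
    obtain ⟨i, hi⟩ : ∃ i, d (.u i) ≠ 0 := hpos (by linarith)
    rcases eq_or_ne (d .z) 0 with hz | hz
    · have ht : d .t ≠ 0 := by linarith
      exact ⟨.tyu j i, by simp [Core.missing, Fin.forall_fin_succ, *]⟩
    · exact ⟨.zyu j i, by simp [Core.missing, Fin.forall_fin_succ, *]⟩

lemma exists_facet (hd : D.IsDefect d) (h0 : ∀ k, 0 ≤ d k) :
    ∃ F : D.Facet, ∀ k, d k = 0 → F.defect k = 0 := by
  obtain ⟨F, hF⟩ := hd.exists_core h0
  have hb : ∀ j, ∃ i, d (.b j i) ≠ 0 := fun j => by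
    by_contra! h
    have := hd.sum_b j
    have hy := h0 (.y 0)
    have hu := h0 (.u 0)
    rw [Finset.sum_eq_zero fun i _ => h i] at this
    exact this.not_lt (by positivity)
  choose σ hσ using hb
  refine ⟨⟨F, σ⟩, fun k hk => Facet.defect_eq_zero_iff.2 ?_⟩
  rintro ⟨a | j, rfl⟩
  · exact hF a hk
  · exact hσ j hk

end IsDefect

/-- Lattice points `x` that generate `ℤ^n` and whose linear relations are exactly those implied by
`IsRelated`. -/
structure IsRealization (D : RelationData) {n : ℕ} (x : D.Vertex → Fin n → ℝ) : Prop where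
  dim_eq : D.dim = n
  isLatticePoint : ∀ k, IsLatticePoint (x k)
  isRelated : D.IsRelated x
  mem_span : ∀ w, IsLatticePoint w → w ∈ Submodule.span ℤ (Set.range x)
  exists_dual : ∀ r : D.Vertex → ℝ, D.IsRelated r → ∃ f : Module.Dual ℝ (Fin n → ℝ), f ∘ x = r

namespace IsRealization

variable {n : ℕ} {x : D.Vertex → Fin n → ℝ}

/-- The linear form that is equal to one on the facet `F`. -/
noncomputable def facetDual (hx : D.IsRealization x) (F : D.Facet) : Module.Dual ℝ (Fin n → ℝ) :=
  (hx.exists_dual _ F.isDefect_defect.natCast.isRelated_one_sub).choose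

variable (hx : D.IsRealization x)
include hx

lemma facetDual_apply (F : D.Facet) (k : D.Vertex) : hx.facetDual F (x k) = 1 - F.defect k :=
  congrFun (hx.exists_dual _ F.isDefect_defect.natCast.isRelated_one_sub).choose_spec k

lemma facetDual_apply_eq_one_iff {F : D.Facet} {k : D.Vertex} :
    hx.facetDual F (x k) = 1 ↔ F.defect k = 0 := by
  rw [facetDual_apply, sub_eq_self, Nat.cast_eq_zero]

lemma isFacetSystem : IsFacetSystem x hx.facetDual where
  two_le := by
    rw [← hx.dim_eq, dim]
    omega
  isLatticePoint := hx.isLatticePoint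
  apply_le_one F k := by
    rw [facetDual_apply]
    exact sub_le_self 1 (Nat.cast_nonneg _)
  ncard_le F := by
    simp only [facetDual_apply_eq_one_iff, ← hx.dim_eq, F.ncard_defect_eq_zero_le]
  mem_span F w hw := by
    refine Submodule.span_le.2 ?_ (hx.mem_span w hw)
    rintro _ ⟨k, rfl⟩
    exact hx.isRelated.forall_mem_of_facet
      (A := (Submodule.span ℤ (x '' {k | hx.facetDual F (x k) = 1})).toAddSubgroup) F
      (fun κ hκ => Submodule.subset_span ⟨κ, hx.facetDual_apply_eq_one_iff.2 hκ, rfl⟩) k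
  exists_apply_eq_one k := by
    simp only [facetDual_apply_eq_one_iff, Facet.exists_defect_eq_zero]
  exists_facet g hg := by
    obtain ⟨F, hF⟩ := (hx.isRelated.map g).isDefect_one_sub.exists_facet fun k =>
      sub_nonneg.2 (hg k)
    exact ⟨F, fun k hk => hx.facetDual_apply_eq_one_iff.2 (hF k (sub_eq_zero.2 hk.symm))⟩
  eq_zero_of_nonpos f hf := by
    have hfx := (hx.isRelated.map f).eq_zero_of_nonpos hf
    have htop : Submodule.span ℝ (Set.range x) = ⊤ := span_real_eq_top hx.mem_span
    exact LinearMap.ext_on htop (by rintro _ ⟨k, rfl⟩; exact congrFun hfx k)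

end IsRealization

end RelationData

/-- The smooth Fano polytope `R` is obtained by deleting the vertex `x k₀` from the points `x`. -/
structure IsDeletion {n : ℕ} {ι : Type*} (x : ι → Fin n → ℝ) (k₀ : ι) (R : Set (Fin n → ℝ)) :
    Prop where
  isSmoothFano : IsSmoothFano R
  vertexSet_eq : vertexSet R = x '' {k₀}ᶜ

namespace RelationData

variable {D : RelationData}

/-- The family on the labels with the given values. -/
def Vertex.elim {M : Type*} (t z : M) (v : Fin (D.q + 1) → M) (y u : Fin (D.p + 1) → M)
    (b : ∀ j, Fin (D.α j + D.β j + 1) → M) : D.Vertex → M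
  | .t => t
  | .z => z
  | .v i => v i
  | .y i => y i
  | .u i => u i
  | .b j i => b j i

lemma single_apply_nonneg {ι : Type*} [DecidableEq ι] {a : ℝ} (ha : 0 ≤ a) (l i : ι) :
    0 ≤ (Pi.single l a : ι → ℝ) i :=
  (Pi.single_nonneg.2 ha : (0 : ι → ℝ) ≤ Pi.single l a) i

namespace IsRealization

variable {n : ℕ} {x : D.Vertex → Fin n → ℝ} {R : Set (Fin n → ℝ)} {k₀ k₁ : D.Vertex}

lemma eq_zero_of_isDeletion (hx : D.IsRealization x) (hR : IsDeletion x k₀ R) {r : D.Vertex → ℝ}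
    (hr : D.IsRelated r) (h0 : ∀ k ≠ k₀, 0 ≤ r k) : r = 0 := by
  obtain ⟨f, rfl⟩ := hx.exists_dual r hr
  have hf : -f = 0 := hR.isSmoothFano.eq_zero_of_apply_nonpos fun p hp => by
    obtain ⟨k, hk, rfl⟩ := hR.vertexSet_eq ▸ hp
    exact neg_nonpos.2 (h0 k hk)
  rw [neg_eq_zero.1 hf]
  rfl

lemma exists_isRelated_of_isDeletion (hx : D.IsRealization x) (hR : IsDeletion x k₀ R)
    {d : D.Vertex → ℝ} (hd : D.IsDefect d) (h0 : ∀ k ≠ k₀, 0 ≤ d k)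
    (hdet : ∀ r : D.Vertex → ℝ, D.IsRelated r → (∀ k ≠ k₀, d k = 0 → r k = 0) → ∀ k, r k = 0)
    (hk₁ : k₁ ≠ k₀) (hd₁ : d k₁ = 0) :
    ∃ r : D.Vertex → ℝ, D.IsRelated r ∧ r k₁ = 1 ∧
      (∀ k ≠ k₀, d k = 0 → k ≠ k₁ → r k = 0) ∧ ∀ k, ∃ m : ℤ, r k = m := by
  obtain ⟨g, hg⟩ := hx.exists_dual _ hd.isRelated_one_sub
  replace hg : ∀ k, g (x k) = 1 - d k := congrFun hg
  have hmem : ∀ k ≠ k₀, x k ∈ vertexSet R := fun k hk => hR.vertexSet_eq ▸ ⟨k, hk, rfl⟩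
  have hg1 : ∀ k, d k = 0 → g (x k) = 1 := fun k hk => by rw [hg, hk, sub_zero]
  have hle : ∀ p ∈ vertexSet R, g p ≤ 1 := fun p hp => by
    obtain ⟨k, hk, rfl⟩ := hR.vertexSet_eq ▸ hp
    exact (hg k).trans_le (sub_le_self 1 (h0 k hk))
  have hspan : Submodule.span ℝ {p ∈ vertexSet R | g p = 1} = ⊤ := by
    refine span_eq_top_of_forall_dual fun f hf => hx.isFacetSystem.eq_zero_of_nonpos f fun k => ?_
    exact (hdet _ (hx.isRelated.map f) (fun k hk hdk => hf _ ⟨hmem k hk, hg1 k hdk⟩) k).le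
  obtain ⟨f, hf₁, hf₀, hf_int⟩ :=
    hR.isSmoothFano.exists_dual hle hspan (hmem k₁ hk₁) (hg1 k₁ hd₁)
  exact ⟨f ∘ x, hx.isRelated.map f, hf₁,
    fun k hk hdk hne => hf₀ _ (hmem k hk) (hg1 k hdk) (hx.isFacetSystem.injective.ne hne),
    fun k => hf_int _ (hx.isLatticePoint k)⟩

lemma not_isDeletion_of_exchange (hx : D.IsRealization x) (hne : k₁ ≠ k₀)
    (hr : D.IsRelated (Pi.single k₁ 1 - Pi.single k₀ 1 : D.Vertex → ℝ)) : ¬IsDeletion x k₀ R := by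
  intro hR
  have h := congrFun (hx.eq_zero_of_isDeletion hR hr fun k hk => ?_) k₁
  · simp [hne] at h
  · rw [Pi.sub_apply, Pi.single_eq_of_ne hk, sub_zero]
    exact single_apply_nonneg zero_le_one k₁ k

lemma not_isDeletion_v (hx : D.IsRealization x) (i : Fin (D.q + 1)) : ¬IsDeletion x (.v i) R := by
  have : Nontrivial (Fin (D.q + 1)) :=
    Fin.nontrivial_iff_two_le.2 (Nat.add_le_add_right D.one_le_q 1)
  obtain ⟨l, hl⟩ := exists_ne i
  refine hx.not_isDeletion_of_exchange (k₁ := .v l) (by simpa) ⟨?_, ?_, ?_, fun j => ?_⟩ <;>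
    simp [Pi.single_apply]

lemma not_isDeletion_b (hx : D.IsRealization x) (j : Fin D.k) (i : Fin (D.α j + D.β j + 1)) :
    ¬IsDeletion x (.b j i) R := by
  have : Nontrivial (Fin (D.α j + D.β j + 1)) :=
    Fin.nontrivial_iff_two_le.2 (Nat.add_le_add_right (D.one_le_add j) 1)
  obtain ⟨l, hl⟩ := exists_ne i
  refine hx.not_isDeletion_of_exchange (k₁ := .b j l) (by simpa)
    ⟨by simp, by simp, by simp, fun j' => ?_⟩
  rcases eq_or_ne j' j with rfl | h
  · simp [Pi.single_apply]
  · simp [h]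

lemma not_isDeletion_y_of_eq_zero (hx : D.IsRealization x) (hp : 1 ≤ D.p) (hk : D.k = 0)
    (i : Fin (D.p + 1)) : ¬IsDeletion x (.y i) R := by
  have : Nontrivial (Fin (D.p + 1)) := Fin.nontrivial_iff_two_le.2 (Nat.add_le_add_right hp 1)
  have : IsEmpty (Fin D.k) := hk ▸ Fin.isEmpty
  obtain ⟨l, hl⟩ := exists_ne i
  refine hx.not_isDeletion_of_exchange (k₁ := .y l) (by simpa) ⟨?_, ?_, ?_, isEmptyElim⟩ <;>
    simp [Pi.single_apply]

lemma not_isDeletion_u_of_eq_zero (hx : D.IsRealization x) (hp : 1 ≤ D.p) (hk : D.k = 0)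
    (i : Fin (D.p + 1)) : ¬IsDeletion x (.u i) R := by
  have : Nontrivial (Fin (D.p + 1)) := Fin.nontrivial_iff_two_le.2 (Nat.add_le_add_right hp 1)
  have : IsEmpty (Fin D.k) := hk ▸ Fin.isEmpty
  obtain ⟨l, hl⟩ := exists_ne i
  refine hx.not_isDeletion_of_exchange (k₁ := .u l) (by simpa) ⟨?_, ?_, ?_, isEmptyElim⟩ <;>
    simp [Pi.single_apply]

lemma not_isDeletion_z (hx : D.IsRealization x) : ¬IsDeletion x .z R := by
  intro hR
  have hr : D.IsRelated (Vertex.elim (1 : ℝ) (-1) (Pi.single 0 (D.p + D.q)) (Pi.single 0 1) 0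
      fun j => Pi.single 0 (D.α j)) :=
    ⟨by simp [Vertex.elim], by simp [Vertex.elim], by simp [Vertex.elim], by simp [Vertex.elim]⟩
  refine one_ne_zero (congrFun (hx.eq_zero_of_isDeletion hR hr fun k hk => ?_) .t)
  cases k with
  | t => exact zero_le_one
  | z => exact absurd rfl hk
  | v i => exact single_apply_nonneg (by positivity) 0 i
  | y i => exact single_apply_nonneg zero_le_one 0 i
  | u i => exact le_rfl
  | b j i => exact single_apply_nonneg (by positivity) 0 i

lemma exists_isRelated_of_isDeletion_t (hx : D.IsRealization x) (hR : IsDeletion x .t R) :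
    ∃ r : D.Vertex → ℝ, D.IsRelated r ∧ r (.v 0) = 1 ∧ (∀ i ≠ 0, r (.v i) = 0) ∧
      (∀ i, r (.y i) = 0) ∧ ∃ m : ℤ, r .t = m := by
  set c : ℝ := D.p + D.q + 1 with hc
  have hc0 : 0 < c := by positivity
  set d : D.Vertex → ℝ := Vertex.elim (-c⁻¹) (2 + c⁻¹) 0 0 (Pi.single 0 (1 + c⁻¹))
    fun j => Pi.single 0 (1 + D.β j * (1 + c⁻¹)) with hd_def
  have hd : D.IsDefect d :=
    ⟨by simp [hd_def, Vertex.elim, ← hc, hc0.ne'], by simp [hd_def, Vertex.elim],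
      by simp [hd_def, Vertex.elim], by simp [hd_def, Vertex.elim]⟩
  have h0 : ∀ k ≠ .t, 0 ≤ d k := by
    intro k hk
    cases k with
    | t => exact absurd rfl hk
    | z => exact add_nonneg zero_le_two (inv_nonneg.2 hc0.le)
    | v i => exact le_rfl
    | y i => exact le_rfl
    | u i => exact single_apply_nonneg (by positivity) 0 i
    | b j i => exact single_apply_nonneg (by positivity) 0 i
  have hdet : ∀ r : D.Vertex → ℝ, D.IsRelated r → (∀ k ≠ .t, d k = 0 → r k = 0) →
      ∀ k, r k = 0 := by
    intro r hr h
    have hv : ∀ i, r (.v i) = 0 := fun i => h _ (by simp) rfl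
    have hy : ∀ i, r (.y i) = 0 := fun i => h _ (by simp) rfl
    have ht : r .t = 0 := by
      have hsum := hr.sum_v_add_sum_y
      simp only [hv, hy, Finset.sum_const_zero, add_zero] at hsum
      exact (smul_eq_zero.1 hsum.symm).resolve_left (Nat.succ_ne_zero _)
    exact hr.forall_mem (A := ⊥) ht (by simp [hy]) ⟨0, fun i _ => hv i⟩ ⟨0, fun i _ => hy i⟩
      ⟨0, fun i hi => h _ (by simp) (Pi.single_eq_of_ne hi _)⟩
      fun j => ⟨0, fun i hi => h _ (by simp) (Pi.single_eq_of_ne hi _)⟩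
  obtain ⟨r, hr, hr₁, hr₀, hr_int⟩ := hx.exists_isRelated_of_isDeletion hR hd h0 hdet
    (k₁ := .v 0) (by simp) rfl
  exact ⟨r, hr, hr₁, fun i hi => hr₀ _ (by simp) rfl (by simpa),
    fun i => hr₀ _ (by simp) rfl (by simp), hr_int .t⟩

/-- Without `t`, the points `v i` and `y i` would lie on a facet, and `t` would have the coordinate
`1 / (p + q + 1)` with respect to `v 0`. -/
lemma not_isDeletion_t (hx : D.IsRealization x) : ¬IsDeletion x .t R := by
  intro hR
  obtain ⟨r, hr, hv₀, hv, hy, m, hm⟩ := hx.exists_isRelated_of_isDeletion_t hR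
  have hsum := hr.sum_v_add_sum_y
  rw [Fintype.sum_eq_single 0 hv, Fintype.sum_eq_zero _ hy, hv₀, hm, add_zero,
    nsmul_eq_mul] at hsum
  have hmul : ((D.p + D.q + 1 : ℕ) : ℤ) * m = 1 := by exact_mod_cast hsum.symm
  have := D.one_le_q
  rcases Int.eq_one_or_neg_one_of_mul_eq_one hmul with h | h <;> omega

lemma exists_isRelated_of_isDeletion_y (hx : D.IsRealization x) (hp : D.p = 0)
    (hα : ∀ j, D.α j ≤ 1) (hR : IsDeletion x (.y 0) R) :
    ∃ r : D.Vertex → ℝ, D.IsRelated r ∧ r .t = 1 ∧ (∀ i, r (.u i) = 0) ∧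
      ∀ j, D.α j = 1 → ∀ i, r (.b j i) = 0 := by
  have : Subsingleton (Fin (D.p + 1)) := hp ▸ Fin.subsingleton_one
  set d : D.Vertex → ℝ := Vertex.elim 0 2 (Pi.single 0 2) (-1) 0
    fun j => Pi.single 0 (1 - (D.α j : ℝ)) with hd_def
  have hd : D.IsDefect d :=
    ⟨by simp [hd_def, Vertex.elim, hp]; norm_num, by simp [hd_def, Vertex.elim, hp],
      by simp [hd_def, Vertex.elim], by simp [hd_def, Vertex.elim, ← sub_eq_add_neg]⟩
  have h0 : ∀ k ≠ .y 0, 0 ≤ d k := by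
    intro k hk
    cases k with
    | t => exact le_rfl
    | z => exact zero_le_two
    | v i => exact single_apply_nonneg (by positivity) 0 i
    | y i => exact absurd (congrArg _ (Subsingleton.elim _ _)) hk
    | u i => exact le_rfl
    | b j i => exact single_apply_nonneg (sub_nonneg.2 (Nat.cast_le_one.2 (hα j))) 0 i
  have hdet : ∀ r : D.Vertex → ℝ, D.IsRelated r → (∀ k ≠ .y 0, d k = 0 → r k = 0) →
      ∀ k, r k = 0 := by
    intro r hr h
    have ht : r .t = 0 := h _ (by simp) rfl
    have hu : ∀ i, r (.u i) = 0 := fun i => h _ (by simp) rfl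
    exact hr.forall_mem (A := ⊥) ht (by simp [hr.sum_y, hu, ht])
      ⟨0, fun i hi => h _ (by simp) (Pi.single_eq_of_ne hi _)⟩
      ⟨0, fun i hi => absurd (Subsingleton.elim i 0) hi⟩ ⟨0, fun i _ => hu i⟩
      fun j => ⟨0, fun i hi => h _ (by simp) (Pi.single_eq_of_ne hi _)⟩
  obtain ⟨r, hr, hr₁, hr₀, -⟩ := hx.exists_isRelated_of_isDeletion hR hd h0 hdet
    (k₁ := .t) (by simp) rfl
  exact ⟨r, hr, hr₁, fun i => hr₀ _ (by simp) rfl (by simp),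
    fun j hj i => hr₀ _ (by simp) (by simp [hd_def, Vertex.elim, hj]) (by simp)⟩

/-- Without `y 0`, the points `t`, `u 0` and `b j₀ i` would lie on a common facet, contradicting
the relation `∑ b j₀ = t + (β j₀ + 1) u 0`. -/
lemma not_isDeletion_y (hx : D.IsRealization x) (hp : D.p = 0) (hα : ∀ j, D.α j ≤ 1)
    {j₀ : Fin D.k} (hj₀ : D.α j₀ = 1) (i : Fin (D.p + 1)) : ¬IsDeletion x (.y i) R := by
  have : Subsingleton (Fin (D.p + 1)) := hp ▸ Fin.subsingleton_one
  obtain rfl : 0 = i := Subsingleton.elim _ _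
  intro hR
  obtain ⟨r, hr, ht, hu, hb₀⟩ := hx.exists_isRelated_of_isDeletion_y hp hα hR
  have hb := hr.sum_b j₀
  rw [Fintype.sum_eq_zero _ (hb₀ j₀ hj₀), hu, hj₀, one_smul, smul_zero, add_zero] at hb
  have hy := hr.sum_y
  rw [Fintype.sum_subsingleton _ 0, Fintype.sum_subsingleton _ 0, ← hb, hu, ht, zero_add] at hy
  exact zero_ne_one hy

lemma exists_isRelated_of_isDeletion_u (hx : D.IsRealization x) (hp : D.p = 0)
    (hβ : ∀ j, D.β j ≤ 1) (hR : IsDeletion x (.u 0) R) :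
    ∃ r : D.Vertex → ℝ, D.IsRelated r ∧ r .z = 1 ∧ (∀ i, r (.y i) = 0) ∧
      ∀ j, D.β j = 1 → ∀ i, r (.b j i) = 0 := by
  have : Subsingleton (Fin (D.p + 1)) := hp ▸ Fin.subsingleton_one
  set d : D.Vertex → ℝ := Vertex.elim 2 0 (Pi.single 0 (1 + (D.p + D.q + 1) * 2)) 0 (-1)
    fun j => Pi.single 0 (1 - (D.β j : ℝ)) with hd_def
  have hd : D.IsDefect d :=
    ⟨by simp [hd_def, Vertex.elim], by simp [hd_def, Vertex.elim, hp]; norm_num,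
      by simp [hd_def, Vertex.elim], by simp [hd_def, Vertex.elim, ← sub_eq_add_neg]⟩
  have h0 : ∀ k ≠ .u 0, 0 ≤ d k := by
    intro k hk
    cases k with
    | t => exact zero_le_two
    | z => exact le_rfl
    | v i => exact single_apply_nonneg (by positivity) 0 i
    | y i => exact le_rfl
    | u i => exact absurd (congrArg _ (Subsingleton.elim _ _)) hk
    | b j i => exact single_apply_nonneg (sub_nonneg.2 (Nat.cast_le_one.2 (hβ j))) 0 i
  have hdet : ∀ r : D.Vertex → ℝ, D.IsRelated r → (∀ k ≠ .u 0, d k = 0 → r k = 0) →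
      ∀ k, r k = 0 := by
    intro r hr h
    have hy : ∀ i, r (.y i) = 0 := fun i => h _ (by simp) rfl
    have ht : r .t = 0 := by rw [← hr.t_add_z, h .z (by simp) rfl, add_zero]
    exact hr.forall_mem (A := ⊥) ht (by simp [hy])
      ⟨0, fun i hi => h _ (by simp) (Pi.single_eq_of_ne hi _)⟩ ⟨0, fun i _ => hy i⟩
      ⟨0, fun i hi => absurd (Subsingleton.elim i 0) hi⟩
      fun j => ⟨0, fun i hi => h _ (by simp) (Pi.single_eq_of_ne hi _)⟩
  obtain ⟨r, hr, hr₁, hr₀, -⟩ := hx.exists_isRelated_of_isDeletion hR hd h0 hdet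
    (k₁ := .z) (by simp) rfl
  exact ⟨r, hr, hr₁, fun i => hr₀ _ (by simp) rfl (by simp),
    fun j hj i => hr₀ _ (by simp) (by simp [hd_def, Vertex.elim, hj]) (by simp)⟩

/-- Without `u 0`, the points `z`, `y 0` and `b j₀ i` would lie on a common facet, contradicting
the relation `∑ b j₀ = (α j₀ + 1) y 0 + z`. -/
lemma not_isDeletion_u (hx : D.IsRealization x) (hp : D.p = 0) (hβ : ∀ j, D.β j ≤ 1)
    {j₀ : Fin D.k} (hj₀ : D.β j₀ = 1) (i : Fin (D.p + 1)) : ¬IsDeletion x (.u i) R := by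
  have : Subsingleton (Fin (D.p + 1)) := hp ▸ Fin.subsingleton_one
  obtain rfl : 0 = i := Subsingleton.elim _ _
  intro hR
  obtain ⟨r, hr, hz, hy₀, hb₀⟩ := hx.exists_isRelated_of_isDeletion_u hp hβ hR
  have hb := hr.sum_b j₀
  rw [Fintype.sum_eq_zero _ (hb₀ j₀ hj₀), hy₀, hj₀, one_smul, smul_zero, zero_add] at hb
  have hy := hr.sum_y
  rw [Fintype.sum_subsingleton _ 0, Fintype.sum_subsingleton _ 0, ← hb, hy₀, zero_add] at hy
  have htz := hr.t_add_z
  rw [← hy, hz, zero_add] at htz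
  exact one_ne_zero htz

end IsRealization

/-- Two sufficient conditions for no vertex to be deletable: several `y` and `u` can be exchanged
for each other when there are no blocks `b`, and the relations of suitable blocks prevent the
deletion of a single `y` and a single `u`. -/
def IsRigid (D : RelationData) : Prop :=
  (1 ≤ D.p ∧ D.k = 0) ∨
    (D.p = 0 ∧ (∀ j, D.α j ≤ 1 ∧ D.β j ≤ 1) ∧ (∃ j, D.α j = 1) ∧ ∃ j, D.β j = 1)

theorem IsRealization.not_isDeletion {n : ℕ} {x : D.Vertex → Fin n → ℝ} (hx : D.IsRealization x)
    (hD : D.IsRigid) (k₀ : D.Vertex) (R : Set (Fin n → ℝ)) : ¬IsDeletion x k₀ R := by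
  cases k₀ with
  | t => exact hx.not_isDeletion_t
  | z => exact hx.not_isDeletion_z
  | v i => exact hx.not_isDeletion_v i
  | y i =>
    rcases hD with ⟨hp, hk⟩ | ⟨hp, hαβ, ⟨j, hj⟩, -⟩
    · exact hx.not_isDeletion_y_of_eq_zero hp hk i
    · exact hx.not_isDeletion_y hp (fun j => (hαβ j).1) hj i
  | u i =>
    rcases hD with ⟨hp, hk⟩ | ⟨hp, hαβ, -, j, hj⟩
    · exact hx.not_isDeletion_u_of_eq_zero hp hk i
    · exact hx.not_isDeletion_u hp (fun j => (hαβ j).2) hj i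
  | b j i => exact hx.not_isDeletion_b j i

namespace IsRealization

variable {n : ℕ} {x : D.Vertex → Fin n → ℝ} {w : Fin n → ℝ} {R : Set (Fin n → ℝ)}

lemma isAdjacentAt (hx : D.IsRealization x) {F G : D.Facet} {k : D.Vertex}
    (h : ∀ a, G.missing a = k ∨ G.missing a ∈ Set.range F.missing) :
    IsAdjacentAt x (hx.facetDual F) (hx.facetDual G) k := by
  simp only [IsAdjacentAt, facetDual_apply_eq_one_iff, Facet.defect_eq_zero_iff]
  rintro κ hκ hF ⟨a, rfl⟩
  exact (h a).elim hκ hF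

lemma isAdjacentAt_core (hx : D.IsRealization x) {C C' : D.Core} {k : D.Vertex}
    (σ : ∀ j, Fin (D.α j + D.β j + 1))
    (h : ∀ a, C'.missing a = k ∨ C'.missing a ∈ Set.range C.missing) :
    IsAdjacentAt x (hx.facetDual ⟨C, σ⟩) (hx.facetDual ⟨C', σ⟩) k :=
  hx.isAdjacentAt <| Sum.forall.2 ⟨fun a => (h a).imp_right fun ⟨a', ha'⟩ => ⟨.inl a', ha'⟩,
    fun j => .inr ⟨.inr j, rfl⟩⟩

lemma two_le_of_core (hx : D.IsRealization x) (hR : IsInsertion x w R) {C C' : D.Core}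
    {k : D.Vertex} {σ : ∀ j, Fin (D.α j + D.β j + 1)}
    (h : ∀ a, C'.missing a = k ∨ C'.missing a ∈ Set.range C.missing)
    (hk : (⟨C', σ⟩ : D.Facet).defect k = 1) (hC : 2 ≤ hx.facetDual ⟨C, σ⟩ w) :
    2 ≤ hx.facetDual ⟨C', σ⟩ w :=
  hx.isFacetSystem.two_le_of_isAdjacentAt hR (hx.isAdjacentAt_core σ h)
    (by rw [facetDual_apply, hk, Nat.cast_one, sub_self]) hC

lemma two_le_choice (hx : D.IsRealization x) (hR : IsInsertion x w R) {l : Fin (D.q + 1)}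
    {σ : ∀ j, Fin (D.α j + D.β j + 1)} (hσ : 2 ≤ hx.facetDual ⟨.tzv l, σ⟩ w)
    (τ : ∀ j, Fin (D.α j + D.β j + 1)) : 2 ≤ hx.facetDual ⟨.tzv l, τ⟩ w := by
  suffices ∀ s : Finset (Fin D.k), 2 ≤ hx.facetDual ⟨.tzv l, s.piecewise τ σ⟩ w by
    simpa using this Finset.univ
  intro s
  induction s using Finset.induction_on with
  | empty => simpa using hσ
  | insert j s _ ih =>
    rw [Finset.piecewise_insert]
    refine hx.isFacetSystem.two_le_of_isAdjacentAt hR (k := .b j (τ j))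
      (hx.isAdjacentAt ?_) ?_ ih
    · rintro (a | j')
      · exact .inr ⟨.inl a, rfl⟩
      · rcases eq_or_ne j' j with rfl | hj
        · exact .inl (by simp [Facet.missing])
        · exact .inr ⟨.inr j', by simp [Facet.missing, hj]⟩
    · simp [facetDual_apply, Facet.defect, Core.defectY, Core.defectU]

lemma two_le_tzv (hx : D.IsRealization x) (hR : IsInsertion x w R) {F : D.Facet}
    (hF : ∀ j i, F.core ≠ .tyu j i) (hw : 2 ≤ hx.facetDual F w) (l : Fin (D.q + 1)) :
    2 ≤ hx.facetDual ⟨.tzv l, F.choice⟩ w := by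
  have hzvu : ∀ {l' : Fin (D.q + 1)} {i : Fin (D.p + 1)},
      2 ≤ hx.facetDual ⟨.zvu l' i, F.choice⟩ w → 2 ≤ hx.facetDual ⟨.tzv l, F.choice⟩ w := by
    intro l' i h
    have h' : 2 ≤ hx.facetDual ⟨.zvu l i, F.choice⟩ w := hx.two_le_of_core hR (k := .v l)
      (by simp [Core.missing, Fin.forall_fin_succ])
      (by simp [Facet.defect, Core.defectV]) h
    exact hx.two_le_of_core hR (k := .t)
      (by simp [Core.missing, Fin.forall_fin_succ]) rfl h'
  have htzv : ∀ {l' : Fin (D.q + 1)}, 2 ≤ hx.facetDual ⟨.tzv l', F.choice⟩ w →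
      2 ≤ hx.facetDual ⟨.tzv l, F.choice⟩ w := fun {l'} h =>
    hzvu <| hx.two_le_of_core hR (C' := .zvu l' 0) (k := .u 0)
      (by simp [Core.missing, Fin.forall_fin_succ])
      (by simp [Facet.defect, Core.defectU]) h
  rcases F with ⟨l' | ⟨l', i⟩ | ⟨j, i⟩ | ⟨j, l'⟩ | ⟨j, i⟩, σ⟩
  · exact htzv hw
  · exact hzvu hw
  · exact hzvu <| hx.two_le_of_core hR (C' := .zvu l i) (k := .v l)
      (by simp [Core.missing, Fin.forall_fin_succ])
      (by simp [Facet.defect, Core.defectV]) hw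
  · exact htzv <| hx.two_le_of_core hR (C' := .tzv l') (k := .z)
      (by simp [Core.missing, Fin.forall_fin_succ]) rfl hw
  · exact absurd rfl (hF j i)

lemma two_le_of_tzv (hx : D.IsRealization x) (hR : IsInsertion x w R) {F : D.Facet}
    (hF : ∀ j i, F.core ≠ .tyu j i) (hw : ∀ l, 2 ≤ hx.facetDual ⟨.tzv l, F.choice⟩ w) :
    2 ≤ hx.facetDual F w := by
  have hzvu : ∀ l i, 2 ≤ hx.facetDual ⟨.zvu l i, F.choice⟩ w := fun l i =>
    hx.two_le_of_core hR (k := .u i)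
      (by simp [Core.missing, Fin.forall_fin_succ])
      (by simp [Facet.defect, Core.defectU]) (hw l)
  rcases F with ⟨l' | ⟨l', i⟩ | ⟨j, i⟩ | ⟨j, l'⟩ | ⟨j, i⟩, σ⟩
  · exact hw l'
  · exact hzvu l' i
  · exact hx.two_le_of_core hR (k := .y j)
      (by simp [Core.missing, Fin.forall_fin_succ])
      (by simp [Facet.defect, Core.defectY]) (hzvu 0 i)
  · exact hx.two_le_of_core hR (k := .y j)
      (by simp [Core.missing, Fin.forall_fin_succ])
      (by simp [Facet.defect, Core.defectY]) (hw l')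
  · exact absurd rfl (hF j i)

lemma two_le_of_ne_tyu (hx : D.IsRealization x) (hR : IsInsertion x w R) {F G : D.Facet}
    (hF : ∀ j i, F.core ≠ .tyu j i) (hw : 2 ≤ hx.facetDual F w) (hG : ∀ j i, G.core ≠ .tyu j i) :
    2 ≤ hx.facetDual G w :=
  hx.two_le_of_tzv hR hG fun l => hx.two_le_choice hR (hx.two_le_tzv hR hF hw l) _

open IsFacetSystem

lemma exists_isConeCoeff_tyu (hx : D.IsRealization x) (hw : IsLatticePoint w) (hw0 : w ≠ 0)
    (h : ∀ F : D.Facet, (∀ j i, F.core ≠ .tyu j i) → hx.facetDual F w ≤ 0) :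
    ∃ j i σ c, IsConeCoeff x hx.facetDual w ⟨.tyu j i, σ⟩ c := by
  obtain ⟨F, c, hc⟩ := hx.isFacetSystem.exists_isConeCoeff hw
  by_contra! hne
  refine (hc.apply_pos hw0).not_ge (h F fun j i hF => hne j i F.choice c ?_)
  rwa [← hF]

lemma isAdjacentAt_z (hx : D.IsRealization x) (j i : Fin (D.p + 1))
    (σ : ∀ j, Fin (D.α j + D.β j + 1)) :
    IsAdjacentAt x (hx.facetDual ⟨.tyu j i, σ⟩) (hx.facetDual ⟨.zyu j i, σ⟩) .z :=
  hx.isAdjacentAt_core σ (by simp [Core.missing, Fin.forall_fin_succ])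

lemma facetDual_zyu_z (hx : D.IsRealization x) (j i : Fin (D.p + 1))
    (σ : ∀ j, Fin (D.α j + D.β j + 1)) : hx.facetDual ⟨.zyu j i, σ⟩ (x .z) = -1 := by
  rw [facetDual_apply, Facet.defect, Core.defectZ]
  norm_num

lemma one_le_coeff_v (hx : D.IsRealization x) {j i : Fin (D.p + 1)}
    {σ : ∀ j, Fin (D.α j + D.β j + 1)} {c : D.Vertex → ℕ}
    (hc : IsConeCoeff x hx.facetDual w ⟨.tyu j i, σ⟩ c) (hw : w ≠ 0) (l : Fin (D.q + 1))
    (h : hx.facetDual ⟨.tyv j l, σ⟩ w ≤ 0) : 1 ≤ c (.v l) := by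
  have hadj := hx.isAdjacentAt_core (C := .tyu j i) (C' := .tyv j l) (k := .v l) σ
    (by simp [Core.missing, Fin.forall_fin_succ])
  have hpos := hc.apply_pos hw
  rw [Nat.one_le_iff_ne_zero]
  intro h0
  rw [hc.apply_eq_sub hadj, h0, Nat.cast_zero, zero_mul, sub_zero] at h
  exact hpos.not_ge h

lemma not_isInsertion_of_le_zero (hx : D.IsRealization x)
    (h : ∀ F : D.Facet, (∀ j i, F.core ≠ .tyu j i) → hx.facetDual F w ≤ 0) :
    ¬IsInsertion x w R := by
  intro hR
  have hw0 := hx.isFacetSystem.ne_zero_of_isInsertion hR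
  obtain ⟨j, i, σ, c, hc⟩ := hx.exists_isConeCoeff_tyu hR.isLatticePoint hw0 h
  have hv : ∀ l, 1 ≤ c (.v l) := fun l => hx.one_le_coeff_v hc hw0 l (h _ (by simp))
  have hz : 2 ≤ c .z := by
    have : Nontrivial (Fin (D.q + 1)) :=
      Fin.nontrivial_iff_two_le.2 (Nat.add_le_add_right D.one_le_q 1)
    obtain ⟨l, hl⟩ := exists_ne (0 : Fin (D.q + 1))
    have hle : ∑ k, (c k : ℝ) ≤ 2 * c .z := by
      have happ := hc.apply_eq_sub (hx.isAdjacentAt_z j i σ)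
      rw [facetDual_zyu_z] at happ
      linarith [hc.apply_eq_sum, h ⟨.zyu j i, σ⟩ (by simp)]
    have hge := Finset.sum_le_univ_sum_of_nonneg (s := {.z, .v 0, .v l})
      fun k => Nat.zero_le (c k)
    simp only [Finset.sum_insert, Finset.mem_insert, Finset.mem_singleton, reduceCtorEq,
      Vertex.v.injEq, hl.symm, or_self, not_false_eq_true, Finset.sum_singleton] at hge
    have hle' : ∑ k, c k ≤ 2 * c .z := by exact_mod_cast hle
    linarith [hv 0, hv l]
  have hvisible := (hx.isFacetSystem.le_zero_or_two_le hR _).resolve_left (hc.apply_pos hw0).not_ge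
  obtain ⟨N, hN⟩ := hx.isFacetSystem.exists_int_mul_sub_eq hR (hx.isAdjacentAt_z j i σ)
    (by rw [facetDual_zyu_z]; norm_num) (by linarith)
    (by linarith [h ⟨.zyu j i, σ⟩ (by simp)])
  rw [hc.apply_eq_sub (hx.isAdjacentAt_z j i σ), facetDual_zyu_z, sub_sub_cancel] at hN
  have hmul : (c .z : ℤ) * N = 1 := by
    have : (c .z : ℝ) * N = 1 := by linear_combination hN / 2
    exact_mod_cast this
  rcases Int.eq_one_or_neg_one_of_mul_eq_one hmul with h1 | h1 <;> omega

lemma not_isInsertion_of_two_le (hx : D.IsRealization x)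
    (h : ∀ F : D.Facet, (∀ j i, F.core ≠ .tyu j i) → 2 ≤ hx.facetDual F w) :
    ¬IsInsertion x w R := by
  intro hR
  obtain ⟨j, i, σ, c, hc⟩ := hx.exists_isConeCoeff_tyu hR.isLatticePoint.neg
    (neg_ne_zero.2 (hx.isFacetSystem.ne_zero_of_isInsertion hR)) fun F hF => by
      rw [map_neg]
      linarith [h F hF]
  have hct : c .t = 0 := by
    by_contra h0
    have := hc.apply_eq_one _ h0
    rw [facetDual_apply_eq_one_iff] at this
    exact absurd this two_ne_zero
  set T : Finset D.Vertex := (Finset.univ.erase .z).erase .t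
  have hT : ∀ {M : Type} [AddCommMonoid M] (f : D.Vertex → M), f .t = 0 →
      ∑ k, f k = f .z + ∑ k ∈ T, f k := fun f hf => by
    rw [Finset.sum_erase _ hf, Finset.add_sum_erase _ _ (Finset.mem_univ _)]
  have hle : 1 + ∑ k ∈ T, c k ≤ c .z := by
    have happ := hc.apply_eq_sub (hx.isAdjacentAt_z j i σ)
    rw [facetDual_zyu_z, map_neg, hc.apply_eq_sum, hT _ (by rw [hct, Nat.cast_zero])] at happ
    have : 1 + ∑ k ∈ T, (c k : ℝ) ≤ c .z := by linarith [h ⟨.zyu j i, σ⟩ (by simp)]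
    exact_mod_cast this
  have hsum := hc.sum_smul
  rw [hT _ (by rw [hct, zero_smul])] at hsum
  refine hx.isFacetSystem.nsmul_ne_add_sum hR (Finset.notMem_erase _ _) hle ?_
  rw [eq_neg_of_add_eq_zero_left hx.isRelated.t_add_z, smul_neg, neg_eq_iff_add_eq_zero]
  linear_combination hsum

theorem not_isInsertion (hx : D.IsRealization x) : ¬IsInsertion x w R := by
  intro hR
  by_cases h : ∃ F : D.Facet, (∀ j i, F.core ≠ .tyu j i) ∧ 2 ≤ hx.facetDual F w
  · obtain ⟨F, hF, hw⟩ := h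
    exact hx.not_isInsertion_of_two_le (fun G hG => hx.two_le_of_ne_tyu hR hF hw hG) hR
  · push Not at h
    exact hx.not_isInsertion_of_le_zero (fun F hF =>
      (hx.isFacetSystem.le_zero_or_two_le hR F).resolve_right (h F hF).not_ge) hR

end IsRealization

end RelationData

lemma exists_affineEquiv_of_image_isLatticePoint {n : ℕ} {φ : (Fin n → ℝ) →ᵃ[ℝ] (Fin n → ℝ)}
    (h : φ '' {x | IsLatticePoint x} = {x | IsLatticePoint x}) :
    ∃ e : (Fin n → ℝ) ≃ᵃ[ℝ] (Fin n → ℝ), e.toAffineMap = φ := by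
  have hsurj : Function.Surjective φ.linear := by
    obtain ⟨p₀, -, hp₀⟩ := h.ge IsLatticePoint.zero
    rw [← LinearMap.range_eq_top, eq_top_iff, ← (Pi.basisFun ℝ (Fin n)).span_eq,
      Submodule.span_le]
    rintro _ ⟨i, rfl⟩
    obtain ⟨p, -, hp⟩ := h.ge (IsLatticePoint.single i)
    refine ⟨p -ᵥ p₀, ?_⟩
    rw [AffineMap.linearMap_vsub, hp, hp₀, Pi.basisFun_apply, vsub_eq_sub, sub_zero]
  have hbij : Function.Bijective φ :=
    (AffineMap.linear_bijective_iff φ).1 ⟨LinearMap.injective_iff_surjective.2 hsurj, hsurj⟩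
  exact ⟨AffineEquiv.ofBijective hbij, rfl⟩

lemma unimodularEquiv_iff {n : ℕ} {Q Q' : Set (Fin n → ℝ)} :
    UnimodularEquiv Q Q' ↔ ∃ e : (Fin n → ℝ) ≃ᵃ[ℝ] (Fin n → ℝ),
      (∀ p, IsLatticePoint (e p) ↔ IsLatticePoint p) ∧ e '' Q = Q' := by
  constructor
  · rintro ⟨φ, h, rfl⟩
    obtain ⟨e, rfl⟩ := exists_affineEquiv_of_image_isLatticePoint h
    exact ⟨e, fun p => e.injective.mem_set_image.symm.trans (Set.ext_iff.1 h (e p)) |>.symm, rfl⟩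
  · rintro ⟨e, he, rfl⟩
    refine ⟨e.toAffineMap, ?_, rfl⟩
    have hpre : e ⁻¹' {p | IsLatticePoint p} = {p | IsLatticePoint p} := Set.ext he
    change e '' {p | IsLatticePoint p} = {p | IsLatticePoint p}
    nth_rewrite 1 [← hpre]
    exact Set.image_preimage_eq _ e.surjective

namespace UnimodularEquiv

variable {n : ℕ} {Q Q' Q'' : Set (Fin n → ℝ)}

lemma symm (h : UnimodularEquiv Q Q') : UnimodularEquiv Q' Q := by
  rw [unimodularEquiv_iff] at h ⊢
  obtain ⟨e, he, rfl⟩ := h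
  exact ⟨e.symm, fun p => by rw [← he, e.apply_symm_apply], e.toEquiv.symm_image_image Q⟩

lemma trans (h : UnimodularEquiv Q Q') (h' : UnimodularEquiv Q' Q'') : UnimodularEquiv Q Q'' := by
  rw [unimodularEquiv_iff] at h h' ⊢
  obtain ⟨e, he, rfl⟩ := h
  obtain ⟨e', he', rfl⟩ := h'
  exact ⟨e.trans e', fun p => (he' _).trans (he p), Set.image_comp e' e Q⟩

end UnimodularEquiv

lemma IsFacetSystem.exists_linearEquiv_of_unimodularEquiv {n : ℕ} {ι Φ : Type*} [Finite ι]
    {x : ι → Fin n → ℝ} {u : Φ → Module.Dual ℝ (Fin n → ℝ)} (h : IsFacetSystem x u)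
    {Q : Set (Fin n → ℝ)} (hQ : UnimodularEquiv (convexHull ℝ (Set.range x)) Q)
    (h0 : 0 ∈ interior Q) :
    ∃ L : (Fin n → ℝ) ≃ₗ[ℝ] (Fin n → ℝ),
      (∀ p, IsLatticePoint (L p) ↔ IsLatticePoint p) ∧ Q = convexHull ℝ (Set.range (L ∘ x)) := by
  obtain ⟨e, he, rfl⟩ := unimodularEquiv_iff.1 hQ
  obtain ⟨p, hp, hp0⟩ := (e.toContinuousAffineEquiv.toHomeomorph.image_interior _).ge h0
  change e p = 0 at hp0
  obtain rfl : p = 0 :=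
    h.eq_zero_of_mem_interior ((he p).1 (hp0.symm ▸ IsLatticePoint.zero)) hp
  have hlinear : ⇑e.linear = e := funext fun p => by
    simpa [hp0] using e.toAffineMap.linearMap_vsub p 0
  refine ⟨e.linear, by rwa [hlinear], ?_⟩
  rw [hlinear, Set.range_comp]
  exact e.toAffineMap.image_convexHull _

namespace RelationData.IsRealization

variable {D : RelationData} {n : ℕ} {x : D.Vertex → Fin n → ℝ}

lemma map (hx : D.IsRealization x) (L : (Fin n → ℝ) ≃ₗ[ℝ] (Fin n → ℝ))
    (hL : ∀ p, IsLatticePoint (L p) ↔ IsLatticePoint p) : D.IsRealization (L ∘ x) where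
  dim_eq := hx.dim_eq
  isLatticePoint k := (hL _).2 (hx.isLatticePoint k)
  isRelated := hx.isRelated.map L
  mem_span w hw := by
    have hmem := hx.mem_span (L.symm w) ((hL _).1 (by rwa [L.apply_symm_apply]))
    have := Submodule.mem_map_of_mem (f := L.toLinearMap.restrictScalars ℤ) hmem
    rw [Submodule.map_span, ← Set.range_comp] at this
    simpa using this
  exists_dual r hr := by
    obtain ⟨f, rfl⟩ := hx.exists_dual r hr
    exact ⟨f ∘ₗ L.symm.toLinearMap, funext fun k => by simp⟩

lemma not_iStep (hx : D.IsRealization x) (hD : D.IsRigid) {R : Set (Fin n → ℝ)}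
    (hR : IsSmoothFano R) : ¬IStep R (convexHull ℝ (Set.range x)) := by
  rw [IStep, hx.isFacetSystem.vertexSet_eq]
  rintro (⟨w, -, hwR, h⟩ | ⟨w, hw, hwx, h⟩)
  · obtain ⟨k₀, rfl⟩ : w ∈ Set.range x := h ▸ .inr rfl
    refine hx.not_isDeletion hD k₀ R ⟨hR, ?_⟩
    rw [Set.image_compl_eq_range_sdiff_image hx.isFacetSystem.injective, h, Set.image_singleton,
      Set.union_singleton, Set.insert_sdiff_self_of_notMem hwR]
  · exact hx.not_isInsertion ⟨hR, hw, hwx, h⟩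

lemma iIsolated (hx : D.IsRealization x) (hD : D.IsRigid) :
    IIsolated (convexHull ℝ (Set.range x)) := by
  rintro Q - ⟨k, c, hc, hQ, hP, hstep⟩
  cases k with
  | zero => exact hQ.trans hP.symm
  | succ k =>
    obtain ⟨L, hL, hcL⟩ := hx.isFacetSystem.exists_linearEquiv_of_unimodularEquiv hP (hc _).2.1
    refine absurd (hstep (Fin.last k)) ?_
    rw [Fin.succ_last, hcL]
    exact (hx.map L hL).not_iStep hD (hc _)

end RelationData.IsRealization

namespace RelationData

variable {D : RelationData}

/-- Labels of a family of vertices forming a basis, see `RelationData.basisVertex`. -/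
abbrev BasisIndex (D : RelationData) : Type :=
  (Fin D.q ⊕ Fin (D.p + 1)) ⊕ (Fin (D.p + 1) ⊕ Σ j, Fin (D.α j + D.β j))

lemma card_basisIndex (D : RelationData) : Fintype.card D.BasisIndex = D.dim := by
  simp only [Fintype.card_sum, Fintype.card_sigma, Fintype.card_fin, dim]
  ring

/-- The vertices `v i` and `b j i` with `i ≠ 0`, `y i` and `u i`, which determine all others. -/
def basisVertex : D.BasisIndex → D.Vertex
  | .inl (.inl i) => .v i.succ
  | .inl (.inr i) => .y i
  | .inr (.inl i) => .u i
  | .inr (.inr ⟨j, i⟩) => .b j i.succ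

section extend

variable {M : Type*} [AddCommGroup M]

/-- The related family with prescribed values on `basisVertex`. -/
def extend (B : D.BasisIndex → M) : D.Vertex → M
  | .t => ∑ i, B (.inl (.inr i)) - ∑ i, B (.inr (.inl i))
  | .z => ∑ i, B (.inr (.inl i)) - ∑ i, B (.inl (.inr i))
  | .v i => Fin.cases ((D.p + D.q + 1) • (∑ i, B (.inl (.inr i)) - ∑ i, B (.inr (.inl i)))
      - ∑ i, B (.inl (.inr i)) - ∑ i, B (.inl (.inl i))) (fun i => B (.inl (.inl i))) i
  | .y i => B (.inl (.inr i))
  | .u i => B (.inr (.inl i))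
  | .b j i => Fin.cases (D.α j • B (.inl (.inr 0)) + D.β j • B (.inr (.inl 0))
      - ∑ i, B (.inr (.inr ⟨j, i⟩))) (fun i => B (.inr (.inr ⟨j, i⟩))) i

lemma extend_basisVertex (B : D.BasisIndex → M) (i : D.BasisIndex) :
    extend B (basisVertex i) = B i := by
  rcases i with (i | i) | i | ⟨j, i⟩ <;> rfl

lemma isRelated_extend (B : D.BasisIndex → M) : D.IsRelated (extend B) where
  sum_v_add_sum_y := by simp [extend, Fin.sum_univ_succ]
  sum_y := by simp [extend]
  t_add_z := by simp [extend]
  sum_b j := by simp [extend, Fin.sum_univ_succ]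

lemma IsRelated.extend_comp_basisVertex {x : D.Vertex → M} (hx : D.IsRelated x) :
    extend (x ∘ basisVertex) = x := by
  have ht : x .t = ∑ i, x (.y i) - ∑ i, x (.u i) := eq_sub_of_add_eq' hx.sum_y.symm
  funext k
  rcases k with _ | _ | i | i | i | ⟨j, i⟩
  case t => exact ht.symm
  case z => rw [← neg_eq_of_add_eq_zero_right hx.t_add_z, ht, neg_sub]; rfl
  case y | u => rfl
  case v =>
    cases i using Fin.cases with
    | zero =>
      have h := hx.sum_v_add_sum_y
      rw [Fin.sum_univ_succ, ← eq_sub_iff_add_eq, ← eq_sub_iff_add_eq, ht] at h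
      exact h.symm
    | succ i => rfl
  case b =>
    cases i using Fin.cases with
    | zero =>
      have h := hx.sum_b j
      rw [Fin.sum_univ_succ, ← eq_sub_iff_add_eq] at h
      exact h.symm
    | succ i => rfl

lemma map_comp_extend {N F : Type*} [AddCommGroup N] [FunLike F M N] [AddMonoidHomClass F M N]
    (f : F) (B : D.BasisIndex → M) : f ∘ extend B = extend (f ∘ B) := by
  rw [← ((isRelated_extend B).map f).extend_comp_basisVertex]
  exact congrArg extend (funext fun i => congrArg f (extend_basisVertex B i))

end extend

lemma exists_isRealization (D : RelationData) :
    ∃ x : D.Vertex → Fin D.dim → ℝ, D.IsRealization x := by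
  let e : D.BasisIndex ≃ Fin D.dim := Fintype.equivFinOfCardEq D.card_basisIndex
  let c := (Pi.basisFun ℝ (Fin D.dim)).reindex e.symm
  have hc : ∀ i, c i = Pi.single (e i) 1 := fun i => by simp [c]
  refine ⟨extend c, rfl, fun k i => ?_, isRelated_extend c, fun w hw => ?_, fun r hr => ?_⟩
  · let φ := (Int.castAddHom ℝ).compLeft (Fin D.dim)
    have hφ : ⇑c = φ ∘ fun i => Pi.single (e i) 1 := by
      ext i j
      simp [hc, φ, Pi.single_apply]
    rw [hφ, ← map_comp_extend]
    exact ⟨_, rfl⟩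
  · choose m hm using hw
    have hrepr : ∀ i, c.repr w i = m (e i) := fun i => by simp [c, hm]
    rw [← c.sum_repr w]
    simp only [hrepr, Int.cast_smul_eq_zsmul]
    exact Submodule.sum_smul_mem _ _ fun i _ =>
      Submodule.subset_span ⟨basisVertex i, extend_basisVertex _ i⟩
  · refine ⟨c.constr ℝ (r ∘ basisVertex), ?_⟩
    rw [map_comp_extend, ← hr.extend_comp_basisVertex]
    refine congrArg extend (funext fun i => ?_)
    rw [Function.comp_apply, c.constr_basis, hr.extend_comp_basisVertex]

lemma exists_isRigid {n ρ : ℕ} (hn : 5 ≤ n) (hρ₁ : 3 ≤ ρ) (hρ₂ : ρ ≤ n) :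
    ∃ D : RelationData, D.IsRigid ∧ D.dim = n ∧ 3 + D.k = ρ := by
  obtain rfl | rfl | hρ : ρ = 3 ∨ ρ = 4 ∨ 5 ≤ ρ := by omega
  · refine ⟨⟨1, n - 4, 0, isEmptyElim, isEmptyElim, by omega, isEmptyElim⟩,
      .inl ⟨le_rfl, rfl⟩, ?_, rfl⟩
    simp only [dim, Finset.univ_eq_empty, Finset.sum_empty]
    omega
  · refine ⟨⟨0, n - 4, 1, 1, 1, by omega, fun _ => one_le_two⟩,
      .inr ⟨rfl, fun _ => ⟨le_rfl, le_rfl⟩, ⟨0, rfl⟩, 0, rfl⟩, ?_, rfl⟩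
    simp only [dim, Finset.univ_unique, Finset.sum_singleton, Pi.one_apply]
    omega
  · obtain ⟨k, rfl⟩ : ∃ k, ρ = 3 + (k + 2) := ⟨ρ - 5, by omega⟩
    let α : Fin (k + 2) → ℕ := fun j => if j = 0 then 1 else 0
    have hα : ∀ j, α j ≤ 1 := fun j => ite_le_one le_rfl zero_le_one
    have hadd : ∀ j, α j + (1 - α j) = 1 := fun j => Nat.add_sub_cancel' (hα j)
    refine ⟨⟨0, n - (k + 4), k + 2, α, fun j => 1 - α j, by omega, fun j => (hadd j).ge⟩,
      .inr ⟨rfl, fun j => ⟨hα j, Nat.sub_le _ _⟩, ⟨0, rfl⟩, 1, rfl⟩, ?_, rfl⟩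
    simp only [dim, hadd, Finset.sum_const, Finset.card_univ, Fintype.card_fin, smul_eq_mul]
    omega

end RelationData

/-- For all integers `n ≥ 5` and `3 ≤ ρ ≤ n`, there exists an
I-isolated smooth Fano `n`-polytope with `n + ρ` vertices. -/
theorem exists_I_isolated_smooth_Fano (n ρ : ℕ) (hn : 5 ≤ n) (hρ₁ : 3 ≤ ρ)
    (hρ₂ : ρ ≤ n) :
    ∃ P : Set (Fin n → ℝ), IsSmoothFano P ∧ IIsolated P ∧
      (vertexSet P).ncard = n + ρ := by
  obtain ⟨D, hD, rfl, rfl⟩ := RelationData.exists_isRigid hn hρ₁ hρ₂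
  obtain ⟨x, hx⟩ := D.exists_isRealization
  refine ⟨convexHull ℝ (Set.range x), hx.isFacetSystem.isSmoothFano, hx.iIsolated hD, ?_⟩
  rw [hx.isFacetSystem.ncard_vertexSet, Nat.card_eq_fintype_card, D.card_vertex]
end
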